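/- Let S ⊂ P^r be an irreducible, reduced, nondegenerate projective surface of degree s with s ≥ r−1 ≥ 2. Then the Castelnuovo–Mumford regularity of S satisfies reg(S) ≤ (s−r+2)·(s²/(2(r−2)) + 1) + 1. -/

import Mathlib

/-!
Write `ρ = r - 2`. On the affine chart `x₀ ≠ 0` the surface has coordinate ring `O`, a domain, and
`V ⊆ O` denotes the span of `1` and the functions `x_j / x₀`. Since the ideal is prime, the Hilbert
function in degree `k` is `dim V ^ k` (`exists_chart`, `finrank_pow_eq_hilbNat`), and everything
reduces to the growth of the powers of `V`.

Hyperplane sections are taken with generic coefficients: the section by a hyperplane whose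
coefficients are as transcendental as possible is defined over the field `kap` generated by these
coefficients, and it is cut out scheme-theoretically up to saturation (`IsSection`,
`isSection_kap`, `isSection_ext`). For a surface the field `kap` is algebraically closed in the
function field of the section (`mem_adjoin_of_isAlgebraic`, `algClosedIn_of_unbounded`), so the
section remains integral over an algebraic closure of `kap`: it is an integral nondegenerate curve
in a projective space of dimension `ρ + 1`, of the same degree `s`.

For a curve, the generic hyperplane section spans a field extension of `kap` in which no nonzero
subspace of dimension less than `s` is stable under a nonscalar element, and a linear version of the Cauchy–Davenport inequality
(`linear_cauchy_davenport`, `finrank_pow_ge`) shows that its Hilbert function is at least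
`min s (k * ρ + 1)`; this replaces Castelnuovo's general position argument (`curve_facts`). A
determinant argument with products of linear forms vanishing at the points of a section
(`finrank_pow_le`) shows that the first difference of the Hilbert function of the curve reaches its
final value `s` in some degree `q ≤ s - 1`. The saturated Hilbert function is convex, hence the defect
between it and the Hilbert function is at most the Castelnuovo number `G` in each degree, and its
total is bounded accordingly (`sum_bound`, `curve_main`).

On the surface, each degree `≥ q` in which restriction to the curve has too large a kernel consumes
part of this total defect. Hence there is `N` with
`2 N + (q - m) (q - m - 1) ≤ 2 q + 2 (q - 1) G` beyond which the surface behaves as if it were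
arithmetically Cohen–Macaulay (`surface_aux`, `surface_facts`). Here `m` is the least integer with
`s ≤ m ρ + 1`. The statement is obtained for a pencil of linear forms over a large field; by
semicontinuity of rank it holds for general linear forms `ℓ₀`, `ℓ₁` over `ℂ` (`exists_poly_rank`,
`exists_pencil`).

A dimension count then makes `ℓ₀`, `ℓ₁`, `X₀` a regular sequence in degrees greater than `N`
(`pencil_regular`), and an extension argument for graded homomorphisms (`gradedHom_eq_smul`) shows
that `h¹` of the twisted ideal sheaf of the surface and of its general sections vanishes in degrees
`≥ N` (`h1INat_vanish`). So the surface is `(N + 1)`-regular, and an elementary estimate (`numeric`)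
gives `N ≤ (s - ρ) (s² / (2 ρ) + 1)`.
-/


open scoped BigOperators

noncomputable section

/-- The homogeneous coordinate ring of `ℙ^{n-1}` over `ℂ`: polynomials in `n` variables. -/
abbrev MPoly (n : ℕ) : Type := MvPolynomial (Fin n) ℂ

/-- An ideal is homogeneous if it contains all homogeneous components of its members. -/
def IsHomogIdeal {n : ℕ} (I : Ideal (MPoly n)) : Prop :=
  ∀ f ∈ I, ∀ k : ℕ, MvPolynomial.homogeneousComponent k f ∈ I

/-- The degree-`k` graded piece of the homogeneous coordinate ring of the subscheme `V(I)`. -/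
def degQ {n : ℕ} (I : Ideal (MPoly n)) (k : ℕ) : Submodule ℂ (MPoly n ⧸ I) :=
  (MvPolynomial.homogeneousSubmodule (Fin n) ℂ k).map (Ideal.Quotient.mkₐ ℂ I).toLinearMap

/-- The graded pieces, indexed by `ℤ` (zero in negative degrees). -/
def degQZ {n : ℕ} (I : Ideal (MPoly n)) (t : ℤ) : Submodule ℂ (MPoly n ⧸ I) :=
  if 0 ≤ t then degQ I t.toNat else ⊥

/-- The Hilbert function of the closed subscheme `V(I) ⊆ ℙ^{n-1}`. -/
def hilbNat {n : ℕ} (I : Ideal (MPoly n)) (t : ℤ) : ℕ :=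
  Module.finrank ℂ (degQZ I t)

/-- The Hilbert function, as an integer-valued function. -/
def hilbZ {n : ℕ} (I : Ideal (MPoly n)) (t : ℤ) : ℤ := (hilbNat I t : ℤ)

/-- The irrelevant maximal ideal `(x_0, …, x_{n-1})`. -/
def mId (n : ℕ) : Ideal (MPoly n) := Ideal.span (Set.range MvPolynomial.X)

/-- The space of degree-`t` graded module homomorphisms `m^k → R/I`. -/
def gradedHomSub {n : ℕ} (I : Ideal (MPoly n)) (k : ℕ) (t : ℤ) :
    Submodule ℂ ((mId n ^ k : Ideal (MPoly n)) →ₗ[MPoly n] (MPoly n ⧸ I)) where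
  carrier := {φ | ∀ (j : ℕ) (f : MPoly n) (hf : f ∈ mId n ^ k),
    f ∈ MvPolynomial.homogeneousSubmodule (Fin n) ℂ j → φ ⟨f, hf⟩ ∈ degQZ I ((j : ℤ) + t)}
  add_mem' := by
    intro a b ha hb j f hf hj
    simpa using Submodule.add_mem _ (ha j f hf hj) (hb j f hf hj)
  zero_mem' := by
    intro j f hf hj
    simpa using Submodule.zero_mem _
  smul_mem' := by
    intro c φ hφ j f hf hj
    simpa using Submodule.smul_mem _ c (hφ j f hf hj)

/-- `h⁰(X, 𝒪_X(t))` for `X = V(I)`: the stable value of the dimensions of the graded Hom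
modules `Hom(m^k, R/I)_t` (the Deligne formula for twisted global sections). -/
def h0Nat {n : ℕ} (I : Ideal (MPoly n)) (t : ℤ) : ℕ :=
  ⨆ k : ℕ, Module.finrank ℂ (gradedHomSub I k t)

/-- `h¹(ℙ^{n-1}, 𝓘_X(t)) = h⁰(X, 𝒪_X(t)) − h_X(t)` (valid for the saturated ideal of `X`). -/
def h1INat {n : ℕ} (I : Ideal (MPoly n)) (t : ℤ) : ℕ := h0Nat I t - hilbNat I t

/-- The dimension over `ℂ` of the Hartshorne–Rao module `M(X) = ⊕_t H¹(ℙ, 𝓘_X(t))`. -/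
def raoDim {n : ℕ} (I : Ideal (MPoly n)) : ℕ := ∑ᶠ t : ℤ, h1INat I t

/-- Arithmetically Cohen–Macaulay (for an integral curve): the Hartshorne–Rao module vanishes. -/
def IsACM {n : ℕ} (I : Ideal (MPoly n)) : Prop := ∀ t : ℤ, h0Nat I t = hilbNat I t

/-- Saturation of an ideal with respect to the irrelevant maximal ideal. -/
def satIdeal {n : ℕ} (I : Ideal (MPoly n)) : Ideal (MPoly n) where
  carrier := {f | ∃ k : ℕ, ∀ j : Fin n, MvPolynomial.X j ^ k * f ∈ I}
  zero_mem' := ⟨0, fun j => by simpa using I.zero_mem⟩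
  add_mem' := by
    rintro f g ⟨k, hk⟩ ⟨l, hl⟩
    refine ⟨k + l, fun j => ?_⟩
    have h1 : MvPolynomial.X (R := ℂ) j ^ (k + l) * (f + g)
        = MvPolynomial.X j ^ l * (MvPolynomial.X j ^ k * f)
          + MvPolynomial.X j ^ k * (MvPolynomial.X j ^ l * g) := by ring
    rw [h1]
    exact I.add_mem (I.mul_mem_left _ (hk j)) (I.mul_mem_left _ (hl j))
  smul_mem' := by
    rintro c f ⟨k, hk⟩
    refine ⟨k, fun j => ?_⟩
    have h1 : MvPolynomial.X (R := ℂ) j ^ k * (c • f) = c * (MvPolynomial.X j ^ k * f) := by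
      rw [smul_eq_mul]; ring
    rw [h1]
    exact I.mul_mem_left _ (hk j)

/-- The hyperplane section of `V(I)` by the hyperplane `{ℓ = 0}`, as a closed subscheme
(its saturated homogeneous ideal). -/
def sect {n : ℕ} (I : Ideal (MPoly n)) (ℓ : MPoly n) : Ideal (MPoly n) :=
  satIdeal (I ⊔ Ideal.span {ℓ})

/-- A property `P` holds for a *general* `k`-tuple of linear forms (hyperplanes): it holds on a
nonempty Zariski-open subset of the space of coefficients. -/
def GenericForms (n k : ℕ) (P : (Fin k → MPoly n) → Prop) : Prop :=
  ∃ Q : MvPolynomial (Fin k × Fin n) ℂ, Q ≠ 0 ∧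
    ∀ c : Fin k → Fin n → ℂ, MvPolynomial.eval (fun p => c p.1 p.2) Q ≠ 0 →
      P fun t => ∑ j : Fin n, MvPolynomial.C (c t j) * MvPolynomial.X j

/-- `V(I) ⊆ ℙ^{n-1}` is nondegenerate: contained in no hyperplane. -/
def Nondeg {n : ℕ} (I : Ideal (MPoly n)) : Prop :=
  ∀ f ∈ MvPolynomial.homogeneousSubmodule (Fin n) ℂ 1, f ∈ I → f = 0

/-- `V(I)` is an integral curve: `I` homogeneous prime, with cone of Krull dimension 2. -/
def IsCurve {n : ℕ} (I : Ideal (MPoly n)) : Prop :=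
  IsHomogIdeal I ∧ I.IsPrime ∧ ringKrullDim (MPoly n ⧸ I) = 2

/-- `V(I)` is an integral surface: `I` homogeneous prime, with cone of Krull dimension 3. -/
def IsSurface {n : ℕ} (I : Ideal (MPoly n)) : Prop :=
  IsHomogIdeal I ∧ I.IsPrime ∧ ringKrullDim (MPoly n ⧸ I) = 3

/-- The curve `V(I)` has degree `d` and arithmetic genus `g`: its Hilbert polynomial is
`d·t + 1 − g`. -/
def CurveInv {n : ℕ} (I : Ideal (MPoly n)) (d g : ℤ) : Prop :=
  ∃ N : ℤ, ∀ t : ℤ, N ≤ t → hilbZ I t = d * t + 1 - g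

/-- The surface `V(I)` has degree `s`, sectional genus `π` and arithmetic genus `pa`:
its Hilbert polynomial is `s·choose(t+1, 2) + (1 − π)·t + 1 + pa`. -/
def SurfInv {n : ℕ} (I : Ideal (MPoly n)) (s π pa : ℤ) : Prop :=
  ∃ N : ℤ, ∀ t : ℤ, N ≤ t → hilbZ I t = s * (t * (t + 1) / 2) + (1 - π) * t + 1 + pa

/-- `V(IC)` is not contained in any integral surface of degree `< s`. -/
def NotInSurfDegLT {n : ℕ} (IC : Ideal (MPoly n)) (s : ℤ) : Prop :=
  ∀ (T : Ideal (MPoly n)) (s' π' pa' : ℤ), IsSurface T → SurfInv T s' π' pa' → s' < s →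
    ¬ T ≤ IC

/-- `V(IC)` is not contained in any integral surface of degree `s` with sectional genus `> π`. -/
def NotInSurfSecGT {n : ℕ} (IC : Ideal (MPoly n)) (s π : ℤ) : Prop :=
  ∀ (T : Ideal (MPoly n)) (π' pa' : ℤ), IsSurface T → SurfInv T s π' pa' → π < π' →
    ¬ T ≤ IC

/-- `V(IC)` is not contained in any integral surface of degree `s` with arithmetic genus `< p`. -/
def NotInSurfGenLT {n : ℕ} (IC : Ideal (MPoly n)) (s p : ℤ) : Prop :=
  ∀ (T : Ideal (MPoly n)) (π' pa' : ℤ), IsSurface T → SurfInv T s π' pa' → pa' < p →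
    ¬ T ≤ IC

/-- `binom2 z = z.choose 2` for integers. -/
def binom2 (z : ℤ) : ℤ := z * (z - 1) / 2

/-- The bound `G*(r,d,s,π,p)` of Di Gennaro–Franco, with `m = (d-1)/s`, `ε = (d-1) % s`. -/
def Gstar (r d s π p : ℤ) : ℤ :=
  binom2 ((d - 1) / s) * s + ((d - 1) / s) * ((d - 1) % s + π) - p
    + max 0 ((2 * π - (s - 1 - (d - 1) % s)) / 2)

/-- The numerical function `h_{r,d,s,π}`. -/
def hF (r d s π : ℤ) (i : ℤ) : ℤ :=
  if 1 ≤ i ∧ i ≤ (d - 1) / s then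
    1 - π + i * s - max 0 ((s - r + 1) - π - i + 1)
  else if i = (d - 1) / s + 1 then
    d - max 0 ((2 * π - (s - 1 - (d - 1) % s)) / 2)
  else if (d - 1) / s + 2 ≤ i then d
  else 0

/-- The threshold `d₀(r)`. -/
def d0 (r : ℤ) : ℤ :=
  if r ≤ 6 then 16 * (r - 2) * (2 * r - 3)
  else if r ≤ 11 then 8 * (r - 2) ^ 3
  else 2 ^ (r.toNat + 1)

end
noncomputable section

/-- The affine cone of `V(I)`: common zeroes of the elements of `I`. -/
def zeroCone {n : ℕ} (I : Ideal (MPoly n)) : Set (Fin n → ℂ) :=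
  {a | ∀ f ∈ I, MvPolynomial.eval a f = 0}

/-- Jacobian-criterion smoothness: at every nonzero point of the affine cone (of dimension `c`)
the gradients of the equations span a subspace of dimension `n - c`. -/
def IsSmooth {n : ℕ} (I : Ideal (MPoly n)) (c : ℕ) : Prop :=
  ∀ a ∈ zeroCone I, a ≠ 0 →
    Module.finrank ℂ (Submodule.span ℂ
      {g : Fin n → ℂ | ∃ f ∈ I, g = fun j => MvPolynomial.eval a (MvPolynomial.pderiv j f)})
      = n - c

/-- Castelnuovo's bound for the genus of a nondegenerate integral curve of degree `d`
in `ℙ^R`. -/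
def castelG (R d : ℤ) : ℤ :=
  binom2 ((d - 1) / (R - 1)) * (R - 1) + ((d - 1) / (R - 1)) * ((d - 1) % (R - 1))

/-- The ideal of the projective cone (from `ℙ^{n-1}` to `ℙ^n`) over `V(I)`. -/
def coneIdeal {n : ℕ} (I : Ideal (MPoly n)) : Ideal (MPoly (n + 1)) :=
  Ideal.map (MvPolynomial.rename (Fin.castSucc : Fin n → Fin (n + 1))) I

/-- `J` is the (saturated homogeneous) ideal of a line in `ℙ^{n-1}`: it is generated by
`n - 2` linearly independent linear forms. -/
def IsLineIdeal {n : ℕ} (J : Ideal (MPoly n)) : Prop :=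
  ∃ V : Submodule ℂ (MPoly n), V ≤ MvPolynomial.homogeneousSubmodule (Fin n) ℂ 1 ∧
    Module.finrank ℂ V = n - 2 ∧ J = Ideal.span (V : Set (MPoly n))

/-- `V(T) ⊆ ℙ^{n-1}` is a smooth rational normal scroll surface: a smooth nondegenerate
integral surface of minimal degree `n - 2` (with sectional and arithmetic genus `0`)
containing a line (which rules out the Veronese surface). -/
def IsSmoothRNScroll {n : ℕ} (T : Ideal (MPoly n)) : Prop :=
  IsSurface T ∧ Nondeg T ∧ IsSmooth T 3 ∧ SurfInv T ((n : ℤ) - 2) 0 0 ∧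
    ∃ J : Ideal (MPoly n), IsLineIdeal J ∧ T ≤ J

/-- The linear projection on points determined by the matrix `L`. -/
def projPt {nb ns : ℕ} (L : Fin ns → Fin nb → ℂ) (a : Fin nb → ℂ) : Fin ns → ℂ :=
  fun t => ∑ j, L t j * a j

/-- The substitution algebra homomorphism determined by the matrix `L` (pullback of the
linear projection `ℙ^{nb-1} ⇢ ℙ^{ns-1}`). -/
def substHom {nb ns : ℕ} (L : Fin ns → Fin nb → ℂ) : MPoly ns →ₐ[ℂ] MPoly nb :=
  MvPolynomial.aeval fun t => ∑ j, MvPolynomial.C (L t j) * MvPolynomial.X j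

/-- The linear projection given by `L` maps `V(I')` isomorphically onto `V(I)`: the center of
projection misses `V(I')`, `V(I)` is the image, and the projection is (projectively) bijective
from `V(I')` onto `V(I)`. -/
def IsIsoProjection {nb ns : ℕ} (L : Fin ns → Fin nb → ℂ)
    (I' : Ideal (MPoly nb)) (I : Ideal (MPoly ns)) : Prop :=
  I = I'.comap (substHom L) ∧
  (∀ a ∈ zeroCone I', a ≠ 0 → projPt L a ≠ 0) ∧
  (∀ a ∈ zeroCone I', ∀ b ∈ zeroCone I', a ≠ 0 → b ≠ 0 →
    (∃ c : ℂ, c ≠ 0 ∧ projPt L a = c • projPt L b) → ∃ c : ℂ, c ≠ 0 ∧ a = c • b) ∧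
  (∀ y ∈ zeroCone I, y ≠ 0 → ∃ a ∈ zeroCone I', a ≠ 0 ∧ ∃ c : ℂ, c ≠ 0 ∧ y = c • projPt L a)

/-- `t` bounds the Castelnuovo–Mumford regularity of the surface `V(I) ⊆ ℙ^{n-1}`:
for every `t' ≥ t`, `H^i(ℙ, 𝓘(t'-i)) = 0` for all `i ≥ 1`, expressed through the standard
inductive characterization by successive general hyperplane sections. -/
def IsRegBound {n : ℕ} (I : Ideal (MPoly n)) (t : ℤ) : Prop :=
  GenericForms n 2 fun L => ∀ t' : ℤ, t ≤ t' →
    h1INat I (t' - 1) = 0 ∧ h1INat (sect I (L 0)) (t' - 1) = 0 ∧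
      h1INat (sect (sect I (L 0)) (L 1)) (t' - 1) = 0

end

/-! ### Points, base change and tensor products of domains -/

section Part1

namespace SurfReg

open TensorProduct

section Points

variable {K A : Type*} [Field K] [IsAlgClosed K] [CommRing A] [IsDomain A] [Algebra K A]

/-- Weak Nullstellensatz: a nonzero element of a finitely generated domain over an algebraically
closed field is nonzero at some rational point. -/
theorem exists_point [Algebra.FiniteType K A] {a : A} (ha : a ≠ 0) :
    ∃ χ : A →ₐ[K] K, χ a ≠ 0 := by
  let B := Localization.Away a
  have : IsDomain B := IsLocalization.isDomain_localization
    (powers_le_nonZeroDivisors_of_noZeroDivisors ha)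
  have : Algebra.FiniteType A B := IsLocalization.finiteType_of_monoid_fg (Submonoid.powers a) B
  have : Algebra.FiniteType K B := Algebra.FiniteType.trans (S := A) inferInstance inferInstance
  obtain ⟨m, hm⟩ := Ideal.exists_maximal B
  let : Field (B ⧸ m) := Ideal.Quotient.field m
  have : Algebra.FiniteType K (B ⧸ m) :=
    Algebra.FiniteType.of_surjective (Ideal.Quotient.mkₐ K m) (Ideal.Quotient.mkₐ_surjective K m)
  have : Module.Finite K (B ⧸ m) := finite_of_finite_type_of_isJacobsonRing K (B ⧸ m)
  have hbij := IsAlgClosed.algebraMap_bijective_of_isIntegral (k := K) (K := B ⧸ m)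
  let e : K ≃ₐ[K] (B ⧸ m) := AlgEquiv.ofBijective (Algebra.ofId K (B ⧸ m)) hbij
  let φ : A →ₐ[K] K := (e.symm : (B ⧸ m) →ₐ[K] K).comp
    ((Ideal.Quotient.mkₐ K m).comp (IsScalarTower.toAlgHom K A B))
  refine ⟨φ, fun h => ?_⟩
  have hu : IsUnit (algebraMap A B a) := IsLocalization.Away.algebraMap_isUnit a
  have h2 : IsUnit (φ a) := by
    have := (hu.map (Ideal.Quotient.mkₐ K m)).map e.symm
    exact this
  rw [h] at h2
  exact not_isUnit_zero h2

end Points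

section Coord

variable {k F O : Type*} [Field k] [Field F] [Algebra k F] [CommRing O] [Algebra k O]

/-- The coefficient of an element of `F ⊗ O` with respect to a linear functional on `F`. -/
noncomputable def coordL (l : F →ₗ[k] k) : F ⊗[k] O →ₗ[k] O :=
  (TensorProduct.lid k O).toLinearMap ∘ₗ l.rTensor O

@[simp] theorem coordL_tmul (l : F →ₗ[k] k) (a : F) (b : O) :
    coordL l (a ⊗ₜ[k] b) = l a • b := by simp [coordL]

theorem coordL_mul (l : F →ₗ[k] k) (x : F ⊗[k] O) (v : O) :
    coordL l (x * (1 : F) ⊗ₜ[k] v) = coordL l x * v := by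
  induction x with
  | zero => simp
  | tmul a b => simp
  | add x y hx hy => rw [add_mul, map_add, hx, hy, map_add, add_mul]

theorem eq_sum_coordL {ι : Type*} (b : Module.Basis ι k F) (x : F ⊗[k] O) :
    ∃ s : Finset ι, x = ∑ i ∈ s, b i ⊗ₜ[k] coordL (b.coord i) x := by
  classical
  refine ⟨(TensorProduct.equivFinsuppOfBasisLeft b x).support, ?_⟩
  conv_lhs => rw [← (TensorProduct.equivFinsuppOfBasisLeft b).symm_apply_apply x,
    TensorProduct.equivFinsuppOfBasisLeft_symm_apply]
  rw [Finsupp.sum]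
  refine Finset.sum_congr rfl fun i _ => ?_
  rw [TensorProduct.equivFinsuppOfBasisLeft_apply]
  rfl

theorem exists_coordL_ne {ι : Type*} (b : Module.Basis ι k F) {x : F ⊗[k] O} (hx : x ≠ 0) :
    ∃ i, coordL (b.coord i) x ≠ 0 := by
  by_contra! h
  obtain ⟨s, hs⟩ := eq_sum_coordL b x
  exact hx (by rw [hs]; exact Finset.sum_eq_zero fun i _ => by rw [h]; simp)

theorem mem_baseChange_iff (V : Submodule k O) (x : F ⊗[k] O) :
    x ∈ V.baseChange F ↔ ∀ l : F →ₗ[k] k, coordL l x ∈ V := by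
  constructor
  · intro hx l
    obtain ⟨y, rfl⟩ := Submodule.toBaseChange_surjective' F V hx
    clear hx
    induction y with
    | zero => simp
    | tmul a b => simpa using V.smul_mem _ b.2
    | add x y hx hy =>
      rw [map_add, Submodule.coe_add, map_add]
      exact V.add_mem hx hy
  · intro h
    obtain ⟨s, hs⟩ := eq_sum_coordL (Module.Basis.ofVectorSpace k F) x
    rw [hs]
    exact Submodule.sum_mem _ fun i _ => Submodule.tmul_mem_baseChange_of_mem _ (h _)

theorem coordL_mem_of_basis {ι : Type*} (b : Module.Basis ι k F) (V : Submodule k O)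
    (x : F ⊗[k] O) (h : ∀ i, coordL (b.coord i) x ∈ V) : x ∈ V.baseChange F := by
  obtain ⟨s, hs⟩ := eq_sum_coordL b x
  rw [hs]
  exact Submodule.sum_mem _ fun i _ => Submodule.tmul_mem_baseChange_of_mem _ (h _)

theorem baseChange_mul (V W : Submodule k O) :
    (V * W).baseChange F = V.baseChange F * W.baseChange F := by
  rw [Submodule.mul_eq_span_mul_set, Submodule.baseChange_span, Submodule.baseChange_eq_span,
    Submodule.baseChange_eq_span, Submodule.span_mul_span]
  congr 1
  ext x
  simp only [Set.mem_image, Set.mem_mul, Submodule.map_coe, SetLike.mem_coe,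
    TensorProduct.mk_apply]
  constructor
  · rintro ⟨_, ⟨a, ha, b, hb, rfl⟩, rfl⟩
    exact ⟨_, ⟨a, ha, rfl⟩, _, ⟨b, hb, rfl⟩, by simp⟩
  · rintro ⟨_, ⟨a, ha, rfl⟩, _, ⟨b, hb, rfl⟩, rfl⟩
    exact ⟨_, ⟨a, ha, b, hb, rfl⟩, by simp⟩

theorem baseChange_one' : (1 : Submodule k O).baseChange F = 1 := by
  rw [Submodule.one_eq_span, Submodule.baseChange_span, Submodule.one_eq_span]
  simp [Algebra.TensorProduct.one_def]

theorem baseChange_pow (V : Submodule k O) (n : ℕ) :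
    (V ^ n).baseChange F = (V.baseChange F) ^ n := by
  induction n with
  | zero => simpa using baseChange_one'
  | succ n ih => rw [pow_succ, pow_succ, baseChange_mul, ih]

theorem baseChange_sup (V W : Submodule k O) :
    (V ⊔ W).baseChange F = V.baseChange F ⊔ W.baseChange F := by
  rw [Submodule.baseChange_eq_span, Submodule.baseChange_eq_span, Submodule.baseChange_eq_span,
    Submodule.map_sup, ← Submodule.span_union]
  apply le_antisymm
  · rw [Submodule.span_le]
    intro x hx
    obtain ⟨a, ha, b, hb, rfl⟩ := Submodule.mem_sup.1 (SetLike.mem_coe.1 hx)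
    exact Submodule.add_mem _ (Submodule.subset_span (Or.inl ha))
      (Submodule.subset_span (Or.inr hb))
  · rw [Submodule.span_le]
    rintro x (hx | hx)
    · exact Submodule.subset_span (SetLike.mem_coe.2 (Submodule.mem_sup_left hx))
    · exact Submodule.subset_span (SetLike.mem_coe.2 (Submodule.mem_sup_right hx))

theorem finrank_baseChange (V : Submodule k O) :
    Module.finrank F (V.baseChange F) = Module.finrank k V := by
  have hinj : Function.Injective (V.subtype.baseChange F) := by
    have := Module.Flat.lTensor_preserves_injective_linearMap (M := F) V.subtype
      V.injective_subtype
    exact this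
  have h := LinearMap.finrank_range_of_inj hinj
  rw [Module.finrank_baseChange] at h
  exact h

instance finite_baseChange (V : Submodule k O) [Module.Finite k V] :
    Module.Finite F (V.baseChange F) :=
  Module.Finite.of_surjective (V.toBaseChange F) (V.toBaseChange_surjective F)

theorem baseChange_le_iff {V W : Submodule k O} :
    V.baseChange F ≤ W.baseChange F ↔ V ≤ W := by
  refine ⟨fun h v hv => ?_, fun h => Submodule.baseChange_mono F h⟩
  obtain ⟨l, hl⟩ : ∃ l : F →ₗ[k] k, l 1 = 1 := by
    obtain ⟨f, h1⟩ := Module.Projective.exists_dual_ne_zero k (one_ne_zero : (1 : F) ≠ 0)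
    exact ⟨(f 1)⁻¹ • f, by simp [h1]⟩
  have := (mem_baseChange_iff W _).1 (h (Submodule.tmul_mem_baseChange_of_mem (1 : F) hv)) l
  simpa [hl] using this

end Coord

section Domain

variable {k B O : Type*} [Field k] [IsAlgClosed k] [CommRing O] [IsDomain O] [Algebra k O]
  [Algebra.FiniteType k O] [CommRing B] [IsDomain B] [Algebra k B]

/-- Over an algebraically closed field the tensor product of a domain and a finitely generated
domain is a domain: evaluate the coefficients at a point where two of them are nonzero. -/
theorem isDomain_tensor : IsDomain (B ⊗[k] O) := by
  classical
  let b := Module.Basis.ofVectorSpace k B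
  have : Nontrivial (B ⊗[k] O) := by
    have : Function.Injective (algebraMap k O) := (algebraMap k O).injective
    exact Function.Injective.nontrivial
      (Algebra.TensorProduct.includeLeft_injective (S := k) (A := B) this)
  refine @IsDomain.mk _ _ (@NoZeroDivisors.to_isCancelMulZero _ _ ⟨?_⟩) inferInstance
  intro f g hfg
  by_contra! hne
  obtain ⟨hf, hg⟩ := hne
  have key : ∀ x : B ⊗[k] O, x ≠ 0 → ∃ o : O, o ≠ 0 ∧ ∀ χ : O →ₐ[k] k, χ o ≠ 0 →
      Algebra.TensorProduct.rid k k B (Algebra.TensorProduct.map (AlgHom.id k B) χ x) ≠ 0 := by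
    intro x hx
    have : TensorProduct.equivFinsuppOfBasisLeft b x ≠ 0 := by simpa using hx
    obtain ⟨i, hi⟩ := Finsupp.ne_iff.1 this
    refine ⟨_, hi, fun χ hχ h0 => hχ ?_⟩
    have hgen : ∀ x : B ⊗[k] O, χ (TensorProduct.equivFinsuppOfBasisLeft b x i) =
        b.repr (Algebra.TensorProduct.rid k k B
          (Algebra.TensorProduct.map (AlgHom.id k B) χ x)) i := by
      intro x
      induction x with
      | zero => simp
      | tmul a o => simp [TensorProduct.equivFinsuppOfBasisLeft_apply_tmul_apply, mul_comm]
      | add x y hx hy => simp only [map_add, Finsupp.add_apply, hx, hy]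
    rw [hgen, h0]; simp
  obtain ⟨o1, ho1, h1⟩ := key f hf
  obtain ⟨o2, ho2, h2⟩ := key g hg
  obtain ⟨χ, hχ⟩ := exists_point (K := k) (mul_ne_zero ho1 ho2)
  rw [map_mul] at hχ
  have := mul_ne_zero (h1 χ (left_ne_zero_of_mul hχ)) (h2 χ (right_ne_zero_of_mul hχ))
  rw [← map_mul, ← map_mul, hfg] at this
  simp at this

end Domain

end SurfReg

end Part1

/-! ### Moving elements by field endomorphisms -/

section Part2a

namespace SurfReg

section Fix

variable {κ Λ Ω : Type*} [Field κ] [Field Λ] [Field Ω] [Algebra κ Λ] [Algebra κ Ω]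

/-- A transcendence basis can be sent to any algebraically independent family: extend the map on the
purely transcendental subfield along an algebraic extension. -/
theorem exists_algHom_of_transcendenceBasis [IsAlgClosed Ω] {ι : Type*} {b : ι → Λ}
    (hb : IsTranscendenceBasis κ b) {c : ι → Ω} (hc : AlgebraicIndependent κ c) :
    ∃ σ : Λ →ₐ[κ] Ω, ∀ i, σ (b i) = c i := by
  algebraize_only [(MvPolynomial.aeval b : MvPolynomial ι κ →ₐ[κ] Λ).toRingHom,
    (MvPolynomial.aeval c : MvPolynomial ι κ →ₐ[κ] Ω).toRingHom]
  have h1 : Module.IsTorsionFree (MvPolynomial ι κ) Λ :=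
    Module.isTorsionFree_iff_algebraMap_injective.2 hb.1
  have h2 : Module.IsTorsionFree (MvPolynomial ι κ) Ω :=
    Module.isTorsionFree_iff_algebraMap_injective.2 hc
  have h3 : Algebra.IsAlgebraic (MvPolynomial ι κ) Λ := by
    have := hb.isAlgebraic
    have hsurj : Algebra.adjoin κ (Set.range b) =
        (MvPolynomial.aeval b : MvPolynomial ι κ →ₐ[κ] Λ).range :=
      Algebra.adjoin_range_eq_range_aeval κ b
    refine ⟨fun x => ?_⟩
    obtain ⟨p, hp0, hp⟩ := this.isAlgebraic x
    have hinj := hb.1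
    let e : MvPolynomial ι κ ≃ₐ[κ] Algebra.adjoin κ (Set.range b) := hb.1.aevalEquiv
    refine ⟨p.map (e.symm : _ →+* _), ?_, ?_⟩
    · rwa [Ne, Polynomial.map_eq_zero_iff e.symm.injective]
    · rw [Polynomial.aeval_def, Polynomial.eval₂_map]
      rw [Polynomial.aeval_def] at hp
      convert hp using 2
      ext z
      have h4 : ∀ q : MvPolynomial ι κ, ((e q : Algebra.adjoin κ (Set.range b)) : Λ)
          = MvPolynomial.aeval b q := fun q => hb.1.algebraMap_aevalEquiv q
      change MvPolynomial.aeval b (e.symm z) = (z : Λ)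
      rw [← h4, e.apply_symm_apply]
  let σ : Λ →ₐ[MvPolynomial ι κ] Ω := IsAlgClosed.lift
  have hσ : ∀ q : MvPolynomial ι κ, σ (MvPolynomial.aeval b q) = MvPolynomial.aeval c q :=
    fun q => σ.commutes q
  refine ⟨{ (σ : Λ →+* Ω) with commutes' := fun r => ?_ }, fun i => ?_⟩
  · have := hσ (MvPolynomial.C r)
    simpa using this
  · have := hσ (MvPolynomial.X i)
    simpa using this

/-- A purely transcendental extension contains no new algebraic elements. -/
theorem mem_range_of_isAlgebraic_of_mem_adjoin {ι : Type*} {b : ι → Ω}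
    (hb : AlgebraicIndependent κ b) {x : Ω} (hx : IsAlgebraic κ x)
    (hxb : x ∈ IntermediateField.adjoin κ (Set.range b)) : x ∈ (algebraMap κ Ω).range := by
  obtain ⟨p, q, hpq⟩ := (IntermediateField.mem_adjoin_range_iff κ b x).1 hxb
  by_cases hq : q = 0
  · subst hq
    refine ⟨0, ?_⟩
    rw [hpq]; simp
  have : Algebra.IsAlgebraic κ (IntermediateField.adjoin κ {x}) :=
    IntermediateField.isAlgebraic_adjoin_simple hx.isIntegral
  have hb' : AlgebraicIndependent (IntermediateField.adjoin κ {x}) b := hb.extendScalars _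
  have hq0 : MvPolynomial.aeval b q ≠ 0 := fun h => hq (hb (by simpa using h))
  let g := IntermediateField.AdjoinSimple.gen κ x
  let i := algebraMap κ (IntermediateField.adjoin κ {x})
  have hz : MvPolynomial.C g * q.map i - p.map i = 0 := by
    apply hb'
    rw [map_sub, map_mul, map_zero]
    have h1 : ∀ r : MvPolynomial ι κ, MvPolynomial.aeval b (r.map i) = MvPolynomial.aeval b r :=
      fun r => MvPolynomial.aeval_map_algebraMap _ b r
    have hx' : x * MvPolynomial.aeval b q = MvPolynomial.aeval b p := by
      rw [eq_div_iff hq0] at hpq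
      exact hpq
    rw [h1, h1, MvPolynomial.aeval_C, sub_eq_zero]
    exact hx'
  obtain ⟨β, hβ⟩ := MvPolynomial.ne_zero_iff.1 hq
  have h2 := congrArg (MvPolynomial.coeff β) hz
  rw [MvPolynomial.coeff_sub, MvPolynomial.coeff_C_mul, MvPolynomial.coeff_map,
    MvPolynomial.coeff_map, MvPolynomial.coeff_zero, sub_eq_zero] at h2
  have h3 : x * algebraMap κ Ω (q.coeff β) = algebraMap κ Ω (p.coeff β) :=
    congrArg (algebraMap (IntermediateField.adjoin κ {x}) Ω) h2
  have h4 : algebraMap κ Ω (q.coeff β) ≠ 0 := by simpa using hβ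
  exact ⟨p.coeff β / q.coeff β, by rw [map_div₀, ← h3]; field_simp⟩

/-- An element outside a subfield of an algebraically closed field of characteristic zero is moved
by some endomorphism over the subfield. -/
theorem exists_moving [IsAlgClosed Ω] [CharZero κ] {x : Ω} (hx : x ∉ (algebraMap κ Ω).range) :
    ∃ σ : Ω →ₐ[κ] Ω, σ x ≠ x := by
  by_cases halg : IsAlgebraic κ x
  · obtain ⟨s, hs⟩ := exists_isTranscendenceBasis κ Ω
    let L := IntermediateField.adjoin κ (Set.range ((↑) : s → Ω))
    have : Algebra.IsAlgebraic L Ω := hs.isAlgebraic_field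
    have : CharZero L := charZero_of_injective_algebraMap (algebraMap κ L).injective
    have : IsAlgClosure L Ω := ⟨inferInstance, inferInstance⟩
    have : Normal L Ω := IsAlgClosure.normal L Ω
    have : IsGalois L Ω := ⟨⟩
    by_contra! hfix
    have hmem : x ∈ (⊥ : IntermediateField L Ω) := by
      rw [InfiniteGalois.mem_bot_iff_fixed]
      intro f
      exact hfix ((f : Ω →ₐ[L] Ω).restrictScalars κ)
    obtain ⟨z, hz⟩ := IntermediateField.mem_bot.1 hmem
    refine hx (mem_range_of_isAlgebraic_of_mem_adjoin hs.1 halg ?_)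
    rw [← hz]; exact z.2
  · have hind : AlgebraicIndepOn κ id ({x} : Set Ω) := by
      have := algebraicIndependent_singleton_iff (R := κ) (x := fun i : ({x} : Set Ω) => (i : Ω))
        ⟨x, rfl⟩
      exact this.2 halg
    obtain ⟨s, hxs, hs⟩ := exists_isTranscendenceBasis_superset hind
    classical
    let f : s → Polynomial κ := fun i => if (i : Ω) = x then Polynomial.X + 1 else Polynomial.X
    have hc : AlgebraicIndependent κ fun i : s => Polynomial.aeval (i : Ω) (f i) := by
      refine hs.1.polynomial_aeval_of_transcendental fun i => ?_
      dsimp only [f]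
      split_ifs
      · refine Polynomial.transcendental _ ?_ ?_
        · rw [show (1 : Polynomial κ) = Polynomial.C 1 from rfl, Polynomial.natDegree_X_add_C]
          exact one_ne_zero
        · exact mem_nonZeroDivisors_of_ne_zero
            (Polynomial.leadingCoeff_ne_zero.2 (Polynomial.X_add_C_ne_zero 1))
      · exact Polynomial.transcendental_X κ
    obtain ⟨σ, hσ⟩ := exists_algHom_of_transcendenceBasis hs hc
    refine ⟨σ, ?_⟩
    have := hσ ⟨x, hxs rfl⟩
    simp only [f, if_true] at this
    rw [this]
    simp

end Fix

end SurfReg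

end Part2a

/-! ### Algebraic elements over the field of a generic hyperplane -/

section Part2b

open scoped TensorProduct

namespace SurfReg

universe u

section DI

/-- If `(x₁ : y₁)` and `(x₂ : y₂)` are roots of the same binary form, then they agree or the divided
difference of the form at the two roots vanishes. -/
theorem geom_dichotomy {Y : Type*} [CommRing Y] (d : ℕ) (p : ℕ → Y) {x₁ y₁ x₂ y₂ : Y}
    (h₁ : ∑ e ∈ Finset.range (d + 1), p e * x₁ ^ e * y₁ ^ (d - e) = 0)
    (h₂ : ∑ e ∈ Finset.range (d + 1), p e * x₂ ^ e * y₂ ^ (d - e) = 0) :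
    (x₁ * y₂ - x₂ * y₁) * ∑ e ∈ Finset.range (d + 1), p e * (y₁ * y₂) ^ (d - e) *
      ∑ l ∈ Finset.range e, (x₁ * y₂) ^ l * (x₂ * y₁) ^ (e - 1 - l) = 0 := by
  have : ∀ e ∈ Finset.range (d + 1), (x₁ * y₂ - x₂ * y₁) * (p e * (y₁ * y₂) ^ (d - e) *
      ∑ l ∈ Finset.range e, (x₁ * y₂) ^ l * (x₂ * y₁) ^ (e - 1 - l)) =
      y₂ ^ d * (p e * x₁ ^ e * y₁ ^ (d - e)) - y₁ ^ d * (p e * x₂ ^ e * y₂ ^ (d - e)) := by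
    intro e he
    have hd : d = e + (d - e) := by
      have := Finset.mem_range.1 he; omega
    have := geom_sum₂_mul (x₁ * y₂) (x₂ * y₁) e
    calc _ = p e * (y₁ * y₂) ^ (d - e) * ((∑ l ∈ Finset.range e,
        (x₁ * y₂) ^ l * (x₂ * y₁) ^ (e - 1 - l)) * (x₁ * y₂ - x₂ * y₁)) := by ring
      _ = _ := by
        rw [this]
        generalize d - e = f at *
        subst hd
        ring
  rw [Finset.mul_sum, Finset.sum_congr rfl this, Finset.sum_sub_distrib, ← Finset.mul_sum,
    ← Finset.mul_sum, h₁, h₂]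
  simp

variable {k Ω : Type*} {O : Type u} [Field k] [IsAlgClosed k] [CommRing O] [IsDomain O] [Algebra k O]
  [Algebra.FiniteType k O] [Field Ω] [Algebra k Ω] {n : ℕ}

/-- The generic linear combination `∑ X_j v_j`. -/
noncomputable def genY (v : Fin n → O) : MvPolynomial (Fin n) O :=
  ∑ j, MvPolynomial.X j * MvPolynomial.C (v j)

/-- Pairs of homomorphisms agreeing on the coefficients `X_j` and on `genY v` and separating `v i`
are all specialisations of one pair with values in a domain. -/
theorem exists_universal_pair (v : Fin n → O) (i : Fin n)
    (hne : v i ⊗ₜ[k] (1 : O) - (1 : O) ⊗ₜ[k] v i ≠ 0) :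
    ∃ (Y : Type u) (_ : CommRing Y) (_ : IsDomain Y) (_ : Algebra k Y)
      (ψ₁ ψ₂ : MvPolynomial (Fin n) O →ₐ[k] Y),
      (∀ j, ψ₁ (MvPolynomial.X j) = ψ₂ (MvPolynomial.X j)) ∧ ψ₁ (genY v) = ψ₂ (genY v) ∧
      ∀ φ₁ φ₂ : MvPolynomial (Fin n) O →ₐ[k] Ω,
        (∀ j, φ₁ (MvPolynomial.X j) = φ₂ (MvPolynomial.X j)) → φ₁ (genY v) = φ₂ (genY v) →
        φ₁ (MvPolynomial.C (v i)) ≠ φ₂ (MvPolynomial.C (v i)) →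
        ∃ χ : Y →ₐ[k] Ω, χ.comp ψ₁ = φ₁ ∧ χ.comp ψ₂ = φ₂ := by
  classical
  let D := O ⊗[k] O
  have hD : IsDomain D := isDomain_tensor
  let c : Fin n → D := fun j => v j ⊗ₜ[k] (1 : O) - (1 : O) ⊗ₜ[k] v j
  let L := Localization.Away (c i)
  have hL : IsDomain L := IsLocalization.isDomain_localization
    (powers_le_nonZeroDivisors_of_noZeroDivisors hne)
  let Y := MvPolynomial (Fin n) L
  let toY : D →ₐ[k] Y := (Algebra.algHom k L Y).comp (Algebra.algHom k D L)
  let u : L := IsLocalization.Away.invSelf (c i)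
  have hu : algebraMap D L (c i) * u = 1 := IsLocalization.Away.mul_invSelf (c i)
  let z : Fin n → Y := fun j => if j = i then
    - MvPolynomial.C u * ∑ l ∈ Finset.univ.erase i, MvPolynomial.X l * toY (c l)
    else MvPolynomial.X j
  let iL : O →ₐ[k] D := Algebra.TensorProduct.includeLeft
  let iR : O →ₐ[k] D := Algebra.TensorProduct.includeRight
  let ψ₁ : MvPolynomial (Fin n) O →ₐ[k] Y := MvPolynomial.aevalTower (toY.comp iL) z
  let ψ₂ : MvPolynomial (Fin n) O →ₐ[k] Y := MvPolynomial.aevalTower (toY.comp iR) z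
  have hψ₁X : ∀ j, ψ₁ (MvPolynomial.X j) = z j := fun j => MvPolynomial.aevalTower_X _ _ _
  have hψ₂X : ∀ j, ψ₂ (MvPolynomial.X j) = z j := fun j => MvPolynomial.aevalTower_X _ _ _
  have hψ₁C : ∀ a, ψ₁ (MvPolynomial.C a) = toY (a ⊗ₜ 1) := fun j =>
    MvPolynomial.aevalTower_C _ _ _
  have hψ₂C : ∀ a, ψ₂ (MvPolynomial.C a) = toY (1 ⊗ₜ a) := fun j =>
    MvPolynomial.aevalTower_C _ _ _
  have hsum : ∑ l ∈ Finset.univ.erase i, z l * toY (c l) =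
      ∑ l ∈ Finset.univ.erase i, MvPolynomial.X l * toY (c l) := by
    refine Finset.sum_congr rfl fun l hl => ?_
    simp [z, Finset.ne_of_mem_erase hl]
  have htoY : toY (c i) * MvPolynomial.C u = 1 := by
    have : toY (c i) = MvPolynomial.C (algebraMap D L (c i)) := rfl
    rw [this, ← map_mul, hu, map_one]
  refine ⟨Y, inferInstance, inferInstance, inferInstance, ψ₁, ψ₂, ?_, ?_, ?_⟩
  · intro j
    rw [hψ₁X, hψ₂X]
  · rw [← sub_eq_zero]
    simp only [genY, map_sum, map_mul, hψ₁X, hψ₂X, hψ₁C, hψ₂C]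
    rw [← Finset.sum_sub_distrib]
    have : ∀ j, z j * toY (v j ⊗ₜ 1) - z j * toY (1 ⊗ₜ v j) = z j * toY (c j) := by
      intro j
      rw [← mul_sub, ← map_sub]
    rw [Finset.sum_congr rfl fun j _ => this j, ← Finset.add_sum_erase _ _ (Finset.mem_univ i),
      hsum]
    have hzi : z i = - MvPolynomial.C u * ∑ l ∈ Finset.univ.erase i, MvPolynomial.X l * toY (c l) :=
      if_pos rfl
    rw [hzi]
    linear_combination (-∑ l ∈ Finset.univ.erase i, MvPolynomial.X l * toY (c l)) * htoY
  · intro φ₁ φ₂ hX hy hvi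
    let Cₐ : O →ₐ[k] MvPolynomial (Fin n) O := Algebra.algHom k O _
    let χ₀ : D →ₐ[k] Ω := Algebra.TensorProduct.lift (φ₁.comp Cₐ) (φ₂.comp Cₐ)
      (fun _ _ => Commute.all _ _)
    have hχ₀1 : ∀ a, χ₀ (a ⊗ₜ 1) = φ₁ (MvPolynomial.C a) := by
      intro a
      have := Algebra.TensorProduct.lift_tmul (φ₁.comp Cₐ) (φ₂.comp Cₐ)
        (fun _ _ => Commute.all _ _) a 1
      rw [map_one, mul_one] at this
      exact this
    have hχ₀2 : ∀ a, χ₀ (1 ⊗ₜ a) = φ₂ (MvPolynomial.C a) := by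
      intro a
      have := Algebra.TensorProduct.lift_tmul (φ₁.comp Cₐ) (φ₂.comp Cₐ)
        (fun _ _ => Commute.all _ _) 1 a
      rw [map_one, one_mul] at this
      exact this
    have hχ₀c : ∀ j, χ₀ (c j) = φ₁ (MvPolynomial.C (v j)) - φ₂ (MvPolynomial.C (v j)) := by
      intro j
      simp only [c, map_sub, hχ₀1, hχ₀2]
    have hci : χ₀ (c i) ≠ 0 := by
      rw [hχ₀c, sub_ne_zero]; exact hvi
    let χ₁ : L →ₐ[k] Ω := IsLocalization.liftAlgHom (M := Submonoid.powers (c i)) (f := χ₀) (by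
      rintro ⟨y, m, rfl⟩
      simpa using isUnit_iff_ne_zero.2 (pow_ne_zero m hci))
    have hχ₁ : ∀ a, χ₁ (algebraMap D L a) = χ₀ a := by
      intro a
      exact IsLocalization.lift_eq _ a
    let χ : Y →ₐ[k] Ω := MvPolynomial.aevalTower χ₁ (fun j => φ₁ (MvPolynomial.X j))
    have hχX : ∀ j, χ (MvPolynomial.X j) = φ₁ (MvPolynomial.X j) := fun j =>
      MvPolynomial.aevalTower_X _ _ _
    have hχt : ∀ a, χ (toY a) = χ₀ a := fun a => by
      have : χ (MvPolynomial.C (algebraMap D L a)) = χ₁ (algebraMap D L a) :=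
        MvPolynomial.aevalTower_C _ _ _
      rw [← hχ₁, ← this]
      rfl
    have hχu : χ₀ (c i) * χ (MvPolynomial.C u) = 1 := by
      rw [← hχt, ← map_mul, htoY, map_one]
    have hχz : ∀ j, χ (z j) = φ₁ (MvPolynomial.X j) := by
      intro j
      by_cases hj : j = i
      · subst hj
        have hzi : z j = - MvPolynomial.C u *
            ∑ l ∈ Finset.univ.erase j, MvPolynomial.X l * toY (c l) := if_pos rfl
        rw [hzi]
        simp only [map_mul, map_neg, map_sum, hχX, hχt]
        have h0 : ∑ l, φ₁ (MvPolynomial.X l) * χ₀ (c l) = 0 := by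
          have := sub_eq_zero.2 hy
          simp only [genY, map_sum, map_mul, ← hX] at this
          rw [← Finset.sum_sub_distrib] at this
          rw [← this]
          refine Finset.sum_congr rfl fun l _ => ?_
          rw [hχ₀c]; ring
        rw [← Finset.add_sum_erase _ _ (Finset.mem_univ j)] at h0
        linear_combination (-χ (MvPolynomial.C u)) * h0 + φ₁ (MvPolynomial.X j) * hχu
      · have : z j = MvPolynomial.X j := if_neg hj
        rw [this, hχX]
    refine ⟨χ, ?_, ?_⟩
    · apply MvPolynomial.algHom_ext'
      · ext a
        change χ (ψ₁ (MvPolynomial.C a)) = φ₁ (MvPolynomial.C a)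
        rw [hψ₁C, hχt, hχ₀1]
      · intro j
        change χ (ψ₁ _) = _
        rw [hψ₁X, hχz]
    · apply MvPolynomial.algHom_ext'
      · ext a
        change χ (ψ₂ (MvPolynomial.C a)) = φ₂ (MvPolynomial.C a)
        rw [hψ₂C, hχt, hχ₀2]
      · intro j
        change χ (ψ₂ _) = _
        rw [hψ₂X, hχz, hX]

/-- The field generated by the coefficients and the value of a generic linear combination. -/
noncomputable def kap (ι : MvPolynomial (Fin n) O →ₐ[k] Ω) (v : Fin n → O) :
    IntermediateField k Ω :=
  IntermediateField.adjoin k (ι '' (Set.range MvPolynomial.X ∪ {genY v}))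

theorem kap_X (ι : MvPolynomial (Fin n) O →ₐ[k] Ω) (v : Fin n → O) (j : Fin n) :
    ι (MvPolynomial.X j) ∈ kap ι v :=
  IntermediateField.subset_adjoin _ _ ⟨_, Or.inl ⟨j, rfl⟩, rfl⟩

theorem kap_Y (ι : MvPolynomial (Fin n) O →ₐ[k] Ω) (v : Fin n → O) :
    ι (genY v) ∈ kap ι v :=
  IntermediateField.subset_adjoin _ _ ⟨_, Or.inr rfl, rfl⟩

/-- Finitely many elements of `kap ι v` have a common denominator. -/
theorem kap_common_denom (ι : MvPolynomial (Fin n) O →ₐ[k] Ω) (v : Fin n → O) {J : Type*}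
    (s : Finset J) (q : J → kap ι v) :
    ∃ d ∈ Algebra.adjoin k (Set.range MvPolynomial.X ∪ {genY v}), ι d ≠ 0 ∧
      ∀ e ∈ s, ∃ p ∈ Algebra.adjoin k (Set.range MvPolynomial.X ∪ {genY v}),
        ι p = ι d * (q e : Ω) := by
  classical
  induction s using Finset.induction_on with
  | empty => exact ⟨1, one_mem _, by simp, by simp⟩
  | insert e s _ ih =>
    obtain ⟨d, hd, hd0, h⟩ := ih
    obtain ⟨x, hx, z, hz, hq⟩ := IntermediateField.mem_adjoin_iff_div.1 (q e).2
    rw [← AlgHom.map_adjoin] at hx hz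
    obtain ⟨x, hx, rfl⟩ := hx
    obtain ⟨z, hz, rfl⟩ := hz
    by_cases hz0 : ι z = 0
    · refine ⟨d, hd, hd0, fun e' he' => ?_⟩
      rcases Finset.mem_insert.1 he' with rfl | he'
      · refine ⟨0, zero_mem _, ?_⟩
        rw [hq]
        simp [hz0]
      · exact h e' he'
    · refine ⟨d * z, mul_mem hd hz, by rw [map_mul]; exact mul_ne_zero hd0 hz0, fun e' he' => ?_⟩
      rcases Finset.mem_insert.1 he' with rfl | he'
      · refine ⟨d * x, mul_mem hd hx, ?_⟩
        rw [hq]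
        change ι (d * x) = ι (d * z) * (ι x / ι z)
        simp only [map_mul]
        field_simp
      · obtain ⟨p, hp, hpe⟩ := h e' he'
        refine ⟨p * z, mul_mem hp hz, ?_⟩
        rw [map_mul, hpe, map_mul]; ring

/-- An element of the function field of the generic hyperplane section which is algebraic over
`kap ι v`, but not in it, generates a field containing all the coordinates `v i`. -/
theorem mem_adjoin_of_isAlgebraic [IsAlgClosed Ω] [CharZero k]
    (ι : MvPolynomial (Fin n) O →ₐ[k] Ω) (hι : Function.Injective ι) (v : Fin n → O)
    (a b : MvPolynomial (Fin n) O) (hb : ι b ≠ 0)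
    (halg : IsAlgebraic (kap ι v) (ι a / ι b)) (hα : ι a / ι b ∉ kap ι v) (i : Fin n) :
    ι (MvPolynomial.C (v i)) ∈ IntermediateField.adjoin (kap ι v) {ι a / ι b} := by
  set α := ι a / ι b with hαdef
  by_contra hvi
  have hc1 : CharZero (kap ι v) := charZero_of_injective_algebraMap (algebraMap k _).injective
  have hc2 : CharZero (IntermediateField.adjoin (kap ι v) {α}) :=
    charZero_of_injective_algebraMap (algebraMap (kap ι v) _).injective
  obtain ⟨σ', hσ'⟩ := exists_moving (κ := IntermediateField.adjoin (kap ι v) {α})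
    (x := ι (MvPolynomial.C (v i))) (by rintro ⟨z, hz⟩; exact hvi (hz ▸ z.2))
  let σ : Ω →ₐ[kap ι v] Ω := σ'.restrictScalars (kap ι v)
  have hσα : σ α = α := σ'.commutes ⟨α, IntermediateField.mem_adjoin_simple_self _ _⟩
  have hσv : σ (ι (MvPolynomial.C (v i))) ≠ ι (MvPolynomial.C (v i)) := hσ'
  obtain ⟨τ, hτ⟩ := exists_moving (κ := kap ι v)
    (x := α) (by rintro ⟨z, hz⟩; exact hα (hz ▸ z.2))
  have hfix : ∀ (τ : Ω →ₐ[kap ι v] Ω) {x : Ω}, x ∈ kap ι v → τ x = x :=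
    fun τ x hx => τ.commutes ⟨x, hx⟩
  let ex : (Ω →ₐ[kap ι v] Ω) → (MvPolynomial (Fin n) O →ₐ[k] Ω) :=
    fun τ => (τ.restrictScalars k).comp ι
  have hex : ∀ τ z, ex τ z = τ (ι z) := fun _ _ => rfl
  have hexX : ∀ τ j, ex τ (MvPolynomial.X j) = ι (MvPolynomial.X j) :=
    fun τ j => hfix τ (kap_X ι v j)
  have hexY : ∀ τ, ex τ (genY v) = ι (genY v) := fun τ => hfix τ (kap_Y ι v)
  have hne : v i ⊗ₜ[k] (1 : O) - (1 : O) ⊗ₜ[k] v i ≠ 0 := by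
    intro h
    let Cₐ : O →ₐ[k] MvPolynomial (Fin n) O := Algebra.algHom k O _
    have := congrArg (Algebra.TensorProduct.lift (ι.comp Cₐ) ((ex σ).comp Cₐ)
      (fun _ _ => Commute.all _ _)) h
    rw [map_sub, Algebra.TensorProduct.lift_tmul, Algebra.TensorProduct.lift_tmul, map_one, map_one,
      map_zero, mul_one, one_mul] at this
    exact hσv (sub_eq_zero.1 this).symm
  obtain ⟨Y, _, _, _, ψ₁, ψ₂, hψX, hψY, hψ⟩ := exists_universal_pair (Ω := Ω) v i hne
  -- an equation for `α` with coefficients defined over the polynomial ring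
  let q := minpoly (kap ι v) α
  let d := q.natDegree
  obtain ⟨D, hD, hD0, hp⟩ := kap_common_denom ι v (Finset.range (d + 1)) q.coeff
  choose! p hpmem hp using hp
  have hroot : ∑ e ∈ Finset.range (d + 1), (q.coeff e : Ω) * α ^ e = 0 := by
    have := minpoly.aeval (kap ι v) α
    rw [Polynomial.aeval_eq_sum_range] at this
    simpa [Algebra.smul_def] using this
  have hder : ∑ e ∈ Finset.range (d + 1), (q.coeff e : Ω) * (e * α ^ (e - 1)) ≠ 0 := by
    have hsep : q.Separable := (minpoly.irreducible halg.isIntegral).separable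
    have := hsep.aeval_derivative_ne_zero (minpoly.aeval (kap ι v) α)
    rw [Polynomial.as_sum_range_C_mul_X_pow q, Polynomial.derivative_sum, map_sum] at this
    convert this using 2 with e he
    simp only [Polynomial.derivative_C_mul_X_pow, map_mul, Polynomial.aeval_C, map_pow,
      Polynomial.aeval_X, map_natCast]
    rw [mul_assoc]
    rfl
  have hagree : ∀ e ∈ Finset.range (d + 1), ψ₁ (p e) = ψ₂ (p e) := by
    intro e he
    have : Algebra.adjoin k (Set.range MvPolynomial.X ∪ {genY v}) ≤ AlgHom.equalizer ψ₁ ψ₂ := by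
      rw [Algebra.adjoin_le_iff]
      rintro _ (⟨j, rfl⟩ | rfl)
      · exact hψX j
      · exact hψY
    exact this (hpmem e he)
  have ha : ι a = α * ι b := by rw [hαdef]; field_simp
  have heq : ∑ e ∈ Finset.range (d + 1), p e * a ^ e * b ^ (d - e) = 0 := by
    apply hι
    rw [map_zero, map_sum]
    calc _ = ∑ e ∈ Finset.range (d + 1), ι D * ι b ^ d * ((q.coeff e : Ω) * α ^ e) := by
          refine Finset.sum_congr rfl fun e he => ?_
          have hd : d = e + (d - e) := by
            have := Finset.mem_range.1 he; omega
          rw [map_mul, map_mul, map_pow, map_pow, hp e he, ha]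
          conv_rhs => rw [hd, pow_add]
          ring
      _ = 0 := by rw [← Finset.mul_sum, hroot, mul_zero]
  have h1 : ∑ e ∈ Finset.range (d + 1), ψ₁ (p e) * ψ₁ a ^ e * ψ₁ b ^ (d - e) = 0 := by
    simpa using congrArg ψ₁ heq
  have h2 : ∑ e ∈ Finset.range (d + 1), ψ₁ (p e) * ψ₂ a ^ e * ψ₂ b ^ (d - e) = 0 := by
    rw [Finset.sum_congr rfl fun e he => by rw [hagree e he]]
    simpa using congrArg ψ₂ heq
  have h3 := geom_dichotomy d (fun e => ψ₁ (p e)) h1 h2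
  have hpair : ∀ τ₁ τ₂ : Ω →ₐ[kap ι v] Ω,
      τ₁ (ι (MvPolynomial.C (v i))) ≠ τ₂ (ι (MvPolynomial.C (v i))) →
      ∃ χ : Y →ₐ[k] Ω, (∀ z, χ (ψ₁ z) = τ₁ (ι z)) ∧ ∀ z, χ (ψ₂ z) = τ₂ (ι z) := by
    intro τ₁ τ₂ h
    obtain ⟨χ, hχ1, hχ2⟩ := hψ (ex τ₁) (ex τ₂) (fun j => by rw [hexX, hexX])
      (by rw [hexY, hexY]) h
    exact ⟨χ, fun z => DFunLike.congr_fun hχ1 z, fun z => DFunLike.congr_fun hχ2 z⟩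
  have hb' : ∀ τ : Ω →ₐ[kap ι v] Ω, τ (ι b) ≠ 0 := fun τ => (map_ne_zero τ).2 hb
  rcases mul_eq_zero.1 h3 with hU | hH
  · have key : ∀ τ₁ τ₂ : Ω →ₐ[kap ι v] Ω,
        τ₁ (ι (MvPolynomial.C (v i))) ≠ τ₂ (ι (MvPolynomial.C (v i))) → τ₁ α = τ₂ α := by
      intro τ₁ τ₂ h
      obtain ⟨χ, hχ1, hχ2⟩ := hpair τ₁ τ₂ h
      have := congrArg χ hU
      rw [map_sub, map_mul, map_mul, hχ1, hχ1, hχ2, hχ2, map_zero, ha, map_mul, map_mul] at this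
      have h5 : (τ₁ α - τ₂ α) * (τ₁ (ι b) * τ₂ (ι b)) = 0 := by linear_combination this
      rcases mul_eq_zero.1 h5 with h6 | h6
      · exact sub_eq_zero.1 h6
      · exact absurd h6 (mul_ne_zero (hb' _) (hb' _))
    by_cases hτv : τ (ι (MvPolynomial.C (v i))) = ι (MvPolynomial.C (v i))
    · exact hτ ((key τ σ (by rw [hτv]; exact hσv.symm)).trans hσα)
    · exact hτ (key τ (AlgHom.id _ _) hτv)
  · obtain ⟨χ, hχ1, hχ2⟩ := hpair (AlgHom.id _ _) σ hσv.symm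
    have := congrArg χ hH
    rw [map_zero, map_sum] at this
    set β := ι b * σ (ι b) with hβ
    have hβ0 : β ≠ 0 := mul_ne_zero hb (hb' σ)
    have h4 : ∑ e ∈ Finset.range (d + 1),
        ι D * β ^ (d - 1) * ((q.coeff e : Ω) * (e * α ^ (e - 1))) = 0 := by
      rw [← this]
      refine Finset.sum_congr rfl fun e he => ?_
      simp only [map_mul, map_pow, map_sum, hχ1, hχ2, AlgHom.id_apply, hp e he]
      have e1 : ι a * σ (ι b) = α * β := by rw [ha, hβ]; ring
      have e2 : σ (ι a) * ι b = α * β := by rw [ha, map_mul, hσα, hβ]; ring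
      rw [e1, e2, ← hβ]
      have : ∀ l ∈ Finset.range e, (α * β) ^ l * (α * β) ^ (e - 1 - l) = (α * β) ^ (e - 1) := by
        intro l hl
        rw [← pow_add]
        congr 1
        have := Finset.mem_range.1 hl
        omega
      rw [Finset.sum_congr rfl this, Finset.sum_const, Finset.card_range, nsmul_eq_mul]
      rcases Nat.eq_zero_or_pos e with rfl | hpos
      · simp
      · have hd : d - 1 = (d - e) + (e - 1) := by
          have := Finset.mem_range.1 he; omega
        rw [hd, pow_add, mul_pow]
        ring
    rw [← Finset.mul_sum] at h4
    exact mul_ne_zero (mul_ne_zero hD0 (pow_ne_zero _ hβ0)) hder h4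

end DI

end SurfReg

end Part2b

/-! ### Powers of a space of functions, saturation and sections -/

section Part3a

namespace SurfReg

section Frame

variable {F A : Type*} [Field F] [CommRing A] [Algebra F A]

/-- The submodule `y · V`. -/
def mulS (y : A) (V : Submodule F A) : Submodule F A := V.map (LinearMap.mulLeft F y)

theorem mem_mulS {y x : A} {V : Submodule F A} : x ∈ mulS y V ↔ ∃ v ∈ V, y * v = x := by
  simp [mulS]

theorem mul_mem_mulS {y x : A} {V : Submodule F A} (h : x ∈ V) : y * x ∈ mulS y V :=
  mem_mulS.2 ⟨x, h, rfl⟩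

theorem mulS_mono {y : A} {V W : Submodule F A} (h : V ≤ W) : mulS y V ≤ mulS y W :=
  Submodule.map_mono h

theorem mulS_mul (y : A) (V W : Submodule F A) : mulS y V * W = mulS y (V * W) := by
  apply le_antisymm
  · rw [Submodule.mul_le]
    intro a ha b hb
    obtain ⟨v, hv, rfl⟩ := mem_mulS.1 ha
    rw [mul_assoc]
    exact mul_mem_mulS (Submodule.mul_mem_mul hv hb)
  · intro x hx
    obtain ⟨v, hv, rfl⟩ := mem_mulS.1 hx
    refine Submodule.mul_induction_on hv (fun a ha b hb => ?_) (fun a b ha hb => ?_)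
    · rw [← mul_assoc]
      exact Submodule.mul_mem_mul (mul_mem_mulS ha) hb
    · rw [mul_add]; exact add_mem ha hb

instance finite_mulS (y : A) (V : Submodule F A) [Module.Finite F V] :
    Module.Finite F (mulS y V) := Module.Finite.map _ _

theorem finrank_mulS [IsDomain A] {y : A} (hy : y ≠ 0) (V : Submodule F A) :
    Module.finrank F (mulS y V) = Module.finrank F V :=
  (Submodule.equivMapOfInjective (LinearMap.mulLeft F y) (fun a b hab => mul_left_cancel₀ hy hab)
    V).finrank_eq.symm

instance finite_pow (V : Submodule F A) [Module.Finite F V] (n : ℕ) :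
    Module.Finite F (V ^ n : Submodule F A) := by
  rw [Module.Finite.iff_fg]
  exact Submodule.FG.pow (Module.Finite.iff_fg.1 inferInstance) n

theorem le_mul_right' {V W : Submodule F A} (h1 : (1 : A) ∈ W) : V ≤ V * W := fun x hx => by
  simpa using Submodule.mul_mem_mul hx h1

theorem pow_mono' {V : Submodule F A} (h1 : (1 : A) ∈ V) : Monotone fun n : ℕ => V ^ n :=
  monotone_nat_of_le_succ fun n => by
    rw [pow_succ]; exact le_mul_right' h1

theorem one_mem_pow' {V : Submodule F A} (h1 : (1 : A) ∈ V) (n : ℕ) : (1 : A) ∈ V ^ n :=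
  pow_mono' h1 (Nat.zero_le n) (by
    change (1 : A) ∈ V ^ 0
    rw [pow_zero]; exact Submodule.one_le.1 le_rfl)

theorem pow_add_mem {V : Submodule F A} {a b : A} {m n : ℕ} (ha : a ∈ V ^ m) (hb : b ∈ V ^ n) :
    a * b ∈ V ^ (m + n) := by
  rw [pow_add]; exact Submodule.mul_mem_mul ha hb

/-- The elements which multiply `V ^ N` into `V ^ (N + k)` for some (equivalently, all large) `N`:
the degree `k` part of the saturation. -/
def Sat (V : Submodule F A) (k : ℕ) : Submodule F A where
  carrier := {e | ∃ N : ℕ, ∀ n, N ≤ n → ∀ g ∈ V ^ n, e * g ∈ V ^ (n + k)}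
  zero_mem' := ⟨0, fun n _ g _ => by simp⟩
  add_mem' := by
    rintro a b ⟨N, hN⟩ ⟨M, hM⟩
    refine ⟨max N M, fun n hn g hg => ?_⟩
    rw [add_mul]
    exact add_mem (hN n (le_trans (le_max_left _ _) hn) g hg)
      (hM n (le_trans (le_max_right _ _) hn) g hg)
  smul_mem' := by
    rintro c a ⟨N, hN⟩
    refine ⟨N, fun n hn g hg => ?_⟩
    rw [smul_mul_assoc]
    exact Submodule.smul_mem _ _ (hN n hn g hg)

theorem mul_pow_mem_of_le {V W : Submodule F A} {e : A} {a : ℕ} (N : ℕ)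
    (h : ∀ g ∈ V ^ N, e * g ∈ W) : ∀ g ∈ V ^ (N + a), e * g ∈ W * V ^ a := by
  intro g hg
  rw [pow_add] at hg
  refine Submodule.mul_induction_on hg (fun x hx z hz => ?_) (fun x z hx hz => ?_)
  · rw [← mul_assoc]
    exact Submodule.mul_mem_mul (h x hx) hz
  · rw [mul_add]; exact add_mem hx hz

theorem mem_Sat {V : Submodule F A} {k : ℕ} {e : A} :
    e ∈ Sat V k ↔ ∃ N : ℕ, ∀ g ∈ V ^ N, e * g ∈ V ^ (N + k) := by
  constructor
  · rintro ⟨N, hN⟩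
    exact ⟨N, hN N le_rfl⟩
  · rintro ⟨N, hN⟩
    refine ⟨N, fun n hn g hg => ?_⟩
    obtain ⟨a, rfl⟩ := Nat.exists_eq_add_of_le hn
    have := mul_pow_mem_of_le N hN g hg
    rwa [← pow_add, show N + k + a = N + a + k by ring] at this

theorem pow_le_Sat (V : Submodule F A) (k : ℕ) : V ^ k ≤ Sat V k := fun e he =>
  mem_Sat.2 ⟨0, fun g hg => by rw [add_comm]; exact pow_add_mem he hg⟩

theorem Sat_mono {V : Submodule F A} (h1 : (1 : A) ∈ V) : Monotone (Sat V) := by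
  intro a b hab e he
  obtain ⟨N, hN⟩ := mem_Sat.1 he
  exact mem_Sat.2 ⟨N, fun g hg => pow_mono' h1 (by omega) (hN g hg)⟩

/-- Over an algebraically closed field the degree zero part of the saturation is trivial. -/
theorem Sat_zero [IsDomain A] [IsAlgClosed F] {V : Submodule F A} [Module.Finite F V]
    (h1 : (1 : A) ∈ V) : Sat V 0 = 1 := by
  apply le_antisymm
  · intro e he
    obtain ⟨N, hN⟩ := mem_Sat.1 he
    have hint : IsIntegral F e := by
      refine isIntegral_of_smul_mem_submodule (V ^ N) ?_ (Module.Finite.iff_fg.1 inferInstance) e hN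
      exact fun h => one_ne_zero ((Submodule.mem_bot F).1 (h ▸ one_mem_pow' h1 N))
    have := minpoly.mem_range_of_degree_eq_one F e
      (IsAlgClosed.degree_eq_one_of_irreducible F (minpoly.irreducible hint))
    exact Submodule.mem_one.2 this
  · rw [← pow_zero V]; exact pow_le_Sat V 0

/-- If `W'` consists of the elements of `W` which `y` multiplies back into `W`, then `W ∩ y W = y W'`,
and the dimension of `W + y W` follows. -/
theorem finrank_sup_mulS [IsDomain A] {y : A} (hy : y ≠ 0) {W W' : Submodule F A}
    [Module.Finite F W] (h : ∀ e ∈ W, y * e ∈ W ↔ e ∈ W') (hW : W' ≤ W) :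
    Module.finrank F (W ⊔ mulS y W : Submodule F A) + Module.finrank F W'
      = 2 * Module.finrank F W := by
  have hinf : W ⊓ mulS y W = mulS y W' := by
    ext x
    simp only [Submodule.mem_inf, mem_mulS]
    constructor
    · rintro ⟨hx, v, hv, rfl⟩
      exact ⟨v, (h v hv).1 hx, rfl⟩
    · rintro ⟨v, hv, rfl⟩
      exact ⟨(h v (hW hv)).2 hv, v, hW hv, rfl⟩
  have := Submodule.finrank_sup_add_finrank_inf_eq W (mulS y W)
  rw [hinf, finrank_mulS hy, finrank_mulS hy] at this
  omega

theorem map_homogeneousSubmodule {J : Type*} (w : J → A) {V : Submodule F A}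
    (hV : Submodule.span F (Set.range w) = V) (k : ℕ) :
    (MvPolynomial.homogeneousSubmodule J F k).map (MvPolynomial.aeval w).toLinearMap = V ^ k := by
  rw [← MvPolynomial.homogeneousSubmodule_one_pow, Submodule.map_pow,
    MvPolynomial.homogeneousSubmodule_one_eq_span_X, Submodule.map_span, ← Set.range_comp, ← hV]
  congr 3
  ext i
  simp

theorem homogeneousComponent_mul_right {J : Type*} {a : MvPolynomial J F} {d : ℕ}
    (ha : a.IsHomogeneous d) (m : ℕ) (c : MvPolynomial J F) :
    MvPolynomial.homogeneousComponent (m + d) (c * a) =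
      MvPolynomial.homogeneousComponent m c * a := by
  classical
  conv_lhs => rw [← MvPolynomial.sum_homogeneousComponent c, Finset.sum_mul, map_sum]
  have : ∀ i ∈ Finset.range (c.totalDegree + 1),
      MvPolynomial.homogeneousComponent (m + d) (MvPolynomial.homogeneousComponent i c * a) =
      if m = i then MvPolynomial.homogeneousComponent i c * a else 0 := by
    intro i _
    rw [MvPolynomial.homogeneousComponent_of_mem
      ((MvPolynomial.homogeneousComponent_isHomogeneous i c).mul ha)]
    simp
  rw [Finset.sum_congr rfl this, Finset.sum_ite_eq]
  split_ifs with h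
  · rfl
  · rw [MvPolynomial.homogeneousComponent_eq_zero, zero_mul]
    simpa using h

theorem finrank_map_add_inf_ker {M N : Type*} [AddCommGroup M] [Module F M] [AddCommGroup N]
    [Module F N] (f : M →ₗ[F] N) (W : Submodule F M) [Module.Finite F W] :
    Module.finrank F (W.map f) + Module.finrank F (W ⊓ LinearMap.ker f : Submodule F M)
      = Module.finrank F W := by
  have h := LinearMap.finrank_range_add_finrank_ker (f.domRestrict W)
  rw [LinearMap.range_domRestrict] at h
  have h2 : (LinearMap.ker (f.domRestrict W)).map W.subtype = W ⊓ LinearMap.ker f := by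
    ext x
    simp [and_comm]
  rw [← h, ← h2, LinearEquiv.finrank_eq (Submodule.equivMapOfInjective _ W.injective_subtype _)]

variable {Λ : Type*} [CommRing Λ] [Algebra F Λ]

/-- `ξ` cuts out the zero locus of `μ` scheme-theoretically, up to saturation: an element of
`V ^ M` killed by `μ` is `ξ` times an element of degree `M - 1` of the saturation. -/
structure IsSection (V : Submodule F A) (ξ : A) (μ : A →ₐ[F] Λ) : Prop where
  one_mem : (1 : A) ∈ V
  mem : ξ ∈ V
  ne_zero : ξ ≠ 0
  map_zero : μ ξ = 0
  sat : ∀ M : ℕ, ∀ f ∈ V ^ M, μ f = 0 → ∃ N : ℕ, ∀ g ∈ V ^ (N + 1), f * g ∈ mulS ξ (V ^ (M + N))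

namespace IsSection

variable {V : Submodule F A} {ξ : A} {μ : A →ₐ[F] Λ}

/-- In large degrees no saturation is needed: the kernel of `μ` on `V ^ (k + 1)` is `ξ V ^ k`. -/
theorem eventually [Module.Finite F V] (h : IsSection V ξ μ) :
    ∃ k₀, ∀ k, k₀ ≤ k → ∀ f ∈ V ^ (k + 1), μ f = 0 → f ∈ mulS ξ (V ^ k) := by
  classical
  obtain ⟨m, w, hw⟩ := Submodule.fg_iff_exists_fin_generating_family.1
    (Module.Finite.iff_fg.1 (inferInstance : Module.Finite F V))
  have hmap := map_homogeneousSubmodule w hw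
  let R := MvPolynomial (Fin m) F
  let X : Set R := {p | ∃ k, p.IsHomogeneous k ∧ μ (MvPolynomial.aeval w p) = 0}
  have hfg : (Submodule.span R X).FG := IsNoetherian.noetherian _
  obtain ⟨S, hSX, hS⟩ := (Submodule.fg_span_iff_fg_span_finset_subset X).1 hfg
  have hSX' : ∀ p ∈ S, ∃ k, p.IsHomogeneous k ∧ μ (MvPolynomial.aeval w p) = 0 :=
    fun p hp => hSX hp
  choose! d hd hμ using hSX'
  have hmem : ∀ {p : R} {k}, p.IsHomogeneous k → MvPolynomial.aeval w p ∈ V ^ k := by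
    intro p k hp
    rw [← hmap k]
    exact ⟨p, hp, rfl⟩
  have hN : ∀ p ∈ S, ∃ N : ℕ, ∀ g ∈ V ^ (N + 1),
      MvPolynomial.aeval w p * g ∈ mulS ξ (V ^ (d p + N)) :=
    fun p hp => h.sat _ _ (hmem (hd p hp)) (hμ p hp)
  choose! N hN using hN
  refine ⟨∑ p ∈ S, (N p + d p), fun k hk f hf hf0 => ?_⟩
  rw [← hmap] at hf
  obtain ⟨p, hp, rfl⟩ := hf
  have hpS : p ∈ Submodule.span R (S : Set R) := by
    rw [← hS]
    exact Submodule.subset_span ⟨_, hp, hf0⟩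
  obtain ⟨c, hc⟩ := Submodule.mem_span_finset'.1 hpS
  have hsum : p = ∑ a : S, MvPolynomial.homogeneousComponent (k + 1) (c a * (a : R)) := by
    rw [← map_sum]
    have : ∑ a : S, c a * (a : R) = p := hc
    rw [this, MvPolynomial.homogeneousComponent_eq_self hp]
  change MvPolynomial.aeval w p ∈ _
  rw [hsum, map_sum]
  refine Submodule.sum_mem _ fun a _ => ?_
  have hle : N a + d a ≤ k :=
    (Finset.single_le_sum (f := fun p => N p + d p) (fun _ _ => Nat.zero_le _) a.2).trans hk
  obtain ⟨j, rfl⟩ := Nat.exists_eq_add_of_le hle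
  have hcomp : MvPolynomial.homogeneousComponent (N a + d a + j + 1) (c a * (a : R)) =
      MvPolynomial.homogeneousComponent (N a + 1 + j) (c a) * a := by
    have := homogeneousComponent_mul_right (hd a a.2) (N a + 1 + j) (c a)
    rwa [show N a + 1 + j + d a = N a + d a + j + 1 by ring] at this
  rw [hcomp, map_mul, mul_comm]
  have := mul_pow_mem_of_le (a := j) _ (hN a a.2) _
    (hmem (MvPolynomial.homogeneousComponent_isHomogeneous (N a + 1 + j) (c a)))
  rw [mulS_mul, ← pow_add] at this
  rwa [show N a + d a + j = d a + N a + j by ring]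

theorem mulS_le_ker (h : IsSection V ξ μ) (k : ℕ) :
    mulS ξ (V ^ k) ≤ V ^ (k + 1) ⊓ LinearMap.ker μ.toLinearMap := by
  intro x hx
  obtain ⟨v, hv, rfl⟩ := mem_mulS.1 hx
  refine ⟨?_, ?_⟩
  · rw [pow_succ']; exact Submodule.mul_mem_mul h.mem hv
  · simp [h.map_zero]

theorem finrank_map_add_le [IsDomain A] [Module.Finite F V] (h : IsSection V ξ μ) (k : ℕ) :
    Module.finrank F ((V ^ (k + 1)).map μ.toLinearMap) +
      Module.finrank F (V ^ k : Submodule F A) ≤ Module.finrank F (V ^ (k + 1) : Submodule F A) := by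
  rw [← finrank_map_add_inf_ker μ.toLinearMap (V ^ (k + 1)), ← finrank_mulS h.ne_zero (V ^ k)]
  have : Module.Finite F (V ^ (k + 1) ⊓ LinearMap.ker μ.toLinearMap : Submodule F A) :=
    Submodule.finiteDimensional_of_le inf_le_left
  exact Nat.add_le_add_left (Submodule.finrank_mono (h.mulS_le_ker k)) _

/-- Equality of dimensions detects the degrees in which the kernel of `μ` is exactly `ξ V ^ k`. -/
theorem finrank_map_add_eq_iff [IsDomain A] [Module.Finite F V] (h : IsSection V ξ μ) (k : ℕ) :
    Module.finrank F ((V ^ (k + 1)).map μ.toLinearMap) +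
      Module.finrank F (V ^ k : Submodule F A) = Module.finrank F (V ^ (k + 1) : Submodule F A) ↔
      ∀ f ∈ V ^ (k + 1), μ f = 0 → f ∈ mulS ξ (V ^ k) := by
  rw [← finrank_map_add_inf_ker μ.toLinearMap (V ^ (k + 1)), ← finrank_mulS h.ne_zero (V ^ k)]
  have : Module.Finite F (V ^ (k + 1) ⊓ LinearMap.ker μ.toLinearMap : Submodule F A) :=
    Submodule.finiteDimensional_of_le inf_le_left
  constructor
  · intro he f hf hf0
    rw [Submodule.eq_of_le_of_finrank_eq (h.mulS_le_ker k) (Nat.add_left_cancel he)]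
    exact ⟨hf, hf0⟩
  · intro hf
    rw [le_antisymm (h.mulS_le_ker k) (fun f hf' => hf f hf'.1 hf'.2)]

/-- On the saturation the kernel of `μ` is `ξ` times the saturation in one degree less. -/
theorem mem_mulS_Sat [IsDomain A] [Module.Finite F V] (h : IsSection V ξ μ) {k : ℕ} {f : A}
    (hf : f ∈ Sat V (k + 1)) (hf0 : μ f = 0) : f ∈ mulS ξ (Sat V k) := by
  obtain ⟨N, hN⟩ := hf
  obtain ⟨k₀, hk₀⟩ := h.eventually
  let n := max N k₀
  have key : ∀ g ∈ V ^ n, f * g ∈ mulS ξ (V ^ (n + k)) := fun g hg =>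
    hk₀ _ ((le_max_right N k₀).trans (Nat.le_add_right _ _)) _ (hN n (le_max_left _ _) g hg)
      (by rw [map_mul, hf0, zero_mul])
  obtain ⟨e, -, he⟩ := mem_mulS.1 (key 1 (one_mem_pow' h.one_mem n))
  rw [mul_one] at he
  refine mem_mulS.2 ⟨e, mem_Sat.2 ⟨n, fun g hg => ?_⟩, he⟩
  obtain ⟨e', he', h'⟩ := mem_mulS.1 (key g hg)
  rw [← he, mul_assoc] at h'
  rwa [← mul_left_cancel₀ h.ne_zero h']

/-- A linear form vanishing on the section is a multiple of `ξ`, that is, the section is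
nondegenerate in its hyperplane. -/
theorem ker_one [IsDomain A] [Module.Finite F V] (h : IsSection V ξ μ) (h0 : Sat V 0 = 1) :
    ∀ f ∈ V ^ (0 + 1), μ f = 0 → f ∈ mulS ξ (V ^ 0) := by
  intro f hf hf0
  rw [pow_zero, ← h0]
  exact h.mem_mulS_Sat (pow_le_Sat V 1 hf) hf0

end IsSection

end Frame

end SurfReg

end Part3a

/-! ### The universal hyperplane section -/

section Part3b

open scoped TensorProduct
open MvPolynomial

namespace SurfReg

section Universal

variable {k O σ : Type*} [Field k] [CommRing O] [IsDomain O] [Algebra k O] [Fintype σ]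
  [DecidableEq σ]

/-- The universal linear form `∑ X_j w_j` in the generators `w`. -/
noncomputable def uform (w : σ → O) : MvPolynomial σ O := ∑ j, X j * C (w j)

theorem C_mul_mem_coeffsIn {V W : Submodule k O} {a : O} (ha : a ∈ V) {f : MvPolynomial σ O}
    (hf : f ∈ coeffsIn σ W) : C a * f ∈ coeffsIn σ (V * W) := by
  rw [coeffsIn_mul]
  exact Submodule.mul_mem_mul (C_mem_coeffsIn.2 ha) hf

theorem C_gen_mul_mem {w : σ → O} {V : Submodule k O} (hV : Submodule.span k (Set.range w) = V)
    (i : σ) {M : ℕ} {f : MvPolynomial σ O} (hf : f ∈ coeffsIn σ (V ^ M)) :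
    C (w i) * f ∈ coeffsIn σ (V ^ (M + 1)) := by
  rw [pow_succ']
  exact C_mul_mem_coeffsIn (hV ▸ Submodule.subset_span ⟨i, rfl⟩) hf

theorem X_mul_mem {W : Submodule k O} (i : σ) {f : MvPolynomial σ O} (hf : f ∈ coeffsIn σ W) :
    X i * f ∈ coeffsIn σ W := by
  rw [mul_comm]; exact mul_X_mem_coeffsIn.2 hf

/-- Reduction of `f` modulo the universal form: after multiplying by a power of `w_i`, the
variable `X_i` can be eliminated. -/
theorem exists_reduction (w : σ → O) {V : Submodule k O}
    (hV : Submodule.span k (Set.range w) = V) (i : σ) (M : ℕ) (f : MvPolynomial σ O)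
    (hf : f ∈ coeffsIn σ (V ^ M)) :
    ∃ N₀ : ℕ, ∀ N, N₀ ≤ N → ∃ g ∈ coeffsIn σ (V ^ (M + N)), ∃ R ∈ supported O ({i}ᶜ : Set σ),
      R ∈ coeffsIn σ (V ^ (M + N + 1)) ∧ C (w i) ^ (N + 1) * f = uform w * g + R := by
  -- a single `N` suffices, since the identity can be multiplied by `w_i`
  have hup : ∀ {f : MvPolynomial σ O} {N : ℕ} (d : ℕ), (∃ g ∈ coeffsIn σ (V ^ (M + N)),
      ∃ R ∈ supported O ({i}ᶜ : Set σ), R ∈ coeffsIn σ (V ^ (M + N + 1)) ∧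
      C (w i) ^ (N + 1) * f = uform w * g + R) → ∃ g ∈ coeffsIn σ (V ^ (M + (N + d))),
      ∃ R ∈ supported O ({i}ᶜ : Set σ), R ∈ coeffsIn σ (V ^ (M + (N + d) + 1)) ∧
      C (w i) ^ (N + d + 1) * f = uform w * g + R := by
    intro f N d h
    induction d with
    | zero => exact h
    | succ d ih =>
      obtain ⟨g, hg, R, hR, hR', e⟩ := ih
      refine ⟨C (w i) * g, C_gen_mul_mem hV i hg, C (w i) * R,
        mul_mem ((supported O ({i}ᶜ : Set σ)).algebraMap_mem _) hR, C_gen_mul_mem hV i hR', ?_⟩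
      rw [show N + (d + 1) + 1 = (N + d + 1) + 1 by ring, pow_succ', mul_assoc, e]; ring
  suffices h : ∃ N, ∃ g ∈ coeffsIn σ (V ^ (M + N)), ∃ R ∈ supported O ({i}ᶜ : Set σ),
      R ∈ coeffsIn σ (V ^ (M + N + 1)) ∧ C (w i) ^ (N + 1) * f = uform w * g + R by
    obtain ⟨N₀, h⟩ := h
    refine ⟨N₀, fun N hN => ?_⟩
    obtain ⟨d, rfl⟩ := Nat.exists_eq_add_of_le hN
    exact hup d h
  rw [coeffsIn_eq_span_monomial] at hf
  induction hf using Submodule.span_induction with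
  | mem f hf =>
    obtain ⟨u, hu, s, rfl⟩ := hf
    have hmot := induction_on_monomial (R := O) (σ := σ) (motive := fun f => f ∈ coeffsIn σ (V ^ M) →
      ∃ N, ∃ g ∈ coeffsIn σ (V ^ (M + N)), ∃ R ∈ supported O ({i}ᶜ : Set σ),
      R ∈ coeffsIn σ (V ^ (M + N + 1)) ∧ C (w i) ^ (N + 1) * f = uform w * g + R) ?_ ?_ s u
    · exact hmot (monomial_mem_coeffsIn.2 hu)
    · intro a ha
      refine ⟨0, 0, zero_mem _, C (w i) * C a,
        mul_mem ((supported O ({i}ᶜ : Set σ)).algebraMap_mem _)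
          ((supported O ({i}ᶜ : Set σ)).algebraMap_mem _), C_gen_mul_mem hV i ha, by simp⟩
    · intro f j h hf
      obtain ⟨N, g, hg, R, hR, hR', e⟩ := h (mul_X_mem_coeffsIn.1 hf)
      by_cases hj : j = i
      · subst hj
        -- `w_i X_i = Ξ - z` with `z` free of `X_i`
        let z : MvPolynomial σ O := ∑ l ∈ Finset.univ.erase j, X l * C (w l)
        have hz : uform w = X j * C (w j) + z :=
          (Finset.add_sum_erase _ _ (Finset.mem_univ j)).symm
        have hzs : z ∈ supported O ({j}ᶜ : Set σ) := by
          refine sum_mem fun l hl => mul_mem ?_ ((supported O ({j}ᶜ : Set σ)).algebraMap_mem _)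
          exact X_mem_supported.2 (by simpa using (Finset.mem_erase.1 hl).1)
        have hzR : z * R ∈ coeffsIn σ (V ^ (M + N + 1 + 1)) := by
          rw [Finset.sum_mul]
          refine sum_mem fun l _ => ?_
          rw [mul_assoc]
          exact X_mul_mem _ (C_gen_mul_mem hV _ hR')
        refine ⟨N + 1, X j * (C (w j) * g) + R, add_mem (X_mul_mem _ (C_gen_mul_mem hV _ hg)) hR',
          -(z * R), neg_mem (mul_mem hzs hR), neg_mem hzR, ?_⟩
        calc C (w j) ^ (N + 1 + 1) * (f * X j)
            = C (w j) * X j * (C (w j) ^ (N + 1) * f) := by ring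
          _ = C (w j) * X j * (uform w * g) + (uform w - z) * R := by rw [e, hz]; ring
          _ = _ := by ring
      · refine ⟨N, X j * g, X_mul_mem _ hg, X j * R, mul_mem (X_mem_supported.2 (by simpa using hj)) hR,
          X_mul_mem _ hR', ?_⟩
        rw [← mul_assoc, e]; ring
  | zero =>
    exact ⟨0, 0, zero_mem _, 0, zero_mem _, zero_mem _, by simp⟩
  | add f f' _ _ h h' =>
    obtain ⟨N, h⟩ := h
    obtain ⟨N', h'⟩ := h'
    obtain ⟨g, hg, R, hR, hR', e⟩ := hup N' h
    have h'' := hup N h'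
    rw [add_comm N' N] at h''
    obtain ⟨g₂, hg₂, R₂, hR₂, hR₂', e₂⟩ := h''
    exact ⟨N + N', g + g₂, add_mem hg hg₂, R + R₂, add_mem hR hR₂, add_mem hR' hR₂', by
      rw [mul_add, e, e₂]; ring⟩
  | smul c f _ h =>
    obtain ⟨N, g, hg, R, hR, hR', e⟩ := h
    refine ⟨N, c • g, Submodule.smul_mem _ _ hg, c • R, ?_, Submodule.smul_mem _ _ hR', ?_⟩
    · rw [← algebraMap_smul O c R]; exact Subalgebra.smul_mem _ hR _
    · rw [mul_smul_comm, e, smul_add, mul_smul_comm]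

theorem uform_degreeOf (w : σ → O) {i : σ} (hi : w i ≠ 0) : 1 ≤ degreeOf i (uform w) := by
  have hc : coeff (Finsupp.single i 1) (uform w) = w i := by
    rw [uform, coeff_sum, Finset.sum_eq_single i]
    · simp [mul_comm (X i), coeff_C_mul]
    · intro j _ hj
      rw [mul_comm, coeff_C_mul, coeff_X', if_neg, mul_zero]
      simpa [Finsupp.single_left_inj] using hj
    · simp
  have := monomial_le_degreeOf i (f := uform w) (m := Finsupp.single i 1) (by
    rw [mem_support_iff, hc]; exact hi)
  simpa using this

/-- If the universal form divides `f`, the remainder in `exists_reduction` vanishes: it is divisible by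
a form of positive degree in `X_i`, a variable which it does not involve. -/
theorem C_pow_mul_mem_of_dvd (w : σ → O) {V : Submodule k O}
    (hV : Submodule.span k (Set.range w) = V) {i : σ} (hi : w i ≠ 0) (M : ℕ) (f : MvPolynomial σ O)
    (hf : f ∈ coeffsIn σ (V ^ M)) (hd : uform w ∣ f) :
    ∃ N₀ : ℕ, ∀ N, N₀ ≤ N → C (w i) ^ (N + 1) * f ∈ mulS (uform w) (coeffsIn σ (V ^ (M + N))) := by
  obtain ⟨N₀, h⟩ := exists_reduction w hV i M f hf
  refine ⟨N₀, fun N hN => ?_⟩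
  obtain ⟨g, hg, R, hR, -, e⟩ := h N hN
  have hdR : uform w ∣ R := by
    have : R = C (w i) ^ (N + 1) * f - uform w * g := by rw [e]; ring
    rw [this]
    exact dvd_sub (hd.mul_left _) (dvd_mul_right _ _)
  have hR0 : R = 0 := by
    by_contra hR0
    obtain ⟨h, rfl⟩ := hdR
    have h1 : uform w ≠ 0 := left_ne_zero_of_mul hR0
    have h2 : h ≠ 0 := right_ne_zero_of_mul hR0
    have h3 := degreeOf_mul_eq (n := i) h1 h2
    have h4 : degreeOf i (uform w * h) = 0 := by
      rw [mem_supported] at hR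
      by_contra hmi
      obtain ⟨m, hm, hmi⟩ : ∃ m ∈ (uform w * h).support, m i ≠ 0 := by
        by_contra! hcon
        exact hmi (Nat.le_zero.1 (degreeOf_le_iff.2 fun m hm => (hcon m hm).le))
      exact hR ((mem_vars i).2 ⟨m, hm, Finsupp.mem_support_iff.2 hmi⟩) rfl
    have := uform_degreeOf w hi
    omega
  rw [e, hR0, add_zero]
  exact mul_mem_mulS hg

/-- The universal section is saturated: if the universal form divides `f`, then after
multiplication by every element of a high power of `V` the quotient has coefficients in a power
of `V`. -/
theorem universal_sat (w : σ → O) {V : Submodule k O}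
    (hV : Submodule.span k (Set.range w) = V) (M : ℕ) (f : MvPolynomial σ O)
    (hf : f ∈ coeffsIn σ (V ^ M)) (hd : uform w ∣ f) :
    ∃ N : ℕ, ∀ g ∈ V ^ (N + 1), C g * f ∈ mulS (uform w) (coeffsIn σ (V ^ (M + N))) := by
  have h0 : ∀ i, ∃ N₀ : ℕ, ∀ N, N₀ ≤ N →
      C (w i) ^ (N + 1) * f ∈ mulS (uform w) (coeffsIn σ (V ^ (M + N))) := by
    intro i
    by_cases hi : w i = 0
    · refine ⟨0, fun N _ => ?_⟩
      rw [hi, C_0, zero_pow (Nat.succ_ne_zero _), zero_mul]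
      exact zero_mem _
    · exact C_pow_mul_mem_of_dvd w hV hi M f hf hd
  choose N₀ hN₀ using h0
  let N := ∑ i, N₀ i
  have hN : ∀ i, N₀ i ≤ N := fun i => Finset.single_le_sum (fun _ _ => Nat.zero_le _) (Finset.mem_univ i)
  refine ⟨Fintype.card σ * N, fun g hg => ?_⟩
  rw [← map_homogeneousSubmodule w hV] at hg
  obtain ⟨p, hp, rfl⟩ := hg
  rw [AlgHom.toLinearMap_apply, p.as_sum, map_sum, map_sum, Finset.sum_mul]
  refine sum_mem fun m hm => ?_
  have hmd : Finsupp.degree m = Fintype.card σ * N + 1 := by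
    have h := hp (mem_support_iff.1 hm)
    rw [Finsupp.degree_eq_weight_one]; exact h
  obtain ⟨i, hi⟩ : ∃ i, N < m i := by
    by_contra! hcon
    have : Finsupp.degree m ≤ Fintype.card σ * N := by
      rw [Finsupp.degree_eq_sum]
      calc ∑ i, m i ≤ ∑ _i : σ, N := Finset.sum_le_sum fun i _ => hcon i
        _ = _ := by simp
    omega
  let m' := m - Finsupp.single i (N + 1)
  have hm' : m = m' + Finsupp.single i (N + 1) := by
    rw [tsub_add_cancel_of_le]
    exact Finsupp.single_le_iff.2 hi
  have hdm' : Finsupp.degree m' + (N + 1) = Fintype.card σ * N + 1 := by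
    rw [← hmd, hm', map_add, Finsupp.degree_single]
  have hmem : aeval w (monomial m' (coeff m p)) ∈ V ^ (Finsupp.degree m') := by
    rw [← map_homogeneousSubmodule w hV]
    exact ⟨_, isHomogeneous_monomial _ rfl, rfl⟩
  have e : aeval w (monomial m (coeff m p)) = aeval w (monomial m' (coeff m p)) * w i ^ (N + 1) := by
    rw [show monomial m (coeff m p) = monomial m' (coeff m p) * X i ^ (N + 1) by
      rw [← monomial_add_single, ← hm'], map_mul, map_pow, aeval_X]
  obtain ⟨q, hq, hq'⟩ := mem_mulS.1 (hN₀ i N (hN i))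
  rw [e, C_mul, mul_assoc, C_pow, ← hq']
  refine mem_mulS.2 ⟨C _ * q, ?_, by ring⟩
  have := C_mul_mem_coeffsIn hmem hq
  rw [← pow_add] at this
  convert this using 2
  congr 1
  omega

end Universal

end SurfReg

end Part3b

/-! ### Specialising to generic coefficients -/

section Part3c

open scoped TensorProduct
open MvPolynomial

namespace SurfReg

section Generic

variable {k O F Ω : Type*} [Field k] [CommRing O] [IsDomain O] [Algebra k O] [Field F] [Algebra k F]
  [Field Ω] [Algebra k Ω] [Algebra F Ω] [IsScalarTower k F Ω] {n : ℕ}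

/-- The restriction map from the ring `F ⊗ O` to the generic hyperplane section. -/
noncomputable def gmu (F : Type*) [Field F] [Algebra k F] [Algebra F Ω] [IsScalarTower k F Ω]
    (j : O →ₐ[k] Ω) : F ⊗[k] O →ₐ[F] Ω :=
  Algebra.TensorProduct.lift (Algebra.ofId F Ω) j (fun _ _ => Commute.all _ _)

@[simp] theorem gmu_tmul (j : O →ₐ[k] Ω) (a : F) (b : O) :
    gmu F j (a ⊗ₜ b) = algebraMap F Ω a * j b := by
  simp [gmu, Algebra.ofId_apply]

/-- The equation of the generic hyperplane section. -/
noncomputable def gxi (t : Fin (n + 1) → F) (w : Fin (n + 1) → O) : F ⊗[k] O :=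
  ∑ j, t j ⊗ₜ[k] w j

/-- Evaluation of the universal coefficients at `t`. -/
noncomputable def gth (k : Type*) [Field k] [Algebra k O] [Algebra k F] (t : Fin (n + 1) → F) :
    MvPolynomial (Fin (n + 1)) O →ₐ[k] F ⊗[k] O :=
  aevalTower (Algebra.TensorProduct.includeRight (R := k) (A := F) (B := O))
    (fun j => t j ⊗ₜ[k] (1 : O))

theorem gth_X (t : Fin (n + 1) → F) (j) : gth (O := O) k t (X j) = t j ⊗ₜ 1 := by
  simp [gth]

theorem gth_C (t : Fin (n + 1) → F) (a : O) : gth k t (C a) = 1 ⊗ₜ a := by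
  simp [gth]

theorem gth_uform (t : Fin (n + 1) → F) (w : Fin (n + 1) → O) :
    gth k t (uform w) = gxi t w := by
  simp [uform, gxi, gth_X, gth_C]

theorem gth_map (t : Fin (n + 1) → F) (p : MvPolynomial (Fin (n + 1)) k) :
    gth k t (MvPolynomial.map (algebraMap k O) p) = (aeval t p) ⊗ₜ (1 : O) := by
  have : (gth k t).comp (mapAlgHom (Algebra.ofId k O)) =
      (Algebra.TensorProduct.includeLeft (R := k) (S := k) (A := F) (B := O)).comp (aeval t) := by
    ext j; simp [gth_X]
  exact DFunLike.congr_fun this p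

theorem gth_mem (t : Fin (n + 1) → F) {W : Submodule k O} {f : MvPolynomial (Fin (n + 1)) O}
    (hf : f ∈ coeffsIn (Fin (n + 1)) W) : gth k t f ∈ W.baseChange F := by
  rw [coeffsIn_eq_span_monomial] at hf
  induction hf using Submodule.span_induction with
  | mem f hf =>
    obtain ⟨u, hu, s, rfl⟩ := hf
    have : gth k t (monomial s u) = (aeval t (monomial s (1 : k))) • ((1 : F) ⊗ₜ[k] u) := by
      have h1 : monomial s u = C u * MvPolynomial.map (algebraMap k O) (monomial s (1 : k)) := by
        rw [map_monomial, map_one, C_mul_monomial, mul_one]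
      rw [h1, map_mul, gth_C, gth_map]
      simp [TensorProduct.smul_tmul']
    rw [this]
    exact Submodule.smul_mem _ _ (Submodule.tmul_mem_baseChange_of_mem _ hu)
  | zero => simp
  | add f g _ _ hf hg => rw [map_add]; exact add_mem hf hg
  | smul c f _ hf =>
    rw [map_smul, ← algebraMap_smul F c]
    exact Submodule.smul_mem _ _ hf

/-- When `F` is generated as a field by the coefficients `t`, an element of `F ⊗ W` is, up to a nonzero
factor in `F`, the specialisation of a polynomial with coefficients in `W`. -/
theorem exists_clear_denom (t : Fin (n + 1) → F)
    (hfrac : ∀ c : F, ∃ p d : MvPolynomial (Fin (n + 1)) k, aeval t d ≠ 0 ∧ aeval t d * c = aeval t p)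
    (W : Submodule k O) (f : F ⊗[k] O) (hf : f ∈ W.baseChange F) :
    ∃ d : MvPolynomial (Fin (n + 1)) k, aeval t d ≠ 0 ∧
      ∃ g ∈ coeffsIn (Fin (n + 1)) W, aeval t d • f = gth k t g := by
  have hmul : ∀ (d : MvPolynomial (Fin (n + 1)) k) (g : MvPolynomial (Fin (n + 1)) O),
      g ∈ coeffsIn (Fin (n + 1)) W →
      ∃ g' ∈ coeffsIn (Fin (n + 1)) W, gth k t g' = aeval t d • gth k t g := by
    intro d g hg
    refine ⟨MvPolynomial.map (algebraMap k O) d * g, ?_, ?_⟩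
    · rw [← one_mul W, coeffsIn_mul]
      refine Submodule.mul_mem_mul (fun m => ?_) hg
      rw [coeff_map]; exact Submodule.algebraMap_mem _
    · rw [map_mul, gth_map, Algebra.smul_def]; rfl
  rw [Submodule.baseChange_eq_span] at hf
  induction hf using Submodule.span_induction with
  | mem f hf =>
    obtain ⟨u, hu, rfl⟩ := hf
    exact ⟨1, by simp, C u, C_mem_coeffsIn.2 hu, by simp [gth_C]⟩
  | zero => exact ⟨1, by simp, 0, zero_mem _, by simp⟩
  | add f g _ _ hf hg =>
    obtain ⟨d, hd, f', hf', e⟩ := hf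
    obtain ⟨d₂, hd₂, g', hg', e₂⟩ := hg
    obtain ⟨f'', hf'', e'⟩ := hmul d₂ f' hf'
    obtain ⟨g'', hg'', e₂'⟩ := hmul d g' hg'
    refine ⟨d * d₂, by simp [hd, hd₂], f'' + g'', add_mem hf'' hg'', ?_⟩
    rw [map_add, e', e₂', ← e, ← e₂, map_mul, smul_add, smul_smul, smul_smul, mul_comm (aeval t d₂)]
  | smul c f _ hf =>
    obtain ⟨d, hd, f', hf', e⟩ := hf
    obtain ⟨p, d₂, hd₂, hc⟩ := hfrac c
    obtain ⟨f'', hf'', e'⟩ := hmul p f' hf'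
    refine ⟨d * d₂, by simp [hd, hd₂], f'', hf'', ?_⟩
    rw [e', ← e, ← hc, map_mul, smul_smul, smul_smul]; congr 1; ring

/-- The universal form is monic of degree one in its first variable, so it divides every polynomial
vanishing at its root `-∑ X_j v_j`. -/
theorem uform_dvd_of_aeval (v : Fin n → O) (f : MvPolynomial (Fin (n + 1)) O)
    (hf : aeval (Fin.cons (-genY v) X : Fin (n + 1) → MvPolynomial (Fin n) O) f = 0) :
    uform (Fin.cons 1 v : Fin (n + 1) → O) ∣ f := by
  let w : Fin (n + 1) → O := Fin.cons 1 v
  let ν : MvPolynomial (Fin (n + 1)) O →ₐ[O] MvPolynomial (Fin n) O :=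
    aeval (Fin.cons (-genY v) X : Fin (n + 1) → MvPolynomial (Fin n) O)
  let ε : MvPolynomial (Fin n) O →ₐ[O] MvPolynomial (Fin (n + 1)) O := rename Fin.succ
  let mk := Ideal.Quotient.mkₐ O (Ideal.span {uform w})
  have h : mk.comp (ε.comp ν) = mk := by
    ext j
    refine Fin.cases ?_ (fun j => ?_) j
    · change mk (ε (ν (X 0))) = mk (X 0)
      have : ε (ν (X 0)) = X 0 - uform w := by
        simp [ν, ε, genY, uform, Fin.sum_univ_succ, w]
      rw [this, map_sub, sub_eq_self]
      exact Ideal.Quotient.eq_zero_iff_mem.2 (Ideal.mem_span_singleton_self _)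
    · simp [ν, ε]
  have h2 : mk f = 0 := by
    rw [← h]
    change mk (ε (ν f)) = 0
    rw [show ν f = 0 from hf, map_zero, map_zero]
  exact Ideal.mem_span_singleton.1 (Ideal.Quotient.eq_zero_iff_mem.1 h2)

theorem gxi_ne_zero {t : Fin (n + 1) → F} {w : Fin (n + 1) → O} (hw : LinearIndependent k w)
    {j : Fin (n + 1)} (hj : t j ≠ 0) : gxi (k := k) t w ≠ 0 := by
  intro h
  obtain ⟨φ, hφ⟩ := LinearMap.exists_extend hw.repr
  have hφw : ∀ i, φ (w i) = Finsupp.single i 1 := by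
    intro i
    have h1 := DFunLike.congr_fun hφ ⟨w i, Submodule.subset_span ⟨i, rfl⟩⟩
    simp only [LinearMap.comp_apply, Submodule.subtype_apply] at h1
    rw [h1]
    exact hw.repr_eq_single i _ rfl
  let ψ : F ⊗[k] O →ₗ[k] F := (TensorProduct.rid k F).toLinearMap ∘ₗ
    LinearMap.lTensor F (Finsupp.lapply j ∘ₗ φ)
  have h2 : ψ (gxi t w) = t j := by
    simp [gxi, ψ, hφw, Finsupp.single_apply]
  rw [h, map_zero] at h2
  exact hj h2.symm

/-- The generic section inherits saturation from the universal section (`universal_sat`), over any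
field generated by the coefficients of the generic hyperplane. -/
theorem sat_of_frac (ι : MvPolynomial (Fin n) O →ₐ[k] Ω) (hι : Function.Injective ι) (v : Fin n → O)
    {V : Submodule k O} (hV : Submodule.span k (Set.range (Fin.cons 1 v : Fin (n + 1) → O)) = V)
    (t : Fin (n + 1) → F) (ht0 : algebraMap F Ω (t 0) = - ι (genY v))
    (htj : ∀ j : Fin n, algebraMap F Ω (t j.succ) = ι (X j))
    (hfrac : ∀ c : F, ∃ p d : MvPolynomial (Fin (n + 1)) k, aeval t d ≠ 0 ∧ aeval t d * c = aeval t p)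
    (M : ℕ) (f : F ⊗[k] O) (hf : f ∈ V.baseChange F ^ M)
    (hμ : gmu F (ι.comp (IsScalarTower.toAlgHom k O (MvPolynomial (Fin n) O))) f = 0) :
    ∃ N : ℕ, ∀ g ∈ V.baseChange F ^ (N + 1),
      f * g ∈ mulS (gxi t (Fin.cons 1 v : Fin (n + 1) → O)) (V.baseChange F ^ (M + N)) := by
  rw [← baseChange_pow] at hf
  obtain ⟨d, hd, f', hf', e⟩ := exists_clear_denom t hfrac _ f hf
  let μ := gmu F (ι.comp (IsScalarTower.toAlgHom k O (MvPolynomial (Fin n) O)))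
  let ν : MvPolynomial (Fin (n + 1)) O →ₐ[O] MvPolynomial (Fin n) O :=
    aeval (Fin.cons (-genY v) X : Fin (n + 1) → MvPolynomial (Fin n) O)
  have hcomm : ∀ p, μ (gth k t p) = ι (ν p) := by
    intro p
    induction p using MvPolynomial.induction_on with
    | C a => simp [gth_C, ν, μ, MvPolynomial.algebraMap_eq]
    | add p q hp hq => simp only [map_add, hp, hq]
    | mul_X p j hp =>
      rw [map_mul, map_mul, hp, map_mul, map_mul]
      congr 1
      rw [gth_X]
      refine Fin.cases ?_ (fun j => ?_) j
      · simp [μ, ν, ht0]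
      · simp [μ, ν, htj]
  have hdvd : uform (Fin.cons 1 v : Fin (n + 1) → O) ∣ f' := by
    refine uform_dvd_of_aeval v f' (hι ?_)
    rw [map_zero]
    change ι (ν f') = 0
    rw [← hcomm, ← e, map_smul]
    change _ • (gmu F _) f = 0
    rw [hμ, smul_zero]
  obtain ⟨N, hN⟩ := universal_sat _ hV M f' hf' hdvd
  refine ⟨N, fun g hg => ?_⟩
  rw [← baseChange_pow, Submodule.baseChange_eq_span] at hg
  induction hg using Submodule.span_induction with
  | mem g hg =>
    obtain ⟨u, hu, rfl⟩ := hg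
    obtain ⟨q, hq, hq'⟩ := mem_mulS.1 (hN u hu)
    have h1 : aeval t d • (f * ((1 : F) ⊗ₜ[k] u)) = gxi t (Fin.cons 1 v : Fin (n + 1) → O) * gth k t q := by
      rw [← smul_mul_assoc, e, ← gth_uform, ← map_mul, hq', map_mul, gth_C, mul_comm]
    have h2 : f * ((1 : F) ⊗ₜ[k] u) ∈ mulS (gxi t (Fin.cons 1 v : Fin (n + 1) → O)) (V.baseChange F ^ (M + N)) := by
      rw [← inv_smul_smul₀ hd (f * ((1 : F) ⊗ₜ[k] u)), h1]
      refine Submodule.smul_mem _ _ (mul_mem_mulS ?_)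
      rw [← baseChange_pow]
      exact gth_mem t hq
    exact h2
  | zero => rw [mul_zero]; exact zero_mem _
  | add a b _ _ ha hb => rw [mul_add]; exact add_mem ha hb
  | smul c a _ ha => rw [mul_smul_comm]; exact Submodule.smul_mem _ _ ha

end Generic

end SurfReg

end Part3c

/-! ### Generic sections over extension fields -/

section Part3d

open scoped TensorProduct

namespace SurfReg

section Disjoint

/-- If `κ` is algebraically closed in `Λ`, then algebraic extensions of `κ` are linearly disjoint
from `Λ`. -/
theorem linInd_of_algClosedIn {κ Ω K J : Type*} [Field κ] [CharZero κ] [Field Ω] [Algebra κ Ω]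
    [Field K] [Algebra κ K] [Algebra K Ω] [IsScalarTower κ K Ω] [Algebra.IsAlgebraic κ K]
    (Λ : IntermediateField κ Ω)
    (hcl : ∀ x ∈ Λ, IsAlgebraic κ x → x ∈ (algebraMap κ Ω).range)
    (e : J → K) (he : LinearIndependent κ e) : LinearIndependent Λ (fun i => algebraMap K Ω (e i)) := by
  classical
  refine linearIndependent_iff_finset_linearIndependent.2 fun s => ?_
  let L : IntermediateField κ K := IntermediateField.adjoin κ (e '' s)
  have hfd : FiniteDimensional κ L :=
    IntermediateField.finiteDimensional_adjoin (S := e '' s)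
      fun x _ => (Algebra.IsAlgebraic.isAlgebraic x).isIntegral
  let pb := Field.powerBasisOfFiniteOfSeparable κ L
  let θ : Ω := algebraMap L Ω pb.gen
  have hθ : IsIntegral κ θ := (pb.isIntegral_gen).map (IsScalarTower.toAlgHom κ L Ω)
  have hmin : minpoly κ θ = minpoly κ pb.gen :=
    minpoly.algebraMap_eq (algebraMap L Ω).injective pb.gen
  have hdeg : pb.dim ≤ (minpoly Λ θ).natDegree := by
    have hθ' : IsIntegral Λ θ := hθ.tower_top
    have hco : ∀ i, (minpoly Λ θ).coeff i ∈ (algebraMap κ Λ).range := by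
      intro i
      have h1 := Polynomial.isIntegral_coeff_of_dvd (minpoly κ θ) (minpoly Λ θ)
        (minpoly.monic hθ) (minpoly.monic hθ') (minpoly.dvd_map_of_isScalarTower κ Λ θ) i
      obtain ⟨c, hc⟩ := hcl _ ((minpoly Λ θ).coeff i).2
        (h1.isAlgebraic.algebraMap (A := Ω))
      exact ⟨c, Subtype.ext hc⟩
    obtain ⟨q, hq, hqd, hqm⟩ := Polynomial.lifts_and_natDegree_eq_and_monic
      ((Polynomial.lifts_iff_coeff_lifts _).2 hco) (minpoly.monic hθ')
    rw [← hqd, ← pb.natDegree_minpoly, ← hmin]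
    refine Polynomial.natDegree_le_of_dvd (minpoly.dvd κ θ ?_) hqm.ne_zero
    have h2 := minpoly.aeval Λ θ
    rwa [← hq, Polynomial.aeval_map_algebraMap] at h2
  have hdisj : Λ.LinearDisjoint L := by
    refine IntermediateField.LinearDisjoint.of_basis_right' pb.basis ?_
    have := (linearIndependent_pow (K := Λ) θ).comp (Fin.castLE hdeg) (Fin.castLE_injective hdeg)
    convert this using 1
    · ext i
      simp [θ]
    · rfl
  have he' : LinearIndependent κ
      (fun i : s => (⟨e i, IntermediateField.subset_adjoin _ _ ⟨i, i.2, rfl⟩⟩ : L)) := by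
    refine LinearIndependent.of_comp L.val.toLinearMap ?_
    exact he.comp _ Subtype.val_injective
  exact hdisj.linearIndependent_right' he'

end Disjoint

section Sections

variable {k O Ω : Type*} [Field k] [IsAlgClosed k] [CommRing O] [IsDomain O] [Algebra k O]
  [Algebra.FiniteType k O] [Field Ω] [Algebra k Ω] {n : ℕ}

/-- The coefficients of the generic hyperplane, as elements of `kap ι v`. -/
noncomputable def gt (ι : MvPolynomial (Fin n) O →ₐ[k] Ω) (v : Fin n → O) : Fin (n + 1) → kap ι v :=
  Fin.cons ⟨-ι (genY v), neg_mem (kap_Y ι v)⟩ fun j => ⟨ι (MvPolynomial.X j), kap_X ι v j⟩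

/-- The inclusion of `O` into `Ω` induced by `ι`. -/
noncomputable def gj (ι : MvPolynomial (Fin n) O →ₐ[k] Ω) : O →ₐ[k] Ω :=
  ι.comp (IsScalarTower.toAlgHom k O (MvPolynomial (Fin n) O))

theorem gj_apply (ι : MvPolynomial (Fin n) O →ₐ[k] Ω) (a : O) : gj ι a = ι (MvPolynomial.C a) := rfl

theorem kap_eq_adjoin_range (ι : MvPolynomial (Fin n) O →ₐ[k] Ω) (v : Fin n → O) (c : kap ι v) :
    ∃ p d : MvPolynomial (Fin (n + 1)) k, MvPolynomial.aeval (gt ι v) d ≠ 0 ∧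
      MvPolynomial.aeval (gt ι v) d * c = MvPolynomial.aeval (gt ι v) p := by
  have h : kap ι v ≤ IntermediateField.adjoin k (Set.range fun j => (gt ι v j : Ω)) := by
    refine IntermediateField.adjoin_le_iff.2 ?_
    rintro _ ⟨x, ⟨j, rfl⟩ | rfl, rfl⟩
    · exact IntermediateField.subset_adjoin _ _ ⟨j.succ, rfl⟩
    · have h0 : -ι (genY v) ∈ IntermediateField.adjoin k (Set.range fun j => (gt ι v j : Ω)) :=
        IntermediateField.subset_adjoin _ _ ⟨0, rfl⟩
      simpa using neg_mem h0
  obtain ⟨p, d, e⟩ := (IntermediateField.mem_adjoin_range_iff _ _ _).1 (h c.2)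
  have hco : ∀ q : MvPolynomial (Fin (n + 1)) k,
      ((MvPolynomial.aeval (gt ι v) q : kap ι v) : Ω) = MvPolynomial.aeval (fun j => (gt ι v j : Ω)) q := by
    intro q
    exact (MvPolynomial.aeval_algebraMap_apply (B := Ω) (gt ι v) q).symm
  by_cases hd : MvPolynomial.aeval (fun j => (gt ι v j : Ω)) d = 0
  · refine ⟨0, 1, by simp, ?_⟩
    rw [hd, div_zero] at e
    have : c = 0 := Subtype.ext e
    simp [this]
  · refine ⟨p, d, fun h0 => hd ?_, Subtype.ext ?_⟩
    · rw [← hco, h0]; rfl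
    · change ((MvPolynomial.aeval (gt ι v) d : kap ι v) : Ω) * (c : Ω) = _
      rw [hco, hco, e]
      field_simp

theorem map_gxi_zero {F : Type*} [Field F] [Algebra k F] [Algebra F Ω] [IsScalarTower k F Ω]
    (ι : MvPolynomial (Fin n) O →ₐ[k] Ω) (v : Fin n → O)
    (t : Fin (n + 1) → F) (ht0 : algebraMap F Ω (t 0) = - ι (genY v))
    (htj : ∀ j : Fin n, algebraMap F Ω (t j.succ) = ι (MvPolynomial.X j)) :
    gmu F (gj ι) (gxi t (Fin.cons 1 v : Fin (n + 1) → O)) = 0 := by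
  simp [gxi, Fin.sum_univ_succ, ht0, htj, gj_apply, genY]

theorem gxi_mem {F : Type*} [Field F] [Algebra k F] {V : Submodule k O} {w : Fin (n + 1) → O}
    (hV : Submodule.span k (Set.range w) = V) (t : Fin (n + 1) → F) : gxi t w ∈ V.baseChange F :=
  sum_mem fun j _ => Submodule.tmul_mem_baseChange_of_mem _ (hV ▸ Submodule.subset_span ⟨j, rfl⟩)

theorem one_mem_baseChange {F : Type*} [Field F] [Algebra k F] {V : Submodule k O}
    (h : (1 : O) ∈ V) : (1 : F ⊗[k] O) ∈ V.baseChange F :=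
  Submodule.tmul_mem_baseChange_of_mem _ h

/-- The generic hyperplane section over the field generated by the coefficients. -/
theorem isSection_kap (ι : MvPolynomial (Fin n) O →ₐ[k] Ω) (hι : Function.Injective ι) (hn : 0 < n)
    (v : Fin n → O) (hw : LinearIndependent k (Fin.cons 1 v : Fin (n + 1) → O))
    {V : Submodule k O} (hV : Submodule.span k (Set.range (Fin.cons 1 v : Fin (n + 1) → O)) = V) :
    IsSection (V.baseChange (kap ι v)) (gxi (gt ι v) (Fin.cons 1 v : Fin (n + 1) → O))
      (gmu (kap ι v) (gj ι)) where
  one_mem := one_mem_baseChange (hV ▸ Submodule.subset_span ⟨0, rfl⟩)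
  mem := gxi_mem hV _
  ne_zero := by
    refine gxi_ne_zero hw (j := Fin.succ ⟨0, hn⟩) fun h => ?_
    have h1 : ι (MvPolynomial.X ⟨0, hn⟩) = 0 := congrArg Subtype.val h
    rw [← map_zero ι] at h1
    exact MvPolynomial.X_ne_zero _ (hι h1)
  map_zero := map_gxi_zero ι v _ rfl fun _ => rfl
  sat := fun M f hf hμ => sat_of_frac ι hι v hV _ rfl (fun _ => rfl) (kap_eq_adjoin_range ι v) M f hf hμ

theorem kap_le_adjoin_range (ι : MvPolynomial (Fin n) O →ₐ[k] Ω) (v : Fin n → O) :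
    kap ι v ≤ IntermediateField.adjoin k (Set.range ι) :=
  IntermediateField.adjoin.mono _ _ _ (Set.image_subset_range _ _)

/-- The fraction field of the image of `ι`, as an extension of `kap ι v`. -/
noncomputable def gLam (ι : MvPolynomial (Fin n) O →ₐ[k] Ω) (v : Fin n → O) :
    IntermediateField (kap ι v) Ω :=
  IntermediateField.extendScalars (F := kap ι v) (E := IntermediateField.adjoin k (Set.range ι))
    (kap_le_adjoin_range ι v)

theorem mem_gLam (ι : MvPolynomial (Fin n) O →ₐ[k] Ω) (v : Fin n → O) {x : Ω} :
    x ∈ gLam ι v ↔ ∃ a b, x = ι a / ι b := by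
  rw [gLam, IntermediateField.mem_extendScalars, IntermediateField.mem_adjoin_iff_div]
  have : Algebra.adjoin k (Set.range ι) = ι.range := by
    rw [← AlgHom.coe_range, Algebra.adjoin_eq]
  rw [this]
  constructor
  · rintro ⟨_, ⟨a, rfl⟩, _, ⟨b, rfl⟩, rfl⟩
    exact ⟨a, b, rfl⟩
  · rintro ⟨a, b, rfl⟩
    exact ⟨_, ⟨a, rfl⟩, _, ⟨b, rfl⟩, rfl⟩

theorem gmu_mem_gLam (ι : MvPolynomial (Fin n) O →ₐ[k] Ω) (v : Fin n → O)
    (x : (kap ι v) ⊗[k] O) : gmu (kap ι v) (gj ι) x ∈ gLam ι v := by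
  induction x with
  | zero => rw [map_zero]; exact zero_mem _
  | add x y hx hy => rw [map_add]; exact add_mem hx hy
  | tmul c a =>
    rw [gmu_tmul]
    refine mul_mem ((gLam ι v).algebraMap_mem c) ((mem_gLam ι v).2 ⟨MvPolynomial.C a, 1, ?_⟩)
    rw [map_one, div_one]; rfl

/-- The generic hyperplane section over an algebraic extension `K` of the coefficient field
`kap ι v`, when that field is algebraically closed in the ambient function field. -/
theorem isSection_ext [CharZero k] (ι : MvPolynomial (Fin n) O →ₐ[k] Ω) (hι : Function.Injective ι)
    (hn : 0 < n) (v : Fin n → O) (hw : LinearIndependent k (Fin.cons 1 v : Fin (n + 1) → O))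
    {V : Submodule k O} (hV : Submodule.span k (Set.range (Fin.cons 1 v : Fin (n + 1) → O)) = V)
    (hcl : ∀ x ∈ gLam ι v, IsAlgebraic (kap ι v) x → x ∈ kap ι v)
    {K : Type*} [Field K] [Algebra k K] [Algebra (kap ι v) K] [Algebra K Ω]
    [IsScalarTower k (kap ι v) K] [IsScalarTower (kap ι v) K Ω] [IsScalarTower k K Ω]
    [Algebra.IsAlgebraic (kap ι v) K] :
    IsSection (V.baseChange K)
      (gxi (fun j => algebraMap (kap ι v) K (gt ι v j)) (Fin.cons 1 v : Fin (n + 1) → O))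
      (gmu K (gj ι)) := by
  have hκ := isSection_kap ι hι hn v hw hV
  have hc : CharZero (kap ι v) := charZero_of_injective_algebraMap (algebraMap k _).injective
  let b := Module.Basis.ofVectorSpace (kap ι v) K
  have hbi := linInd_of_algClosedIn (gLam ι v) (fun x hx ha => ⟨⟨x, hcl x hx ha⟩, rfl⟩) b
    b.linearIndependent
  let J : (kap ι v) ⊗[k] O →ₐ[k] K ⊗[k] O :=
    Algebra.TensorProduct.map (IsScalarTower.toAlgHom k (kap ι v) K) (AlgHom.id k O)
  have hJ : ∀ c a, J (c ⊗ₜ a) = algebraMap (kap ι v) K c ⊗ₜ a := fun c a => by simp [J]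
  have hJξ : J (gxi (gt ι v) (Fin.cons 1 v : Fin (n + 1) → O)) =
      gxi (fun j => algebraMap (kap ι v) K (gt ι v j)) (Fin.cons 1 v : Fin (n + 1) → O) := by
    simp [gxi, hJ]
  have hJμ : ∀ x, gmu K (gj ι) (J x) = gmu (kap ι v) (gj ι) x := by
    intro x
    induction x with
    | zero => simp
    | add x y hx hy => simp only [map_add, hx, hy]
    | tmul c a => rw [hJ, gmu_tmul, gmu_tmul, ← IsScalarTower.algebraMap_apply]
  have hJs : ∀ (c : kap ι v) x, J (c • x) = algebraMap (kap ι v) K c • J x := by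
    intro c x
    induction x with
    | zero => simp
    | add x y hx hy => simp only [map_add, hx, hy, smul_add]
    | tmul d a => rw [TensorProduct.smul_tmul', hJ, hJ, TensorProduct.smul_tmul', smul_eq_mul,
        map_mul, smul_eq_mul]
  have hJmem : ∀ (W : Submodule k O) x, x ∈ W.baseChange (kap ι v) → J x ∈ W.baseChange K := by
    intro W x hx
    rw [Submodule.baseChange_eq_span] at hx
    induction hx using Submodule.span_induction with
    | mem x hx =>
      obtain ⟨u, hu, rfl⟩ := hx
      change J (1 ⊗ₜ u) ∈ _
      rw [hJ]
      exact Submodule.tmul_mem_baseChange_of_mem _ hu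
    | zero => rw [map_zero]; exact zero_mem _
    | add x y _ _ hx hy => rw [map_add]; exact add_mem hx hy
    | smul c x _ hx => rw [hJs]; exact Submodule.smul_mem _ _ hx
  -- every element of `W ⊗ K` is a combination of the basis `b` with coefficients in `W ⊗ κ`
  have hdec : ∀ (W : Submodule k O) f, f ∈ W.baseChange K → ∃ φ : _ →₀ (kap ι v) ⊗[k] O,
      (∀ l, φ l ∈ W.baseChange (kap ι v)) ∧ f = φ.sum fun l x => b l • J x := by
    intro W f hf
    obtain ⟨y, rfl⟩ := Submodule.toBaseChange_surjective' K W hf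
    clear hf
    induction y with
    | zero => exact ⟨0, fun l => zero_mem _, by simp⟩
    | add x y hx hy =>
      obtain ⟨φ, h1, e⟩ := hx
      obtain ⟨ψ, h2, e'⟩ := hy
      refine ⟨φ + ψ, fun l => add_mem (h1 l) (h2 l), ?_⟩
      rw [map_add, Submodule.coe_add, e, e', Finsupp.sum_add_index' (by simp)
        (by intro l x y; rw [map_add, smul_add])]
    | tmul c u =>
      refine ⟨(b.repr c).mapRange (fun a => a ⊗ₜ[k] (u : O)) (TensorProduct.zero_tmul _ _),
        fun l => Submodule.tmul_mem_baseChange_of_mem _ u.2, ?_⟩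
      rw [Finsupp.sum_mapRange_index (by simp)]
      have h1 : ((Submodule.toBaseChange K W (c ⊗ₜ u) : W.baseChange K) : K ⊗[k] O) = c ⊗ₜ (u : O) := rfl
      rw [h1]
      conv_lhs => rw [← b.linearCombination_repr c, Finsupp.linearCombination_apply, Finsupp.sum,
        TensorProduct.sum_tmul]
      refine Finset.sum_congr rfl fun l _ => ?_
      change _ = b l • J (_ ⊗ₜ (u : O))
      rw [hJ, TensorProduct.smul_tmul', Algebra.smul_def, mul_comm]; rfl
  refine ⟨one_mem_baseChange (hV ▸ Submodule.subset_span ⟨0, rfl⟩), gxi_mem hV _, ?_,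
    map_gxi_zero ι v _ ?_ ?_, ?_⟩
  · refine gxi_ne_zero hw (j := Fin.succ ⟨0, hn⟩) fun h => ?_
    have h1 : ι (MvPolynomial.X ⟨0, hn⟩) = 0 :=
      congrArg Subtype.val ((map_eq_zero (algebraMap (kap ι v) K)).1 h)
    rw [← map_zero ι] at h1
    exact MvPolynomial.X_ne_zero _ (hι h1)
  · rw [← IsScalarTower.algebraMap_apply]; rfl
  · intro j; rw [← IsScalarTower.algebraMap_apply]; rfl
  intro M f hf hμ
  rw [← baseChange_pow] at hf
  obtain ⟨φ, hφ, e⟩ := hdec _ f hf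
  have hμl : ∀ l, gmu (kap ι v) (gj ι) (φ l) = 0 := by
    rw [e, Finsupp.sum, map_sum] at hμ
    have h1 := linearIndependent_iff'.1 hbi φ.support
      (fun l => ⟨gmu (kap ι v) (gj ι) (φ l), gmu_mem_gLam ι v _⟩) (by
        rw [← hμ]
        refine Finset.sum_congr rfl fun l _ => ?_
        rw [map_smul, hJμ, Algebra.smul_def (b l), mul_comm]; rfl)
    intro l
    by_cases hl : l ∈ φ.support
    · exact congrArg Subtype.val (h1 l hl)
    · rw [Finsupp.notMem_support_iff.1 hl, map_zero]
  have hs := fun l => hκ.sat M (φ l) (by rw [← baseChange_pow]; exact hφ l) (hμl l)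
  choose N hN using hs
  let N' := ∑ l ∈ φ.support, N l
  refine ⟨N', fun g hg => ?_⟩
  rw [← baseChange_pow, Submodule.baseChange_eq_span] at hg
  induction hg using Submodule.span_induction with
  | zero => rw [mul_zero]; exact zero_mem _
  | add a b _ _ ha hb => rw [mul_add]; exact add_mem ha hb
  | smul c a _ ha => rw [mul_smul_comm]; exact Submodule.smul_mem _ _ ha
  | mem g hg =>
    obtain ⟨u, hu, rfl⟩ := hg
    change f * ((1 : K) ⊗ₜ u) ∈ _
    rw [e, Finsupp.sum, Finset.sum_mul]
    refine sum_mem fun l hl => ?_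
    rw [smul_mul_assoc]
    refine Submodule.smul_mem _ _ ?_
    have hle : N l ≤ N' := Finset.single_le_sum (f := N) (fun _ _ => Nat.zero_le _) hl
    obtain ⟨d, hd⟩ := Nat.exists_eq_add_of_le hle
    have h1 : φ l * ((1 : kap ι v) ⊗ₜ u) ∈
        mulS (gxi (gt ι v) (Fin.cons 1 v : Fin (n + 1) → O)) ((V ^ (M + N')).baseChange (kap ι v)) := by
      have hu' : ((1 : kap ι v) ⊗ₜ[k] u) ∈ V.baseChange (kap ι v) ^ (N l + 1) * V.baseChange (kap ι v) ^ d := by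
        rw [← pow_add, ← baseChange_pow]
        refine Submodule.tmul_mem_baseChange_of_mem _ ?_
        rw [show N l + 1 + d = N' + 1 by omega]
        exact hu
      generalize ((1 : kap ι v) ⊗ₜ[k] u) = z at hu'
      refine Submodule.mul_induction_on hu' (fun x hx y hy => ?_) (fun x y hx hy => ?_)
      · rw [← mul_assoc, baseChange_pow, hd, ← add_assoc, pow_add, ← mulS_mul]
        exact Submodule.mul_mem_mul (hN l x hx) hy
      · rw [mul_add]; exact add_mem hx hy
    obtain ⟨q, hq, hq'⟩ := mem_mulS.1 h1
    have h2 : J (φ l) * ((1 : K) ⊗ₜ u) = J (φ l * ((1 : kap ι v) ⊗ₜ u)) := by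
      rw [map_mul, hJ, map_one]
    rw [h2, ← hq', map_mul, hJξ, ← baseChange_pow]
    exact mul_mem_mulS (hJmem _ _ hq)

end Sections

end SurfReg

end Part3d

/-! ### Semicontinuity of rank and the linear Cauchy–Davenport inequality -/

section Part4a

open scoped TensorProduct

namespace SurfReg

section Minors

/-- Linearly independent vectors have a nonzero maximal minor in the coordinates of a basis. -/
theorem exists_det_ne_zero {F M B : Type*} [Field F] [AddCommGroup M] [Module F M]
    (b : Module.Basis B F M) {p : ℕ} (x : Fin p → M) (hx : LinearIndependent F x) :
    ∃ i : Fin p → B, (Matrix.of fun e l => b.repr (x e) (i l)).det ≠ 0 := by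
  classical
  let s : Finset B := Finset.univ.biUnion fun e => (b.repr (x e)).support
  let N : Matrix (Fin p) s F := Matrix.of fun e l => b.repr (x e) l
  have hN : LinearIndependent F N.row := by
    rw [Fintype.linearIndependent_iff] at hx ⊢
    intro g hg
    refine hx g ?_
    apply b.repr.injective
    ext l
    rw [map_sum, map_zero, Finsupp.finset_sum_apply]
    by_cases hl : l ∈ s
    · have := congrFun hg ⟨l, hl⟩
      simpa [N, Matrix.row] using this
    · refine Finset.sum_eq_zero fun e _ => ?_
      have : l ∉ (b.repr (x e)).support := fun h => hl (Finset.mem_biUnion.2 ⟨e, Finset.mem_univ _, h⟩)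
      simp [Finsupp.notMem_support_iff.1 this]
  have hr : N.rank = p := by simpa using hN.rank_matrix
  obtain ⟨J, a, ha, hsp, hli⟩ := exists_linearIndependent' F N.col
  have hJ : Finite J := Finite.of_injective a ha
  have hJf := Fintype.ofFinite J
  have hc : Fintype.card J = p := by
    have h5 := finrank_span_eq_card hli
    rw [hsp] at h5
    rw [← h5]
    exact (Matrix.rank_eq_finrank_span_cols N).symm.trans hr
  let e := Fintype.equivFinOfCardEq hc
  refine ⟨fun l => a (e.symm l), ?_⟩
  have h2 : LinearIndependent F (Matrix.of fun e' l => b.repr (x e') (a (e.symm l))).col :=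
    hli.comp _ e.symm.injective
  rw [Matrix.linearIndependent_cols_iff_isUnit, Matrix.isUnit_iff_isUnit_det] at h2
  exact h2.ne_zero

variable {k F O σ J : Type*} [Field k] [Field F] [Algebra k F] [CommRing O] [Algebra k O] [Fintype σ]

/-- Lower semicontinuity of rank: a lower bound for the dimension of the span of a family of vectors
depending affinely on parameters which holds at some point over an extension field holds on
a nonempty open set. -/
theorem exists_poly_rank (a₀ : J → O) (a : σ → J → O) (t : σ → F) (p : ℕ)
    (hp : p ≤ Module.finrank F (Submodule.span F
      (Set.range fun e => (1 : F) ⊗ₜ[k] a₀ e + ∑ j, t j ⊗ₜ[k] a j e))) :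
    ∃ Q : MvPolynomial σ k, Q ≠ 0 ∧ ∀ c : σ → k, MvPolynomial.eval c Q ≠ 0 →
      ∀ W : Submodule k O, Module.Finite k W → (∀ e, a₀ e + ∑ j, c j • a j e ∈ W) →
        p ≤ Module.finrank k W := by
  classical
  let z : J → F ⊗[k] O := fun e => (1 : F) ⊗ₜ[k] a₀ e + ∑ j, t j ⊗ₜ[k] a j e
  obtain ⟨J', g, hg, hsp, hli⟩ := exists_linearIndependent' F z
  obtain ⟨x, hx⟩ : ∃ x : Fin p → J, LinearIndependent F (fun i => z (x i)) := by
    have hf : Nonempty (Fin p ↪ J') := by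
      rcases finite_or_infinite J' with hfin | hinf
      · have hJf := Fintype.ofFinite J'
        have h1 := finrank_span_eq_card hli
        rw [hsp] at h1
        rw [h1] at hp
        exact Function.Embedding.nonempty_of_card_le (by simpa using hp)
      · exact ⟨(Fin.valEmbedding).trans (Infinite.natEmbedding J')⟩
    obtain ⟨f⟩ := hf
    exact ⟨fun i => g (f i), hli.comp f f.injective⟩
  let b := Module.Basis.ofVectorSpace k O
  obtain ⟨i, hi⟩ := exists_det_ne_zero (b.baseChange F) _ hx
  let Mx : Matrix (Fin p) (Fin p) (MvPolynomial σ k) := Matrix.of fun e l =>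
    MvPolynomial.C (b.repr (a₀ (x e)) (i l)) +
      ∑ j, MvPolynomial.X j * MvPolynomial.C (b.repr (a j (x e)) (i l))
  refine ⟨Mx.det, fun h0 => hi ?_, fun c hc W hW hcW => ?_⟩
  · have h1 := congrArg (MvPolynomial.aeval t) h0
    rw [map_zero, AlgHom.map_det] at h1
    rw [← h1]
    congr 1
    ext e l
    simp [Mx, z, Algebra.smul_def, mul_comm, Finsupp.finset_sum_apply]
  · have h1 : LinearIndependent k (fun e => a₀ (x e) + ∑ j, c j • a j (x e)) := by
      rw [RingHom.map_det] at hc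
      have h2 : LinearIndependent k (((MvPolynomial.eval c).mapMatrix Mx).row) := by
        rw [Matrix.linearIndependent_rows_iff_isUnit, Matrix.isUnit_iff_isUnit_det]
        exact isUnit_iff_ne_zero.2 hc
      let φ : O →ₗ[k] (Fin p → k) := LinearMap.pi fun l => b.coord (i l)
      refine LinearIndependent.of_comp φ ?_
      convert h2 using 1
      ext e l
      simp [φ, Mx, Matrix.row, Finsupp.finset_sum_apply]
    have h3 : LinearIndependent k (fun e => (⟨_, hcW (x e)⟩ : W)) :=
      LinearIndependent.of_comp W.subtype h1
    simpa using h3.fintype_card_le_finrank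

end Minors

section CauchyDavenport

variable {κ Ω : Type*} [Field κ] [Field Ω] [Algebra κ Ω]

/-- Linear Cauchy--Davenport inequality. The hypothesis `H` expresses that multiplication by a
nonscalar element of `L` has no nonzero stable subspaces of dimension less than `s`. -/
theorem linear_cauchy_davenport (L : Submodule κ Ω) (s : ℕ)
    (H : ∀ α ∈ L, α ∉ (1 : Submodule κ Ω) → ∀ W : Submodule κ Ω, Module.Finite κ W → W ≠ ⊥ →
      (∀ x ∈ W, α * x ∈ W) → s ≤ Module.finrank κ W) (p : ℕ) :
    ∀ A B : Submodule κ Ω, Module.Finite κ A → Module.Finite κ B → Module.finrank κ A = p →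
      1 ∈ A → A ≤ L → B ≠ ⊥ →
      min s (Module.finrank κ A + Module.finrank κ B - 1) ≤ Module.finrank κ (A * B : Submodule κ Ω) := by
  induction p using Nat.strong_induction_on with
  | _ p ih =>
  intro A B hA hB hp h1 hAL hB0
  have hAB : Module.Finite κ (A * B : Submodule κ Ω) := Module.Finite.iff_fg.2
    ((Module.Finite.iff_fg.1 hA).mul (Module.Finite.iff_fg.1 hB))
  have hBAB : B ≤ A * B := fun x hx => by simpa using Submodule.mul_mem_mul h1 hx
  by_cases hA1 : A ≤ 1
  · have : Module.finrank κ A ≤ 1 := by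
      rw [Submodule.one_eq_span] at hA1
      exact (Submodule.finrank_mono hA1).trans ((finrank_span_le_card {(1 : Ω)}).trans (by simp))
    have := Submodule.finrank_mono hBAB
    omega
  by_cases hst : ∀ b ∈ B, ∀ a ∈ A, a * b ∈ B
  · obtain ⟨α, hα, hα1⟩ := Set.not_subset.1 hA1
    have := H α (hAL hα) hα1 B hB hB0 fun x hx => hst x hx α hα
    have := Submodule.finrank_mono hBAB
    omega
  · push Not at hst
    obtain ⟨b, hb, a, ha, hab⟩ := hst
    have hb0 : b ≠ 0 := by rintro rfl; exact hab (by simp)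
    -- Dyson transform: `(A, B)` is replaced by `(A ∩ b⁻¹ B, B + b A)`, which preserves the sum of the
    -- dimensions and does not enlarge the product.
    let A' : Submodule κ Ω := A ⊓ B.comap (LinearMap.mulRight κ b)
    have hA'A : A' ≤ A := inf_le_left
    have hA'f : Module.Finite κ A' := Submodule.finiteDimensional_of_le hA'A
    have hA'1 : 1 ∈ A' := ⟨h1, by simpa using hb⟩
    have hlt : Module.finrank κ A' < p := by
      rw [← hp]
      refine Submodule.finrank_lt_finrank_of_lt (lt_of_le_of_ne hA'A fun h => hab ?_)
      have : a ∈ A' := h ▸ ha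
      exact this.2
    have hsup : Module.finrank κ A + Module.finrank κ B =
        Module.finrank κ A' + Module.finrank κ (B ⊔ mulS b A : Submodule κ Ω) := by
      have e1 : B ⊓ mulS b A = mulS b A' := by
        ext x
        constructor
        · rintro ⟨hx, hx'⟩
          obtain ⟨y, hy, rfl⟩ := mem_mulS.1 hx'
          exact mem_mulS.2 ⟨y, ⟨hy, by simpa [mul_comm] using hx⟩, rfl⟩
        · intro hx
          obtain ⟨y, hy, rfl⟩ := mem_mulS.1 hx
          exact ⟨by simpa [mul_comm] using hy.2, mem_mulS.2 ⟨y, hy.1, rfl⟩⟩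
      have e2 := Submodule.finrank_sup_add_finrank_inf_eq B (mulS b A)
      rw [e1, finrank_mulS hb0, finrank_mulS hb0] at e2
      omega
    have hle : A' * (B ⊔ mulS b A) ≤ A * B := by
      rw [Submodule.mul_sup]
      refine sup_le (mul_le_mul' hA'A le_rfl) ?_
      refine Submodule.mul_le.2 fun x hx y hy => ?_
      obtain ⟨y, hy', rfl⟩ := mem_mulS.1 hy
      have hxb : x * b ∈ B := hx.2
      rw [← mul_assoc, mul_comm (x * b)]
      exact Submodule.mul_mem_mul hy' hxb
    have := ih _ hlt A' (B ⊔ mulS b A) hA'f inferInstance rfl hA'1 (hA'A.trans hAL)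
      (fun h => hB0 (eq_bot_iff.2 (h ▸ le_sup_left)))
    have := Submodule.finrank_mono hle
    omega

/-- The linear Cauchy–Davenport inequality, iterated: the powers of `U` grow by at least `ρ` at each
step until dimension `s` is reached, provided that no nonzero subspace of dimension less than `s`
is stable under a nonscalar element of `L`. -/
theorem finrank_pow_ge (L : Submodule κ Ω) (s : ℕ)
    (H : ∀ α ∈ L, α ∉ (1 : Submodule κ Ω) → ∀ W : Submodule κ Ω, Module.Finite κ W → W ≠ ⊥ →
      (∀ x ∈ W, α * x ∈ W) → s ≤ Module.finrank κ W)
    (U : Submodule κ Ω) [Module.Finite κ U] (h1 : 1 ∈ U) (hUL : U ≤ L) {ρ : ℕ}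
    (hρ : Module.finrank κ U = ρ + 1) (m : ℕ) :
    min s (m * ρ + 1) ≤ Module.finrank κ (U ^ m : Submodule κ Ω) := by
  induction m with
  | zero =>
    have : Module.finrank κ (1 : Submodule κ Ω) = 1 := by
      rw [Submodule.one_eq_span]; exact finrank_span_singleton one_ne_zero
    rw [pow_zero, this]
    omega
  | succ m ih =>
    have h := linear_cauchy_davenport L s H _ U (U ^ m) inferInstance inferInstance rfl h1 hUL
      (fun h => by
        have := one_mem_pow' h1 m
        rw [h] at this
        exact one_ne_zero ((Submodule.mem_bot κ).1 this))
    rw [pow_succ', add_mul]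
    omega

end CauchyDavenport

end SurfReg

end Part4a

/-! ### Stable subspaces and geometric integrality -/

section Part4b

open scoped TensorProduct

namespace SurfReg

section SatBase

variable {k O : Type*} [Field k] [CommRing O] [Algebra k O]

theorem Sat_baseChange_zero {F : Type*} [Field F] [Algebra k F] {V : Submodule k O}
    (h : Sat V 0 = 1) : Sat (V.baseChange F) 0 = 1 := by
  refine le_antisymm (fun e he => ?_) fun e he => ?_
  · obtain ⟨N, hN⟩ := mem_Sat.1 he
    rw [← baseChange_one', mem_baseChange_iff]
    intro l
    rw [← h]
    refine mem_Sat.2 ⟨N, fun g hg => ?_⟩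
    have h1 := hN ((1 : F) ⊗ₜ g) (by
      rw [← baseChange_pow]; exact Submodule.tmul_mem_baseChange_of_mem _ hg)
    rw [← baseChange_pow, mem_baseChange_iff] at h1
    have := h1 l
    rwa [coordL_mul] at this
  · have := pow_le_Sat (V.baseChange F) 0
    rw [pow_zero] at this
    exact this he

end SatBase

section Stable

variable {k O Ω : Type*} [Field k] [IsAlgClosed k] [CharZero k] [CommRing O] [IsDomain O]
  [Algebra k O] [Algebra.FiniteType k O] [Field Ω] [Algebra k Ω] [IsAlgClosed Ω] {n : ℕ}

/-- A finite-dimensional space stable under a nonscalar element of the function field is at least as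
large as every power of the space of sections of the generic hyperplane section. -/
theorem finrank_le_of_stable (ι : MvPolynomial (Fin n) O →ₐ[k] Ω) (hι : Function.Injective ι)
    (v : Fin n → O)
    {V : Submodule k O} (hV : Submodule.span k (Set.range (Fin.cons 1 v : Fin (n + 1) → O)) = V)
    {α : Ω} (hα : α ∈ gLam ι v) (hα' : α ∉ kap ι v) (W : Submodule (kap ι v) Ω)
    (hW : Module.Finite (kap ι v) W) (hW0 : W ≠ ⊥) (hst : ∀ x ∈ W, α * x ∈ W) (p : ℕ) :
    Module.finrank (kap ι v) (((V.baseChange (kap ι v)) ^ p).map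
      (gmu (kap ι v) (gj ι)).toLinearMap) ≤ Module.finrank (kap ι v) W := by
  have hint : IsIntegral (kap ι v) α :=
    isIntegral_of_smul_mem_submodule (M := Ω) W hW0 (Module.Finite.iff_fg.1 hW) α
      (fun x hx => hst x hx)
  obtain ⟨a, b, rfl⟩ := (mem_gLam ι v).1 hα
  have hb : ι b ≠ 0 := by
    intro hb
    rw [hb, div_zero] at hα'
    exact hα' (zero_mem _)
  have key := mem_adjoin_of_isAlgebraic ι hι v a b hb hint.isAlgebraic hα'
  let S : Subalgebra (kap ι v) Ω :=
    { carrier := {β | ∀ x ∈ W, β * x ∈ W}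
      mul_mem' := fun {β γ} hβ hγ x hx => by rw [mul_assoc]; exact hβ _ (hγ x hx)
      add_mem' := fun {β γ} hβ hγ x hx => by rw [add_mul]; exact add_mem (hβ _ hx) (hγ x hx)
      algebraMap_mem' := fun c x hx => by rw [← Algebra.smul_def]; exact W.smul_mem c hx }
  have hS : ∀ β ∈ IntermediateField.adjoin (kap ι v) {ι a / ι b}, β ∈ S := by
    intro β hβ
    rw [← IntermediateField.mem_toSubalgebra,
      IntermediateField.adjoin_simple_toSubalgebra_of_isAlgebraic hint.isAlgebraic] at hβ
    refine Algebra.adjoin_le (S := S) ?_ hβ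
    rintro _ rfl
    exact hst
  have hVS : (V.baseChange (kap ι v)).map (gmu (kap ι v) (gj ι)).toLinearMap ≤ S.toSubmodule := by
    rw [Submodule.map_le_iff_le_comap]
    rw [Submodule.baseChange_eq_span, Submodule.span_le]
    rintro _ ⟨x, hx, rfl⟩
    change gmu (kap ι v) (gj ι) ((1 : kap ι v) ⊗ₜ[k] x) ∈ S
    rw [gmu_tmul, map_one, one_mul]
    rw [← hV] at hx
    induction hx using Submodule.span_induction with
    | mem x hx =>
      obtain ⟨j, rfl⟩ := hx
      refine Fin.cases ?_ (fun j => ?_) j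
      · rw [Fin.cons_zero, map_one]; exact one_mem S
      · rw [Fin.cons_succ, gj_apply]; exact hS _ (key j)
    | zero => rw [map_zero]; exact zero_mem S
    | add x y _ _ hx hy => rw [map_add]; exact add_mem hx hy
    | smul c x _ hx =>
      rw [map_smul, ← algebraMap_smul (kap ι v) c]
      exact S.smul_mem hx _
  have hVS' : ((V.baseChange (kap ι v)) ^ p).map (gmu (kap ι v) (gj ι)).toLinearMap ≤
      S.toSubmodule := by
    have := Submodule.map_pow (V.baseChange (kap ι v)) (gmu (kap ι v) (gj ι)) p
    change Submodule.map (gmu (kap ι v) (gj ι)).toLinearMap _ = _ at this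
    rw [this]
    clear this
    induction p with
    | zero =>
      rw [pow_zero, Submodule.one_le]
      exact one_mem S
    | succ p ih =>
      rw [pow_succ, Submodule.mul_le]
      exact fun x hx y hy => S.mul_mem (ih hx) (hVS hy)
  obtain ⟨x, hx, hx0⟩ := W.ne_bot_iff.1 hW0
  rw [← finrank_mulS hx0]
  refine Submodule.finrank_mono fun z hz => ?_
  obtain ⟨β, hβ, rfl⟩ := mem_mulS.1 hz
  rw [mul_comm]
  exact hVS' hβ x hx

/-- If the Hilbert function of the generic hyperplane section is unbounded, then `kap ι v` is
algebraically closed in the function field of the section: by `mem_adjoin_of_isAlgebraic` a new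
algebraic element would generate the whole function field over `kap ι v`, which would then be
finite. -/
theorem algClosedIn_of_unbounded (ι : MvPolynomial (Fin n) O →ₐ[k] Ω) (hι : Function.Injective ι)
    (v : Fin n → O)
    {V : Submodule k O} (hV : Submodule.span k (Set.range (Fin.cons 1 v : Fin (n + 1) → O)) = V)
    (hub : ∀ B : ℕ, ∃ p, B < Module.finrank (kap ι v) (((V.baseChange (kap ι v)) ^ p).map
      (gmu (kap ι v) (gj ι)).toLinearMap)) :
    ∀ x ∈ gLam ι v, IsAlgebraic (kap ι v) x → x ∈ kap ι v := by
  intro x hx hx'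
  by_contra hcon
  let W := Subalgebra.toSubmodule (Algebra.adjoin (kap ι v) {x})
  have hW : Module.Finite (kap ι v) W := Module.Finite.iff_fg.2 hx'.isIntegral.fg_adjoin_singleton
  obtain ⟨p, hp⟩ := hub (Module.finrank (kap ι v) W)
  refine absurd (finrank_le_of_stable ι hι v hV hx hcon W hW ?_ ?_ p) (not_le.2 hp)
  · exact (Submodule.ne_bot_iff _).2 ⟨1, one_mem (Algebra.adjoin (kap ι v) {x}), one_ne_zero⟩
  · exact fun z hz => (Algebra.adjoin (kap ι v) {x}).mul_mem (Algebra.subset_adjoin rfl) hz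

end Stable
end SurfReg

end Part4b

/-! ### Growth of the Hilbert function of a curve -/

section Part4c

open scoped TensorProduct

universe u

namespace SurfReg

section Spec

variable {k O F : Type*} [Field k] [CommRing O] [Algebra k O] [Field F] [Algebra k F]

theorem span_one_tmul (V : Submodule k O) :
    Submodule.span F (Set.range fun e : V => (1 : F) ⊗ₜ[k] (e : O)) = V.baseChange F := by
  rw [Submodule.baseChange_eq_span]
  congr 1
  ext x
  simp

theorem span_gxi {n : ℕ} (t : Fin (n + 1) → F) (w : Fin (n + 1) → O) (V : Submodule k O) :
    Submodule.span F (Set.range fun e : V => ∑ j, t j ⊗ₜ[k] (w j * (e : O))) =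
      mulS (gxi t w) (V.baseChange F) := by
  rw [mulS, ← span_one_tmul V, Submodule.map_span, ← Set.range_comp]
  congr 2
  ext e
  simp [gxi, Finset.sum_mul]

/-- A generation statement for `V ^ (p + 1)` descends from a generic linear form to a special one. -/
theorem exists_special [Infinite k] {n : ℕ} (t : Fin (n + 1) → F) (w : Fin (n + 1) → O)
    {V : Submodule k O} [Module.Finite k V] (h1 : (1 : O) ∈ V) (hw : ∀ j, w j ∈ V) (p : ℕ)
    (h : (V.baseChange F) ^ (p + 1) ≤ (V.baseChange F) ^ p ⊔ mulS (gxi t w) ((V.baseChange F) ^ p)) :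
    ∃ y ∈ V, V ^ (p + 1) = V ^ p ⊔ mulS y (V ^ p) := by
  let a₀ : (V ^ p : Submodule k O) ⊕ (V ^ p : Submodule k O) → O := Sum.elim (fun e => e) fun _ => 0
  let a : Fin (n + 1) → (V ^ p : Submodule k O) ⊕ (V ^ p : Submodule k O) → O :=
    fun j => Sum.elim (fun _ => 0) fun e => w j * e
  have hspan : (V.baseChange F) ^ (p + 1) ≤ Submodule.span F
      (Set.range fun e => (1 : F) ⊗ₜ[k] a₀ e + ∑ j, t j ⊗ₜ[k] a j e) := by
    refine h.trans (sup_le ?_ ?_)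
    · rw [← baseChange_pow, ← span_one_tmul]
      refine Submodule.span_mono ?_
      rintro _ ⟨e, rfl⟩
      exact ⟨Sum.inl e, by simp [a₀, a]⟩
    · rw [← baseChange_pow, ← span_gxi]
      refine Submodule.span_mono ?_
      rintro _ ⟨e, rfl⟩
      exact ⟨Sum.inr e, by simp [a₀, a]⟩
  have hle : Submodule.span F
      (Set.range fun e => (1 : F) ⊗ₜ[k] a₀ e + ∑ j, t j ⊗ₜ[k] a j e) ≤
        (V ^ (p + 1)).baseChange F := by
    rw [Submodule.span_le]
    rintro _ ⟨e | e, rfl⟩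
    · simp only [a₀, a, Sum.elim_inl, TensorProduct.tmul_zero, Finset.sum_const_zero, add_zero]
      exact Submodule.tmul_mem_baseChange_of_mem _ (pow_mono' h1 (Nat.le_succ p) e.2)
    · simp only [a₀, a, Sum.elim_inr, TensorProduct.tmul_zero, zero_add]
      refine sum_mem fun j _ => Submodule.tmul_mem_baseChange_of_mem _ ?_
      rw [pow_succ']
      exact Submodule.mul_mem_mul (hw j) e.2
  have hfin : Module.Finite F (Submodule.span F
      (Set.range fun e => (1 : F) ⊗ₜ[k] a₀ e + ∑ j, t j ⊗ₜ[k] a j e)) :=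
    Submodule.finiteDimensional_of_le hle
  obtain ⟨Q, hQ, hQ'⟩ := exists_poly_rank a₀ a t (Module.finrank k (V ^ (p + 1) : Submodule k O)) (by
    rw [← finrank_baseChange (F := F), baseChange_pow]
    exact Submodule.finrank_mono hspan)
  obtain ⟨c, hc⟩ : ∃ c, MvPolynomial.eval c Q ≠ 0 := by
    by_contra! hcon
    exact hQ (MvPolynomial.funext fun c => by simpa using hcon c)
  have hy : ∑ j, c j • w j ∈ V := sum_mem fun j _ => V.smul_mem _ (hw j)
  refine ⟨∑ j, c j • w j, hy, ?_⟩
  refine (Submodule.eq_of_le_of_finrank_le (sup_le (pow_mono' h1 (Nat.le_succ p)) ?_)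
    (hQ' c hc _ inferInstance ?_)).symm
  · intro x hx
    obtain ⟨e, he, rfl⟩ := mem_mulS.1 hx
    change _ ∈ V ^ (p + 1)
    rw [pow_succ']
    exact Submodule.mul_mem_mul hy he
  · rintro (e | e)
    · refine Submodule.mem_sup_left ?_
      simp [a₀, a]
    · refine Submodule.mem_sup_right (mem_mulS.2 ⟨e, e.2, ?_⟩)
      simp [a₀, a, Finset.sum_mul]

/-- Once `V ^ (p + 1)` is generated by `1` and `y` over `V ^ p`, so are the higher powers. -/
theorem gen_mono {V : Submodule k O} {y : O} {p : ℕ}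
    (h : V ^ (p + 1) = V ^ p ⊔ mulS y (V ^ p)) :
    ∀ q, p ≤ q → V ^ (q + 1) = V ^ q ⊔ mulS y (V ^ q) := by
  intro q hq
  induction q, hq using Nat.le_induction with
  | base => exact h
  | succ q _ ih =>
    have h2 := congrArg (· * V) ih
    rwa [Submodule.sup_mul, mulS_mul, ← pow_succ, ← pow_succ] at h2

end Spec

section Curve

variable {k O : Type*} [Field k] [IsAlgClosed k] [CharZero k] [CommRing O] [IsDomain O]
  [Algebra k O] [Algebra.FiniteType k O]

/-- The growth statements of `curve_facts`, for a section with the property that every space stable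
under a nonscalar element of `L` is at least as large as the spaces of restricted forms. -/
theorem curve_facts_aux {κ Ω : Type*} [Field Ω] [Field κ] [Algebra k κ] [Algebra κ Ω] {ρ : ℕ}
    (v : Fin (ρ + 1) → O)
    (hw : LinearIndependent k (Fin.cons 1 v : Fin (ρ + 1 + 1) → O))
    {V : Submodule k O} (hV : Submodule.span k (Set.range (Fin.cons 1 v : Fin (ρ + 1 + 1) → O)) = V)
    (t : Fin (ρ + 1 + 1) → κ) (μ : κ ⊗[k] O →ₐ[κ] Ω)
    (hsec : IsSection (V.baseChange κ) (gxi t (Fin.cons 1 v : Fin (ρ + 1 + 1) → O)) μ)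
    (L : Submodule κ Ω) (hL : ∀ x, μ x ∈ L)
    (H : ∀ α ∈ L, α ∉ (1 : Submodule κ Ω) → ∀ W : Submodule κ Ω, Module.Finite κ W → W ≠ ⊥ →
      (∀ x ∈ W, α * x ∈ W) → ∀ p : ℕ,
      Module.finrank κ (((V.baseChange κ) ^ p).map μ.toLinearMap) ≤ Module.finrank κ W)
    {s : ℕ} (hs : ∃ N, ∀ p, N ≤ p →
      Module.finrank k (V ^ (p + 1) : Submodule k O) = Module.finrank k (V ^ p : Submodule k O) + s) :
    (∀ p, Module.finrank k (V ^ p : Submodule k O) + min s ((p + 1) * ρ + 1) ≤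
      Module.finrank k (V ^ (p + 1) : Submodule k O)) ∧
    ∀ m, s ≤ m * ρ + 1 → ∀ p, m ≤ p → 
      Module.finrank k (V ^ (p + 1) : Submodule k O) = Module.finrank k (V ^ p : Submodule k O) + s →
      Module.finrank k (V ^ (p + 2) : Submodule k O) =
        Module.finrank k (V ^ (p + 1) : Submodule k O) + s ∧
      ∃ y ∈ V, V ^ (p + 1) = V ^ p ⊔ mulS y (V ^ p) := by
  have hfin : Module.Finite k V := by
    rw [← hV]; exact FiniteDimensional.span_of_finite k (Set.finite_range _)
  have h1 : (1 : O) ∈ V := hV ▸ Submodule.subset_span ⟨0, rfl⟩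
  have hwV : ∀ j, (Fin.cons 1 v : Fin (ρ + 1 + 1) → O) j ∈ V :=
    fun j => hV ▸ Submodule.subset_span ⟨j, rfl⟩
  set 𝒱 : Submodule κ (κ ⊗[k] O) := V.baseChange κ with h𝒱
  set ξ : κ ⊗[k] O := gxi t (Fin.cons 1 v : Fin (ρ + 1 + 1) → O) with hξ
  have hdom : IsDomain (κ ⊗[k] O) := isDomain_tensor
  have hfin' : Module.Finite κ 𝒱 := finite_baseChange V
  have hdim : ∀ p, Module.finrank κ (𝒱 ^ p : Submodule κ (κ ⊗[k] O)) =
      Module.finrank k (V ^ p : Submodule k O) := fun p => by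
    rw [h𝒱, ← baseChange_pow, finrank_baseChange]
  let U := 𝒱.map μ.toLinearMap
  have hU : ∀ p, (𝒱 ^ p).map μ.toLinearMap = U ^ p := fun p => Submodule.map_pow 𝒱 μ p
  have hUfin : Module.Finite κ U := inferInstance
  have h1U : (1 : Ω) ∈ U := ⟨1, hsec.one_mem, map_one μ⟩
  have hadd : ∀ p, Module.finrank κ (U ^ (p + 1) : Submodule κ Ω) +
      Module.finrank k (V ^ p : Submodule k O) ≤ Module.finrank k (V ^ (p + 1) : Submodule k O) := by
    intro p
    have := hsec.finrank_map_add_le p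
    rwa [hU, hdim, hdim] at this
  have hiff : ∀ p, Module.finrank κ (U ^ (p + 1) : Submodule κ Ω) +
      Module.finrank k (V ^ p : Submodule k O) = Module.finrank k (V ^ (p + 1) : Submodule k O) ↔
      ∀ f ∈ 𝒱 ^ (p + 1), μ f = 0 → f ∈ mulS ξ (𝒱 ^ p) := by
    intro p
    have := hsec.finrank_map_add_eq_iff p
    rwa [hU, hdim, hdim] at this
  obtain ⟨N, hN⟩ := hs
  obtain ⟨k₀, hk₀⟩ := hsec.eventually
  have hUs : ∀ p, k₀ ≤ p → N ≤ p → Module.finrank κ (U ^ (p + 1) : Submodule κ Ω) = s := by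
    intro p hp hp'
    have := (hiff p).2 (hk₀ p hp)
    have := hN p hp'
    omega
  have hUle : ∀ p, Module.finrank κ (U ^ p : Submodule κ Ω) ≤ s := by
    intro p
    rw [← hUs (max p (max k₀ N)) (by omega) (by omega)]
    exact Submodule.finrank_mono (pow_mono' h1U (by omega))
  have hrank1 : Module.finrank κ U = ρ + 1 := by
    have h3 := (hiff 0).2 (hsec.ker_one (Sat_baseChange_zero (Sat_zero h1)))
    have h4 : Module.finrank k (V ^ (0 + 1) : Submodule k O) = ρ + 1 + 1 := by
      rw [zero_add, pow_one, ← hV, finrank_span_eq_card hw, Fintype.card_fin]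
    have h5 : Module.finrank k (V ^ 0 : Submodule k O) = 1 := by
      rw [pow_zero, Submodule.one_eq_span]; exact finrank_span_singleton one_ne_zero
    rw [zero_add, pow_one] at h3
    rw [zero_add] at h4
    omega
  have hge : ∀ p, min s (p * ρ + 1) ≤ Module.finrank κ (U ^ p : Submodule κ Ω) := by
    refine fun p => finrank_pow_ge L s ?_ U h1U ?_ hrank1 p
    · intro α hα hα1 W hW hW0 hst
      have := H α hα hα1 W hW hW0 hst (k₀ + N + 1)
      rwa [hU, hUs _ (by omega) (by omega)] at this
    · rintro _ ⟨x, -, rfl⟩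
      exact hL x
  refine ⟨fun p => ?_, fun m hm p hp hps => ?_⟩
  · have := hge (p + 1)
    have := hadd p
    omega
  · have hUeq : ∀ q, m ≤ q → Module.finrank κ (U ^ q : Submodule κ Ω) = s := by
      intro q hq
      refine le_antisymm (hUle q) ?_
      have h2 := hge q
      have h3 : m * ρ ≤ q * ρ := Nat.mul_le_mul_right _ hq
      rwa [min_eq_left (by omega)] at h2
    have hUU : U ^ p = U ^ (p + 1) :=
      Submodule.eq_of_le_of_finrank_eq (pow_mono' h1U (Nat.le_succ p))
        (by rw [hUeq p hp, hUeq (p + 1) (by omega)])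
    have hJ := (hiff p).1 (by rw [hUeq (p + 1) (by omega)]; omega)
    have hgen : 𝒱 ^ (p + 1) ≤ 𝒱 ^ p ⊔ mulS ξ (𝒱 ^ p) := by
      intro f hf
      have h2 : μ f ∈ U ^ (p + 1) := by rw [← hU]; exact ⟨f, hf, rfl⟩
      rw [← hUU, ← hU] at h2
      obtain ⟨g, hg, hgf⟩ := h2
      change μ g = μ f at hgf
      have h3 := hJ (f - g) (sub_mem hf (pow_mono' hsec.one_mem (Nat.le_succ p) hg))
        (by rw [map_sub, hgf, sub_self])
      rw [← sub_add_cancel f g, add_comm]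
      exact Submodule.add_mem_sup hg h3
    refine ⟨?_, exists_special t _ h1 hwV p hgen⟩
    have h4 := (hiff (p + 1)).2 ?_
    · have := hUeq (p + 1 + 1) (by omega)
      change Module.finrank k (V ^ (p + 1 + 1) : Submodule k O) = _
      omega
    · intro f hf hf0
      have h5 : f ∈ 𝒱 ^ (p + 1) ⊔ mulS ξ (𝒱 ^ (p + 1)) := by
        have h6 := mul_le_mul' hgen (le_refl 𝒱)
        rw [Submodule.sup_mul, mulS_mul, ← pow_succ, ← pow_succ] at h6
        exact h6 hf
      obtain ⟨g, hg, x, hx, rfl⟩ := Submodule.mem_sup.1 h5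
      obtain ⟨z, hz, rfl⟩ := mem_mulS.1 hx
      refine add_mem (mulS_mono (pow_mono' hsec.one_mem (Nat.le_succ p)) (hJ g hg ?_)) hx
      rwa [map_add, map_mul, hsec.map_zero, zero_mul, add_zero] at hf0

/-- The generic hyperplane section lives over a field containing the polynomial ring in the
coefficients of the hyperplane. -/
theorem exists_iota (k : Type*) (O : Type u) [Field k] [CommRing O] [IsDomain O] [Algebra k O] (n : ℕ) :
    ∃ (Ω : Type u) (_ : Field Ω) (_ : Algebra k Ω) (_ : IsAlgClosed Ω)
      (ι : MvPolynomial (Fin n) O →ₐ[k] Ω), Function.Injective ι := by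
  refine ⟨AlgebraicClosure (FractionRing (MvPolynomial (Fin n) O)), inferInstance, inferInstance,
    inferInstance, IsScalarTower.toAlgHom k (MvPolynomial (Fin n) O) _, ?_⟩
  change Function.Injective (algebraMap (MvPolynomial (Fin n) O)
    (AlgebraicClosure (FractionRing (MvPolynomial (Fin n) O))))
  rw [IsScalarTower.algebraMap_eq _ (FractionRing (MvPolynomial (Fin n) O)) _]
  exact (algebraMap (FractionRing (MvPolynomial (Fin n) O)) _).injective.comp
    (IsFractionRing.injective _ _)

/-- Growth of the Hilbert function of a curve. Its first difference dominates the Hilbert function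
of the generic hyperplane section, which is at least `min s (p * ρ + 1)`; once the generic section
imposes `s` conditions, a first difference equal to `s` persists, and then `V ^ (p + 1)` is
`V ^ p + y V ^ p` for a suitable linear form `y`. -/
theorem curve_facts {ρ : ℕ} (v : Fin (ρ + 1) → O)
    (hw : LinearIndependent k (Fin.cons 1 v : Fin (ρ + 1 + 1) → O))
    {V : Submodule k O} (hV : Submodule.span k (Set.range (Fin.cons 1 v : Fin (ρ + 1 + 1) → O)) = V)
    {s : ℕ} (hs : ∃ N, ∀ p, N ≤ p →
      Module.finrank k (V ^ (p + 1) : Submodule k O) = Module.finrank k (V ^ p : Submodule k O) + s) :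
    (∀ p, Module.finrank k (V ^ p : Submodule k O) + min s ((p + 1) * ρ + 1) ≤
      Module.finrank k (V ^ (p + 1) : Submodule k O)) ∧
    ∀ m, s ≤ m * ρ + 1 → ∀ p, m ≤ p → 
      Module.finrank k (V ^ (p + 1) : Submodule k O) = Module.finrank k (V ^ p : Submodule k O) + s →
      Module.finrank k (V ^ (p + 2) : Submodule k O) =
        Module.finrank k (V ^ (p + 1) : Submodule k O) + s ∧
      ∃ y ∈ V, V ^ (p + 1) = V ^ p ⊔ mulS y (V ^ p) := by
  obtain ⟨Ω, _, _, _, ι, hι⟩ := exists_iota k O (ρ + 1)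
  refine curve_facts_aux v hw hV (gt ι v) (gmu (kap ι v) (gj ι))
    (isSection_kap ι hι (Nat.succ_pos _) v hw hV) (gLam ι v).toSubalgebra.toSubmodule
    (gmu_mem_gLam ι v) (fun α hα hα1 W hW hW0 hst p =>
      finrank_le_of_stable ι hι v hV hα (fun h => hα1 ?_) W hW hW0 hst p) hs
  exact Submodule.mem_one.2 ⟨⟨α, h⟩, rfl⟩

end Curve
end SurfReg

end Part4c

/-! ### Products of linear forms vanishing at points -/

section Part5a

open scoped TensorProduct

namespace SurfReg

section Product

variable {F A J : Type*} [Field F] [CommRing A] [Algebra F A]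

/-- Linear forms in `V` vanishing at the point `χ`. -/
def vanish (V : Submodule F A) (χ : A →ₐ[F] F) : Submodule F A := V ⊓ LinearMap.ker χ.toLinearMap

theorem mem_vanish {V : Submodule F A} {χ : A →ₐ[F] F} {x : A} :
    x ∈ vanish V χ ↔ x ∈ V ∧ χ x = 0 := Iff.rfl

theorem prod_mem_pow {V : Submodule F A} (S : Finset J) (f : J → A) (h : ∀ j ∈ S, f j ∈ V) :
    ∏ j ∈ S, f j ∈ V ^ S.card := by
  classical
  induction S using Finset.induction_on with
  | empty => rw [Finset.prod_empty, Finset.card_empty, pow_zero]; exact Submodule.one_le.1 le_rfl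
  | insert a S ha ih =>
    rw [Finset.prod_insert ha, Finset.card_insert_of_notMem ha, pow_succ']
    exact Submodule.mul_mem_mul (h a (Finset.mem_insert_self _ _))
      (ih fun j hj => h j (Finset.mem_insert_of_mem hj))

/-- Points separated by `V` can be interpolated by products of `card - 1` elements of `V`. -/
theorem exists_interp {V : Submodule F A} (h1 : (1 : A) ∈ V) (χ : J → A →ₐ[F] F) (S : Finset J)
    (hd : ∀ i ∈ S, ∀ j ∈ S, i ≠ j → ∃ x ∈ V, χ i x ≠ χ j x) (g : J → F) (hS : S.Nonempty) :
    ∃ h ∈ V ^ (S.card - 1), ∀ j ∈ S, χ j h = g j := by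
  classical
  have hsep : ∀ i ∈ S, ∀ j ∈ S, i ≠ j → ∃ x ∈ V, χ i x = 1 ∧ χ j x = 0 := by
    intro i hi j hj hij
    obtain ⟨x, hx, hne⟩ := hd i hi j hj hij
    have hne' : χ i x - χ j x ≠ 0 := sub_ne_zero.2 hne
    refine ⟨(χ i x - χ j x)⁻¹ • (x - χ j x • 1), V.smul_mem _ (sub_mem hx (V.smul_mem _ h1)), ?_, ?_⟩
    · simp [hne']
    · simp
  choose! x hxV hx1 hx0 using hsep
  refine ⟨∑ i ∈ S, g i • ∏ j ∈ S.erase i, x i j, sum_mem fun i hi => Submodule.smul_mem _ _ ?_, ?_⟩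
  · rw [← Finset.card_erase_of_mem hi]
    exact prod_mem_pow _ _ fun j hj => hxV i hi j (Finset.mem_of_mem_erase hj)
      (Finset.ne_of_mem_erase hj).symm
  · intro l hl
    rw [map_sum, Finset.sum_eq_single l]
    · rw [map_smul, map_prod, Finset.prod_eq_one, smul_eq_mul, mul_one]
      intro j hj
      exact hx1 l hl j (Finset.mem_of_mem_erase hj) (Finset.ne_of_mem_erase hj).symm
    · intro i hi hil
      rw [map_smul, map_prod, Finset.prod_eq_zero (Finset.mem_erase.2 ⟨hil.symm, hl⟩), smul_zero]
      exact hx0 i hi l hl hil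
    · exact fun h => absurd hl h

theorem map_eq_zero_of_mem_prod {V : Submodule F A} (χ : J → A →ₐ[F] F) (S : Finset J) {f : A}
    (hf : f ∈ ∏ j ∈ S, vanish V (χ j)) : ∀ j ∈ S, χ j f = 0 := by
  classical
  intro j hj
  rw [← Finset.mul_prod_erase _ _ hj] at hf
  induction hf using Submodule.mul_induction_on' with
  | mem_mul_mem x hx y hy => rw [map_mul, (mem_vanish.1 hx).2, zero_mul]
  | add x _ y _ hx hy => rw [map_add, hx, hy, add_zero]

/-- A polynomial of degree at most `card S` vanishing on a finite set `S` of points is a combination of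
products of `card S` linear forms, one vanishing at each of the points. -/
theorem mem_prod_vanish [Infinite F] {V : Submodule F A} (h1 : (1 : A) ∈ V) (χ : J → A →ₐ[F] F)
    (S : Finset J) :
    (∀ i ∈ S, ∀ j ∈ S, i ≠ j → ∃ x ∈ V, χ i x ≠ χ j x) →
    ∀ f ∈ V ^ S.card, (∀ j ∈ S, χ j f = 0) → f ∈ ∏ j ∈ S, vanish V (χ j) := by
  classical
  induction S using Finset.induction_on with
  | empty => intro _ f hf _; simpa using hf
  | insert p S hp ih =>
    intro hd f hf hf0
    have ih' := ih fun i hi j hj => hd i (Finset.mem_insert_of_mem hi) j (Finset.mem_insert_of_mem hj)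
    have hdS : ∀ i ∈ S, ∀ j ∈ S, i ≠ j → ∃ x ∈ V, χ i x ≠ χ j x := fun i hi j hj =>
      hd i (Finset.mem_insert_of_mem hi) j (Finset.mem_insert_of_mem hj)
    rw [Finset.prod_insert hp]
    rw [Finset.card_insert_of_notMem hp] at hf
    have hVsup : ∀ x ∈ V, x - χ p x • 1 ∈ vanish V (χ p) := fun x hx =>
      ⟨sub_mem hx (V.smul_mem _ h1), by simp⟩
    -- a form of degree `n + 1` vanishing at `χ p` lies in `vanish V (χ p) * V ^ n`
    have hmul : ∀ n, ∀ g ∈ V ^ (n + 1), g - χ p g • 1 ∈ vanish V (χ p) * V ^ n := by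
      intro n
      induction n with
      | zero =>
        intro g hg
        rw [zero_add, pow_one] at hg
        simpa using hVsup g hg
      | succ n ihn =>
        intro g hg
        rw [pow_succ'] at hg
        induction hg using Submodule.mul_induction_on' with
        | mem_mul_mem x hx y hy =>
          have e1 : x * y - χ p (x * y) • 1 =
              (x - χ p x • 1) * y + χ p x • (y - χ p y • 1) := by
            rw [map_mul]
            simp only [Algebra.smul_def, map_mul]
            ring
          rw [e1]
          exact add_mem (Submodule.mul_mem_mul (hVsup x hx) hy) (Submodule.smul_mem _ _
            (mul_le_mul' le_rfl (pow_mono' h1 (Nat.le_succ n)) (ihn y hy)))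
        | add x _ y _ hx hy =>
          have e1 : x + y - χ p (x + y) • 1 = (x - χ p x • 1) + (y - χ p y • 1) := by
            rw [map_add, add_smul]; abel
          rw [e1]
          exact add_mem hx hy
    have hf1 : f ∈ vanish V (χ p) * V ^ S.card := by
      have := hmul _ f hf
      rwa [hf0 p (Finset.mem_insert_self _ _), zero_smul, sub_zero] at this
    obtain ⟨u, hu, hu0⟩ : ∃ u ∈ vanish V (χ p), ∀ j : S, χ j u ≠ 0 := by
      refine Module.Dual.exists_forall_mem_ne_zero_of_forall_exists (vanish V (χ p))
        (fun j : S => (χ j).toLinearMap) fun j => ?_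
      obtain ⟨x, hx, hne⟩ := hd j (Finset.mem_insert_of_mem j.2) p (Finset.mem_insert_self _ _)
        (fun h => hp (h ▸ j.2))
      refine ⟨_, hVsup x hx, ?_⟩
      simpa [sub_eq_zero] using hne
    have key : ∀ f ∈ vanish V (χ p) * V ^ S.card, ∃ g ∈ V ^ S.card,
        f - u * g ∈ vanish V (χ p) * ∏ j ∈ S, vanish V (χ j) := by
      intro f hf
      induction hf using Submodule.mul_induction_on' with
      | mem_mul_mem x hx y hy =>
        rcases S.eq_empty_or_nonempty with rfl | hS
        · exact ⟨0, zero_mem _, by simpa using Submodule.mul_mem_mul hx hy⟩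
        · obtain ⟨h, hh, hh'⟩ := exists_interp h1 χ S hdS (fun j => (χ j u)⁻¹ * χ j y) hS
          have hc : S.card = S.card - 1 + 1 := (Nat.sub_add_cancel hS.card_pos).symm
          have hmem : ∀ z ∈ V, z * h ∈ V ^ S.card := fun z hz => by
            rw [hc, pow_succ']; exact Submodule.mul_mem_mul hz hh
          refine ⟨x * h, hmem x hx.1, ?_⟩
          have e1 : x * y - u * (x * h) = x * (y - u * h) := by ring
          rw [e1]
          refine Submodule.mul_mem_mul hx (ih' _ (sub_mem hy (hmem u hu.1)) fun j hj => ?_)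
          rw [map_sub, map_mul, hh' j hj, mul_inv_cancel_left₀ (hu0 ⟨j, hj⟩), sub_self]
      | add x _ y _ hx hy =>
        obtain ⟨g, hg, hg'⟩ := hx
        obtain ⟨g', hg2, hg2'⟩ := hy
        refine ⟨g + g', add_mem hg hg2, ?_⟩
        have e1 : x + y - u * (g + g') = (x - u * g) + (y - u * g') := by ring
        rw [e1]
        exact add_mem hg' hg2'
    obtain ⟨g, hg, hg'⟩ := key f hf1
    have hg0 : ∀ j ∈ S, χ j g = 0 := by
      intro j hj
      have h2 := map_eq_zero_of_mem_prod χ (insert p S) (f := f - u * g)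
        (by rwa [Finset.prod_insert hp]) j (Finset.mem_insert_of_mem hj)
      rw [map_sub, hf0 j (Finset.mem_insert_of_mem hj), map_mul, zero_sub, neg_eq_zero] at h2
      exact (mul_eq_zero.1 h2).resolve_left (hu0 ⟨j, hj⟩)
    rw [← sub_add_cancel f (u * g)]
    exact add_mem hg' (Submodule.mul_mem_mul hu (ih' g hg hg0))

end Product

section Det

variable {F A : Type*} [Field F] [CommRing A] [Algebra F A]

/-- Changing the factors of a product by multiples of `z` changes the product by a multiple of `z`. -/
theorem prod_add_sub_mem {J : Type*} {V : Submodule F A} {z : A} (hz : z ∈ V) (S : Finset J)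
    (a : J → A) (b : J → F) (ha : ∀ j ∈ S, a j ∈ V) :
    ∏ j ∈ S, (a j + b j • z) - ∏ j ∈ S, a j ∈ mulS z (V ^ (S.card - 1)) := by
  classical
  induction S using Finset.induction_on with
  | empty => simp
  | insert p S hp ih =>
    have ih' := ih fun j hj => ha j (Finset.mem_insert_of_mem hj)
    rw [Finset.prod_insert hp, Finset.prod_insert hp, Finset.card_insert_of_notMem hp,
      Nat.add_sub_cancel]
    have e1 : (a p + b p • z) * ∏ j ∈ S, (a j + b j • z) - a p * ∏ j ∈ S, a j =
        a p * (∏ j ∈ S, (a j + b j • z) - ∏ j ∈ S, a j) +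
          z * (b p • ∏ j ∈ S, (a j + b j • z)) := by
      simp only [Algebra.smul_def]; ring
    rw [e1]
    refine add_mem ?_ (mul_mem_mulS (Submodule.smul_mem _ _ (prod_mem_pow _ _ fun j hj =>
      add_mem (ha j (Finset.mem_insert_of_mem hj)) (V.smul_mem _ hz))))
    rcases S.eq_empty_or_nonempty with rfl | hS
    · simp
    · obtain ⟨g, hg, hg'⟩ := mem_mulS.1 ih'
      rw [← hg', mul_left_comm]
      refine mul_mem_mulS ?_
      rw [← Nat.sub_add_cancel hS.card_pos, pow_succ']
      exact Submodule.mul_mem_mul (ha p (Finset.mem_insert_self _ _)) hg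

/-- If `l j * w j = z * ∑ β j i • w i` for a nonzero vector `w`, then the product of the
`l j` is divisible by `z` inside the powers of `V`. -/
theorem prod_mem_of_eigen [IsDomain A] {V : Submodule F A} {z : A} (hz : z ∈ V) {s : ℕ}
    (l : Fin s → A) (hl : ∀ j, l j ∈ V) (w : Fin s → A) (hw : w ≠ 0) (β : Fin s → Fin s → F)
    (h : ∀ j, l j * w j = z * ∑ i, β j i • w i) : ∏ j, l j ∈ mulS z (V ^ (s - 1)) := by
  classical
  let M : Matrix (Fin s) (Fin s) A := Matrix.of fun i j => (if i = j then l j else 0) + (-β i j) • z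
  have hdet : M.det = 0 := by
    refine Matrix.exists_mulVec_eq_zero_iff.1 ⟨w, hw, ?_⟩
    ext j
    simp only [M, Matrix.mulVec, dotProduct, Matrix.of_apply, add_mul, ite_mul, zero_mul,
      Finset.sum_add_distrib, Finset.sum_ite_eq, Finset.mem_univ, if_true, Pi.zero_apply]
    rw [h j, Finset.mul_sum, ← Finset.sum_add_distrib]
    refine Finset.sum_eq_zero fun i _ => ?_
    simp only [Algebra.smul_def, map_neg]; ring
  rw [Matrix.det_apply] at hdet
  have h1 : ∏ j, l j = ∑ σ : Equiv.Perm (Fin s), Equiv.Perm.sign σ •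
      ∏ j, (if σ j = j then l j else 0) := by
    rw [Finset.sum_eq_single 1]
    · simp
    · intro σ _ hσ
      obtain ⟨j, hj⟩ : ∃ j, σ j ≠ j := by
        by_contra! hcon
        exact hσ (Equiv.ext hcon)
      rw [Finset.prod_eq_zero (Finset.mem_univ j) (if_neg hj), smul_zero]
    · simp
  have h3 : -∏ j, l j = ∑ σ : Equiv.Perm (Fin s), Equiv.Perm.sign σ • (∏ j, M (σ j) j -
      ∏ j, (if σ j = j then l j else 0)) := by
    simp only [smul_sub, Finset.sum_sub_distrib]
    rw [hdet, zero_sub, ← h1]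
  rw [← neg_mem_iff, h3]
  refine sum_mem fun σ _ => ?_
  have h2 := prod_add_sub_mem hz Finset.univ (fun j => if σ j = j then l j else 0)
    (fun j => -β (σ j) j) (fun j _ => by
      by_cases hj : σ j = j
      · simpa [hj] using hl j
      · simp [hj])
  rw [Finset.card_fin] at h2
  rw [Units.smul_def]
  exact zsmul_mem h2 _

end Det
end SurfReg

end Part5a

/-! ### The bound in degree `s` from separating points -/

section Part5b

open scoped TensorProduct

namespace SurfReg

section Eigen

variable {K O F : Type*} [Field K] [IsAlgClosed K] [CommRing O] [IsDomain O] [Algebra K O]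
  [Algebra.FiniteType K O] [Field F] [Algebra K F] [Infinite F]

/-- The bound in degree `s`, given `s` embeddings `τ j` of `O` in a field over the same value of `y`,
separated by `V`. Let `z = y - c`. If `l j` vanishes at the point `τ j` for each `j`, then
`l j * w j` is `z` times a combination of the `w i`, where `w` is the basis dual to the points; the
determinant of this system is zero, so `∏ l j` is a multiple of `z`. Products of this kind
span the elements of `V ^ s` vanishing at all the points, a space of codimension at most `s`. -/
theorem finrank_pow_le_of_embeddings {V : Submodule K O} [Module.Finite K V] (h1 : (1 : O) ∈ V)
    {y : O} (hy : y ∈ V)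
    {s : ℕ} (hs : 1 ≤ s) (τ : Fin s → O →ₐ[K] F) (c : F) (hc : ∀ j, τ j y = c)
    (hd : ∀ i j, i ≠ j → ∃ x ∈ V, τ i x ≠ τ j x) (b : Fin s → O)
    (hb : ∀ l ∈ V, ∀ i, ∃ A B : Fin s → K, l * b i = ∑ m, A m • b m + y * ∑ m, B m • b m)
    (hdet : (Matrix.of fun j i => τ j (b i)).det ≠ 0) :
    Module.finrank K (V ^ s : Submodule K O) ≤ Module.finrank K (V ^ (s - 1) : Submodule K O) + s := by
  classical
  have hdom : IsDomain (F ⊗[K] O) := isDomain_tensor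
  let 𝒱 : Submodule F (F ⊗[K] O) := V.baseChange F
  have hfin : Module.Finite F 𝒱 := finite_baseChange V
  have h1' : (1 : F ⊗[K] O) ∈ 𝒱 := one_mem_baseChange h1
  let χ : Fin s → F ⊗[K] O →ₐ[F] F := fun j => gmu F (τ j)
  have hχ : ∀ j a x, χ j (a ⊗ₜ x) = a * τ j x := fun j a x => by
    simp [χ, gmu_tmul]
  let Y : F ⊗[K] O := 1 ⊗ₜ y
  have hχY : ∀ j, χ j Y = c := fun j => by simp [Y, hχ, hc]
  let z : F ⊗[K] O := Y - c • 1
  have hz : z ∈ 𝒱 := sub_mem (Submodule.tmul_mem_baseChange_of_mem _ hy) (𝒱.smul_mem _ h1')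
  let W : Submodule F (F ⊗[K] O) := Submodule.span F (Set.range fun i => (1 : F) ⊗ₜ[K] b i)
  let T : Matrix (Fin s) (Fin s) F := Matrix.of fun j i => τ j (b i)
  have hmemW : ∀ x, x ∈ W ↔ ∃ f : Fin s → F, ∑ i, f i • ((1 : F) ⊗ₜ[K] b i) = x :=
    fun x => Submodule.mem_span_range_iff_exists_fun F
  have hχsum : ∀ (f : Fin s → F) j, χ j (∑ i, f i • ((1 : F) ⊗ₜ[K] b i)) = (T.mulVec f) j := by
    intro f j
    simp [map_sum, hχ, T, Matrix.mulVec, dotProduct, mul_comm]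
  have hinj : ∀ x ∈ W, (∀ j, χ j x = 0) → x = 0 := by
    intro x hx h0
    obtain ⟨f, rfl⟩ := (hmemW x).1 hx
    have : T.mulVec f = 0 := by
      ext j; rw [← hχsum]; exact h0 j
    have hf : f = 0 := Matrix.eq_zero_of_mulVec_eq_zero hdet this
    simp [hf]
  -- the basis of `W` dual to the points
  have hdual : ∀ j, ∃ w ∈ W, ∀ i, χ i w = if i = j then 1 else 0 := by
    intro j
    refine ⟨_, (hmemW _).2 ⟨T⁻¹.mulVec (Pi.single j 1), rfl⟩, fun i => ?_⟩
    rw [hχsum, Matrix.mulVec_mulVec, Matrix.mul_nonsing_inv _ (isUnit_iff_ne_zero.2 hdet),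
      Matrix.one_mulVec, Pi.single_apply]
  choose w hwW hw using hdual
  have hw0 : w ≠ 0 := by
    intro h0
    have := hw ⟨0, hs⟩ ⟨0, hs⟩
    rw [h0] at this
    simp at this
  have hexp : ∀ x ∈ W, x = ∑ i, χ i x • w i := by
    intro x hx
    rw [← sub_eq_zero]
    refine hinj _ (sub_mem hx (sum_mem fun i _ => W.smul_mem _ (hwW i))) fun j => ?_
    simp [map_sum, hw]
  have hlW : ∀ l ∈ 𝒱, ∀ x ∈ W, ∃ A ∈ W, ∃ B ∈ W, l * x = A + Y * B := by
    have hle : 𝒱 * W ≤ W ⊔ mulS Y W := by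
      change V.baseChange F * W ≤ _
      rw [Submodule.baseChange_eq_span, Submodule.span_mul_span, Submodule.span_le]
      rintro _ ⟨_, ⟨l, hl, rfl⟩, _, ⟨i, rfl⟩, rfl⟩
      obtain ⟨A, B, hAB⟩ := hb l hl i
      have hAW : ∀ A : Fin s → K, (1 : F) ⊗ₜ[K] (∑ m, A m • b m) ∈ W := by
        intro A
        rw [TensorProduct.tmul_sum]
        refine sum_mem fun m _ => ?_
        rw [TensorProduct.tmul_smul, ← algebraMap_smul F (A m)]
        exact W.smul_mem _ (Submodule.subset_span ⟨m, rfl⟩)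
      change ((1 : F) ⊗ₜ[K] l) * ((1 : F) ⊗ₜ[K] b i) ∈ W ⊔ mulS Y W
      rw [Algebra.TensorProduct.tmul_mul_tmul, one_mul, hAB, TensorProduct.tmul_add]
      refine Submodule.add_mem_sup (hAW A) (mem_mulS.2 ⟨_, hAW B, ?_⟩)
      simp [Y, Algebra.TensorProduct.tmul_mul_tmul]
    intro l hl x hx
    obtain ⟨A, hA, x', hx', he⟩ := Submodule.mem_sup.1 (hle (Submodule.mul_mem_mul hl hx))
    obtain ⟨B, hB, rfl⟩ := mem_mulS.1 hx'
    exact ⟨A, hA, B, hB, he.symm⟩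
  have heig : ∀ j, ∀ l ∈ 𝒱, χ j l = 0 → ∃ β : Fin s → F, l * w j = z * ∑ i, β i • w i := by
    intro j l hl hl0
    obtain ⟨A, hA, B, hB, he⟩ := hlW l hl (w j) (hwW j)
    have h0 : A + c • B = 0 := by
      refine hinj _ (add_mem hA (W.smul_mem _ hB)) fun i => ?_
      have h2 := congrArg (χ i) he
      rw [map_mul, map_add, map_mul, hχY, hw] at h2
      rw [map_add, map_smul, smul_eq_mul, ← h2]
      by_cases hij : i = j
      · subst hij; simp [hl0]
      · simp [hij]
    refine ⟨fun i => χ i B, ?_⟩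
    rw [← hexp B hB, he]
    have : A = - (c • B) := eq_neg_of_add_eq_zero_left h0
    rw [this]
    simp only [z, Algebra.smul_def]
    ring
  have hprod : ∏ j, vanish 𝒱 (χ j) ≤ mulS z (𝒱 ^ (s - 1)) := by
    have hspan : ∀ S : Finset (Fin s), ∏ j ∈ S, vanish 𝒱 (χ j) =
        Submodule.span F {x | ∃ l : Fin s → F ⊗[K] O, (∀ j, l j ∈ vanish 𝒱 (χ j)) ∧
          x = ∏ j ∈ S, l j} := by
      intro S
      induction S using Finset.induction_on with
      | empty =>
        rw [Finset.prod_empty, Submodule.one_eq_span]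
        congr 1
        ext x
        simp only [Set.mem_singleton_iff, Finset.prod_empty, Set.mem_setOf_eq]
        exact ⟨fun h => ⟨0, fun j => zero_mem _, h⟩, fun ⟨_, _, h⟩ => h⟩
      | insert p S hp ih =>
        rw [Finset.prod_insert hp, ih]
        apply le_antisymm
        · rw [Submodule.mul_le]
          intro u hu x hx
          induction hx using Submodule.span_induction with
          | mem x hx =>
            obtain ⟨l, hl, rfl⟩ := hx
            refine Submodule.subset_span ⟨Function.update l p u, fun j => ?_, ?_⟩
            · by_cases hj : j = p
              · subst hj; simpa using hu
              · simpa [hj] using hl j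
            · rw [Finset.prod_insert hp, Function.update_self]
              congr 1
              refine Finset.prod_congr rfl fun j hj => ?_
              rw [Function.update_of_ne (fun h : j = p => hp (h ▸ hj))]
          | zero => rw [mul_zero]; exact zero_mem _
          | add x y _ _ hx hy => rw [mul_add]; exact add_mem hx hy
          | smul a x _ hx => rw [mul_smul_comm]; exact Submodule.smul_mem _ _ hx
        · rw [Submodule.span_le]
          rintro _ ⟨l, hl, rfl⟩
          rw [Finset.prod_insert hp]
          exact Submodule.mul_mem_mul (hl p) (Submodule.subset_span ⟨l, hl, rfl⟩)
    rw [hspan, Submodule.span_le]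
    rintro _ ⟨l, hl, rfl⟩
    choose β hβ using fun j => heig j (l j) (hl j).1 (hl j).2
    exact prod_mem_of_eigen hz l (fun j => (hl j).1) w hw0 β hβ
  let Φ : F ⊗[K] O →ₗ[F] (Fin s → F) := LinearMap.pi fun j => (χ j).toLinearMap
  have hker : 𝒱 ^ s ⊓ LinearMap.ker Φ ≤ mulS z (𝒱 ^ (s - 1)) := by
    rintro f ⟨hf, hf0⟩
    refine hprod (mem_prod_vanish h1' χ Finset.univ (fun i _ j _ hij => ?_) f ?_ fun j _ => ?_)
    · obtain ⟨x, hx, hne⟩ := hd i j hij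
      exact ⟨1 ⊗ₜ x, Submodule.tmul_mem_baseChange_of_mem _ hx, by simpa [hχ] using hne⟩
    · simpa using hf
    · exact congrFun hf0 j
  have hdim : ∀ p, Module.finrank F (𝒱 ^ p : Submodule F (F ⊗[K] O)) =
      Module.finrank K (V ^ p : Submodule K O) := fun p => by
    change Module.finrank F ((V.baseChange F) ^ p : Submodule F (F ⊗[K] O)) = _
    rw [← baseChange_pow, finrank_baseChange]
  rw [← hdim, ← hdim, ← finrank_map_add_inf_ker Φ (𝒱 ^ s), add_comm]
  refine add_le_add ((Submodule.finrank_mono hker).trans (Submodule.finrank_map_le _ _)) ?_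
  exact (Submodule.finrank_le _).trans (by simp)

end Eigen
end SurfReg

end Part5b

/-! ### Free bases over `K[y]` -/

section Part5c

namespace SurfReg

section Stable

variable {K O : Type*} [Field K] [CommRing O] [IsDomain O] [Algebra K O]

/-- Beyond degree `q`, division by `y` lowers the degree by one: multiplication by `y` is injective
on the quotients of consecutive powers of `V`, since both have dimension `s`. -/
theorem mem_pow_of_mul_mem {V : Submodule K O} [Module.Finite K V] (h1 : (1 : O) ∈ V)
    {y : O} (hy : y ∈ V) (hy0 : y ≠ 0) {s q : ℕ}
    (ha : ∀ p, q ≤ p → Module.finrank K (V ^ (p + 1) : Submodule K O)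
      = Module.finrank K (V ^ p : Submodule K O) + s)
    (hg : ∀ p, q ≤ p → V ^ (p + 1) = V ^ p ⊔ mulS y (V ^ p)) {p : ℕ} (hp : q ≤ p) {N : ℕ} {u : O}
    (hu : u ∈ V ^ N) (hyu : y * u ∈ V ^ (p + 1)) : u ∈ V ^ p := by
  have base : ∀ p, q ≤ p → ∀ u ∈ V ^ (p + 1), y * u ∈ V ^ (p + 1) → u ∈ V ^ p := by
    intro p hp u hu hyu
    have hle : mulS y (V ^ p) ≤ V ^ (p + 1) ⊓ mulS y (V ^ (p + 1)) := by
      refine le_inf ?_ (mulS_mono (pow_mono' h1 (Nat.le_succ p)))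
      intro x hx
      obtain ⟨v, hv, rfl⟩ := mem_mulS.1 hx
      rw [pow_succ']; exact Submodule.mul_mem_mul hy hv
    have hfin : Module.Finite K (V ^ (p + 1) ⊓ mulS y (V ^ (p + 1)) : Submodule K O) :=
      Submodule.finiteDimensional_of_le inf_le_left
    have hdim := Submodule.finrank_sup_add_finrank_inf_eq (V ^ (p + 1)) (mulS y (V ^ (p + 1)))
    rw [← hg (p + 1) (by omega), finrank_mulS hy0, ha (p + 1) (by omega), ha p hp] at hdim
    have heq := Submodule.eq_of_le_of_finrank_eq hle (by rw [finrank_mulS hy0]; omega)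
    have : y * u ∈ mulS y (V ^ p) := by
      rw [heq]; exact ⟨hyu, mul_mem_mulS hu⟩
    obtain ⟨v, hv, hvu⟩ := mem_mulS.1 this
    rwa [← mul_left_cancel₀ hy0 hvu]
  induction N with
  | zero => exact pow_mono' h1 (Nat.zero_le p) hu
  | succ N ih =>
    by_cases h : N + 1 ≤ p
    · exact pow_mono' h1 h hu
    · exact ih (base N (by omega) u hu (pow_mono' h1 (by omega : p + 1 ≤ N + 1) hyu))

end Stable

section Points

variable {K O : Type*} [Field K] [IsAlgClosed K] [CommRing O] [IsDomain O] [Algebra K O]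
  [Algebra.FiniteType K O]

/-- Finitely many points separate the elements of a finite dimensional space of functions. -/
theorem exists_points (d : ℕ) : ∀ (U : Submodule K O) [Module.Finite K U],
    Module.finrank K U ≤ d →
    ∃ χ : Fin d → O →ₐ[K] K, ∀ x ∈ U, (∀ i, χ i x = 0) → x = 0 := by
  induction d with
  | zero =>
    intro U _ hU
    have : U = ⊥ := Submodule.finrank_eq_zero.1 (by omega)
    refine ⟨Fin.elim0, fun x hx _ => ?_⟩
    simpa [this] using hx
  | succ d ih =>
    intro U _ hU
    obtain ⟨x₀, χ₀, hx⟩ : ∃ x₀, ∃ χ₀ : O →ₐ[K] K, (U ≠ ⊥ → x₀ ∈ U ∧ χ₀ x₀ ≠ 0) := by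
      by_cases h : U = ⊥
      · obtain ⟨χ, _⟩ := exists_point (K := K) (A := O) one_ne_zero
        exact ⟨0, χ, fun h' => absurd h h'⟩
      · obtain ⟨x, hx, hx0⟩ := Submodule.exists_mem_ne_zero_of_ne_bot h
        obtain ⟨χ, hχ⟩ := exists_point (K := K) hx0
        exact ⟨x, χ, fun _ => ⟨hx, hχ⟩⟩
    let U' := U ⊓ LinearMap.ker χ₀.toLinearMap
    have hfin : Module.Finite K U' := Submodule.finiteDimensional_of_le inf_le_left
    have hU' : Module.finrank K U' ≤ d := by
      by_cases h : U = ⊥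
      · have : U' = ⊥ := by simp [U', h]
        rw [this]; simp
      · have hlt : U' < U := lt_of_le_of_ne inf_le_left fun he => by
          have := hx h
          have h2 : x₀ ∈ U' := he ▸ this.1
          exact this.2 h2.2
        have := Submodule.finrank_lt_finrank_of_lt hlt
        omega
    obtain ⟨χ, hχ⟩ := ih U' hU'
    refine ⟨Fin.cons χ₀ χ, fun x hxU h => hχ x ⟨hxU, ?_⟩ fun i => ?_⟩
    · simpa using h 0
    · simpa using h i.succ

/-- In the stable range the powers of `V` are, up to finite dimension, a free module over
`K[y]` of rank `s`. -/
theorem exists_free_basis {V : Submodule K O} [Module.Finite K V] (h1 : (1 : O) ∈ V)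
    {y : O} (hy : y ∈ V) (hy0 : y ≠ 0) {s q : ℕ}
    (ha : ∀ p, q ≤ p → Module.finrank K (V ^ (p + 1) : Submodule K O)
      = Module.finrank K (V ^ p : Submodule K O) + s)
    (hg : ∀ p, q ≤ p → V ^ (p + 1) = V ^ p ⊔ mulS y (V ^ p)) :
    ∃ b : Fin s → O,
      (∀ l ∈ V, ∀ i, ∃ A B : Fin s → K, l * b i = ∑ m, A m • b m + y * ∑ m, B m • b m) ∧
      ∀ P : Fin s → Polynomial K, ∑ i, Polynomial.aeval y (P i) * b i = 0 → ∀ i, P i = 0 := by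
  classical
  obtain ⟨χ, hχ⟩ := exists_points (Module.finrank K (V ^ q : Submodule K O)) (V ^ q) le_rfl
  let Φ : O →ₗ[K] (Fin (Module.finrank K (V ^ q : Submodule K O)) → K) :=
    LinearMap.pi fun j => (χ j).toLinearMap
  have hΦ0 : ∀ x, Φ x = 0 ↔ ∀ j, χ j x = 0 := fun x => by
    simp [Φ, funext_iff]
  have hinj : ∀ x ∈ V ^ q, Φ x = 0 → x = 0 := fun x hx h => hχ x hx ((hΦ0 x).1 h)
  have hsurj : ∀ z, ∃ u ∈ V ^ q, Φ u = z := by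
    have hi : Function.Injective (Φ.domRestrict (V ^ q)) := by
      rw [injective_iff_map_eq_zero]
      intro x hx
      exact Subtype.ext (hinj x x.2 hx)
    have hs : Function.Surjective (Φ.domRestrict (V ^ q)) :=
      (LinearMap.injective_iff_surjective_of_finrank_eq_finrank (by simp)).1 hi
    intro z
    obtain ⟨u, hu⟩ := hs z
    exact ⟨u, u.2, hu⟩
  let Z : Submodule K O := LinearMap.ker Φ
  have hZmul : ∀ a, ∀ z ∈ Z, a * z ∈ Z := fun a z hz => by
    rw [LinearMap.mem_ker, hΦ0] at hz ⊢
    intro j; rw [map_mul, hz j, mul_zero]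
  let W : Submodule K O := V ^ (q + 1) ⊓ Z
  have hWfin : Module.Finite K W := Submodule.finiteDimensional_of_le inf_le_left
  have hsplit : ∀ x ∈ V ^ (q + 1), ∃ u ∈ V ^ q, ∃ w ∈ W, x = u + w := fun x hx => by
    obtain ⟨u, hu, hux⟩ := hsurj (Φ x)
    refine ⟨u, hu, x - u, ⟨sub_mem hx (pow_mono' h1 (Nat.le_succ q) hu), ?_⟩, by ring⟩
    change Φ (x - u) = 0
    rw [map_sub, hux, sub_self]
  have hWs : Module.finrank K W = s := by
    have h := finrank_map_add_inf_ker Φ (V ^ (q + 1))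
    have htop : (V ^ (q + 1)).map Φ = ⊤ := by
      rw [eq_top_iff]
      intro z _
      obtain ⟨u, hu, huz⟩ := hsurj z
      exact ⟨u, pow_mono' h1 (Nat.le_succ q) hu, huz⟩
    rw [htop, finrank_top, Module.finrank_fin_fun, ha q le_rfl] at h
    exact Nat.add_left_cancel h
  have hlW : ∀ l ∈ V, ∀ w ∈ W, ∃ w₁ ∈ W, ∃ w₂ ∈ W, l * w = w₁ + y * w₂ := by
    intro l hl w hw
    have hmem : l * w ∈ V ^ (q + 1 + 1) := by
      rw [pow_succ']; exact Submodule.mul_mem_mul hl hw.1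
    rw [hg (q + 1) (by omega)] at hmem
    obtain ⟨a, haV, c, hc, hac⟩ := Submodule.mem_sup.1 hmem
    obtain ⟨c, hcV, rfl⟩ := mem_mulS.1 hc
    obtain ⟨u, hu, w₂, hw₂, rfl⟩ := hsplit c hcV
    refine ⟨a + y * u, ⟨add_mem haV ?_, ?_⟩, w₂, hw₂, ?_⟩
    · rw [pow_succ']; exact Submodule.mul_mem_mul hy hu
    · have : a + y * u = l * w - y * w₂ := by rw [← hac]; ring
      rw [this]
      exact sub_mem (hZmul _ _ hw.2) (hZmul _ _ hw₂.2)
    · rw [← hac]; ring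
  let bb : Module.Basis (Fin s) K W := Module.finBasisOfFinrankEq K W hWs
  have hrep : ∀ w ∈ W, ∃ A : Fin s → K, w = ∑ m, A m • (bb m : O) := fun w hw => by
    refine ⟨bb.repr ⟨w, hw⟩, ?_⟩
    have := congrArg (Subtype.val) (bb.sum_repr ⟨w, hw⟩)
    rw [Submodule.coe_sum] at this
    exact this.symm
  refine ⟨fun i => bb i, fun l hl i => ?_, ?_⟩
  · obtain ⟨w₁, hw₁, w₂, hw₂, h⟩ := hlW l hl (bb i) (bb i).2
    obtain ⟨A, hA⟩ := hrep w₁ hw₁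
    obtain ⟨B, hB⟩ := hrep w₂ hw₂
    exact ⟨A, B, by rw [h, hA, hB]⟩
  · have hV1 : ∀ (P : Polynomial K), ∃ N, Polynomial.aeval y P ∈ V ^ N := fun P => by
      refine ⟨P.natDegree, ?_⟩
      rw [Polynomial.aeval_eq_sum_range]
      refine sum_mem fun i hi => Submodule.smul_mem _ _ ?_
      exact pow_mono' h1 (Nat.lt_succ_iff.1 (Finset.mem_range.1 hi)) (Submodule.pow_mem_pow V hy i)
    have key : ∀ n : ℕ, ∀ P : Fin s → Polynomial K, (∀ i, (P i).degree < n) →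
        ∑ i, Polynomial.aeval y (P i) * (bb i : O) = 0 → ∀ i, P i = 0 := by
      intro n
      induction n with
      | zero =>
        intro P hP _ i
        have := hP i
        rw [← Polynomial.degree_eq_bot]
        simpa [Nat.WithBot.lt_zero_iff] using this
      | succ n ih =>
        intro P hP h0
        let u : O := ∑ i, Polynomial.aeval y (P i).divX * (bb i : O)
        let w : O := ∑ i, (P i).coeff 0 • (bb i : O)
        have hsum : w + y * u = 0 := by
          rw [← h0, Finset.mul_sum, ← Finset.sum_add_distrib]
          refine Finset.sum_congr rfl fun i _ => ?_
          conv_rhs => rw [← Polynomial.divX_mul_X_add (P i)]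
          simp [Algebra.smul_def]
          ring
        have hwW : w ∈ W := sum_mem fun i _ => Submodule.smul_mem _ _ (bb i).2
        choose N hN using hV1
        have huN : u ∈ V ^ ((Finset.univ.sup fun i => N (P i).divX) + (q + 1)) := by
          refine sum_mem fun i _ => pow_add_mem ?_ (bb i).2.1
          exact pow_mono' h1 (Finset.le_sup (f := fun i => N (P i).divX) (Finset.mem_univ i)) (hN _)
        have huZ : u ∈ Z := sum_mem fun i _ => hZmul _ _ (bb i).2.2
        have hyu : y * u ∈ V ^ (q + 1) := by
          rw [eq_neg_of_add_eq_zero_right hsum]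
          exact neg_mem hwW.1
        have hu0 : u = 0 := hinj u (mem_pow_of_mul_mem h1 hy hy0 ha hg le_rfl huN hyu) huZ
        have hw0 : w = 0 := by rw [hu0, mul_zero, add_zero] at hsum; exact hsum
        have hc : ∀ i, (P i).coeff 0 = 0 := by
          have hli := Fintype.linearIndependent_iff.1 bb.linearIndependent (fun i => (P i).coeff 0)
          refine hli (Subtype.ext ?_)
          simpa [w] using hw0
        have hd : ∀ i, (P i).divX = 0 := by
          refine ih (fun i => (P i).divX) (fun i => ?_) hu0
          by_cases hP0 : P i = 0
          · simp [hP0]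
          · have h2 := Polynomial.degree_divX_lt hP0
            have h3 := hP i
            refine lt_of_lt_of_le h2 ?_
            rw [Polynomial.degree_eq_natDegree hP0] at h3 ⊢
            have : (P i).natDegree < n + 1 := by exact_mod_cast h3
            exact_mod_cast Nat.lt_succ_iff.1 this
        intro i
        rw [← Polynomial.divX_mul_X_add (P i), hd i, hc i]; simp
    intro P h0
    refine key (Finset.univ.sup (fun i => (P i).natDegree) + 1) P (fun i => ?_) h0
    refine lt_of_le_of_lt Polynomial.degree_le_natDegree ?_
    have := Finset.le_sup (f := fun i => (P i).natDegree) (Finset.mem_univ i)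
    exact_mod_cast Nat.lt_succ_of_le this

end Points

end SurfReg

end Part5c

/-! ### Embeddings of the function field -/

section Part5d

namespace SurfReg

section FieldPart

variable {K O E L F : Type*} [Field K] [CommRing O] [IsDomain O] [Algebra K O]
  [Field E] [Algebra K E] [Field L] [Algebra K L] [Algebra O L] [IsFractionRing O L]
  [IsScalarTower K O L] [Algebra E L] [IsScalarTower K E L]

/-- A family free over `K[y]` stays independent over the field `E = K(y)`. -/
theorem linearIndependent_of_free {y : O} (yE : E) (hyE : algebraMap E L yE = algebraMap O L y)
    (hE : ∀ e : E, ∃ P Q : Polynomial K, Polynomial.aeval yE Q ≠ 0 ∧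
      e * Polynomial.aeval yE Q = Polynomial.aeval yE P)
    {s : ℕ} (b : Fin s → O)
    (hfree : ∀ P : Fin s → Polynomial K, ∑ i, Polynomial.aeval y (P i) * b i = 0 → ∀ i, P i = 0) :
    LinearIndependent E fun i => algebraMap O L (b i) := by
  classical
  rw [Fintype.linearIndependent_iff]
  intro e he
  choose P Q hQ hPQ using hE
  have hev : ∀ R : Polynomial K, algebraMap E L (Polynomial.aeval yE R)
      = algebraMap O L (Polynomial.aeval y R) := fun R => by
    rw [← Polynomial.aeval_algebraMap_apply, ← Polynomial.aeval_algebraMap_apply, hyE]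
  let P' : Fin s → Polynomial K := fun i => P (e i) * ∏ j ∈ Finset.univ.erase i, Q (e j)
  let D : E := ∏ j, Polynomial.aeval yE (Q (e j))
  have hD : D ≠ 0 := Finset.prod_ne_zero_iff.2 fun j _ => hQ _
  have hP' : ∀ i, e i * D = Polynomial.aeval yE (P' i) := fun i => by
    simp only [P', D, map_mul, map_prod, ← hPQ]
    rw [← Finset.mul_prod_erase Finset.univ _ (Finset.mem_univ i), mul_assoc]
  have h0 : ∑ i, Polynomial.aeval y (P' i) * b i = 0 := by
    apply IsFractionRing.injective O L
    rw [map_zero, map_sum]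
    have : algebraMap E L D * ∑ i, e i • algebraMap O L (b i) = 0 := by rw [he, mul_zero]
    rw [← this, Finset.mul_sum]
    refine Finset.sum_congr rfl fun i _ => ?_
    rw [map_mul, ← hev, ← hP', Algebra.smul_def, map_mul]; ring
  intro i
  have := hP' i
  rw [hfree P' h0 i, map_zero] at this
  exact (mul_eq_zero.1 this).resolve_right hD

/-- A `K(y)`-span that is stable under multiplication by generators of `O` is the whole function field. -/
theorem span_eq_top_of_stable {V : Submodule K O} (hV : Algebra.adjoin K (V : Set O) = ⊤) {y : O}
    (yE : E) (hyE : algebraMap E L yE = algebraMap O L y)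
    {s : ℕ} (hs : 1 ≤ s) (b : Fin s → O)
    (hb : ∀ l ∈ V, ∀ i, ∃ A B : Fin s → K, l * b i = ∑ m, A m • b m + y * ∑ m, B m • b m)
    (hli : LinearIndependent E fun i => algebraMap O L (b i)) :
    Submodule.span E (Set.range fun i => algebraMap O L (b i)) = ⊤ := by
  classical
  set S := Submodule.span E (Set.range fun i => algebraMap O L (b i)) with hS
  have hbS : ∀ i, algebraMap O L (b i) ∈ S := fun i => Submodule.subset_span ⟨i, rfl⟩
  have hb0 : algebraMap O L (b ⟨0, hs⟩) ≠ 0 := hli.ne_zero _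
  have hKS : ∀ A : Fin s → K, algebraMap O L (∑ m, A m • b m) ∈ S := fun A => by
    rw [map_sum]
    refine sum_mem fun m _ => ?_
    rw [Algebra.smul_def, map_mul, ← IsScalarTower.algebraMap_apply,
      IsScalarTower.algebraMap_apply K E L, ← Algebra.smul_def]
    exact Submodule.smul_mem _ _ (hbS m)
  let A' : Subalgebra E L :=
    { carrier := { x | ∀ n ∈ S, x * n ∈ S }
      mul_mem' := fun {a b} ha hb n hn => by rw [mul_assoc]; exact ha _ (hb _ hn)
      add_mem' := fun {a b} ha hb n hn => by rw [add_mul]; exact add_mem (ha _ hn) (hb _ hn)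
      algebraMap_mem' := fun r n hn => by
        rw [← Algebra.smul_def]; exact Submodule.smul_mem _ _ hn }
  have hVA : ∀ l ∈ V, algebraMap O L l ∈ A' := by
    intro l hl n hn
    induction hn using Submodule.span_induction with
    | mem x hx =>
      obtain ⟨i, rfl⟩ := hx
      obtain ⟨A, B, h⟩ := hb l hl i
      simp only
      rw [← map_mul, h, map_add, map_mul, ← hyE, ← Algebra.smul_def]
      exact add_mem (hKS A) (Submodule.smul_mem _ _ (hKS B))
    | zero => rw [mul_zero]; exact zero_mem _
    | add x y _ _ hx hy => rw [mul_add]; exact add_mem hx hy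
    | smul a x _ hx => rw [mul_smul_comm]; exact Submodule.smul_mem _ _ hx
  have hOA : ∀ x : O, algebraMap O L x ∈ A' := by
    intro x
    have hx : x ∈ Algebra.adjoin K (V : Set O) := by rw [hV]; trivial
    induction hx using Algebra.adjoin_induction with
    | mem x hx => exact hVA x hx
    | algebraMap r =>
      rw [← IsScalarTower.algebraMap_apply, IsScalarTower.algebraMap_apply K E L]
      exact A'.algebraMap_mem _
    | add x y _ _ hx hy => rw [map_add]; exact add_mem hx hy
    | mul x y _ _ hx hy => rw [map_mul]; exact mul_mem hx hy
  have hSne : S ≠ ⊥ := fun h => hb0 (by simpa [h] using hbS ⟨0, hs⟩)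
  have hint : ∀ x ∈ A', IsIntegral E x := fun x hx =>
    isIntegral_of_smul_mem_submodule S hSne (Submodule.fg_span (Set.finite_range _)) x hx
  have hinv : ∀ x ∈ A', x⁻¹ ∈ A' := fun x hx =>
    A'.inv_mem_of_algebraic (x := ⟨x, hx⟩) (hint x hx).isAlgebraic
  have hall : ∀ x : L, x ∈ A' := fun x => by
    obtain ⟨a, c, _, rfl⟩ := IsFractionRing.div_surjective (A := O) x
    rw [div_eq_mul_inv]
    exact mul_mem (hOA a) (hinv _ (hOA c))
  rw [eq_top_iff]
  intro x _
  have := hall (x / algebraMap O L (b ⟨0, hs⟩)) _ (hbS ⟨0, hs⟩)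
  rwa [div_mul_cancel₀ _ hb0] at this

variable [CharZero K] [IsAlgClosed K] [Algebra.FiniteType K O] [Field F] [Algebra K F]
  [Algebra E F] [IsScalarTower K E F] [IsAlgClosed F]

/-- The bound in degree `s` from a basis of the function field `L` over `E = K(y)`: the `s` embeddings
of `L` over `E` in a larger field serve as the points. -/
theorem finrank_pow_le_of_field {V : Submodule K O} [Module.Finite K V] (h1 : (1 : O) ∈ V)
    (hV : Algebra.adjoin K (V : Set O) = ⊤) {y : O} (hy : y ∈ V)
    (yE : E) (hyE : algebraMap E L yE = algebraMap O L y)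
    (hE : ∀ e : E, ∃ P Q : Polynomial K, Polynomial.aeval yE Q ≠ 0 ∧
      e * Polynomial.aeval yE Q = Polynomial.aeval yE P)
    {s : ℕ} (hs : 1 ≤ s) (b : Fin s → O)
    (hb : ∀ l ∈ V, ∀ i, ∃ A B : Fin s → K, l * b i = ∑ m, A m • b m + y * ∑ m, B m • b m)
    (hfree : ∀ P : Fin s → Polynomial K, ∑ i, Polynomial.aeval y (P i) * b i = 0 → ∀ i, P i = 0)
    (iLF : L →ₐ[E] F) :
    Module.finrank K (V ^ s : Submodule K O) ≤ Module.finrank K (V ^ (s - 1) : Submodule K O) + s := by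
  classical
  have hli := linearIndependent_of_free (L := L) yE hyE hE b hfree
  have htop := span_eq_top_of_stable hV yE hyE hs b hb hli
  let B : Module.Basis (Fin s) E L := Module.Basis.mk hli htop.ge
  have hB : ∀ i, B i = algebraMap O L (b i) := fun i => by simp [B]
  have hfd : FiniteDimensional E L := Module.Basis.finiteDimensional_of_finite B
  have hfr : Module.finrank E L = s := by rw [Module.finrank_eq_card_basis B]; simp
  have hcz : CharZero E := charZero_of_injective_algebraMap (algebraMap K E).injective
  have hsep : Algebra.IsSeparable E L := inferInstance
  have hcard := AlgHom.card E L F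
  have hF : Infinite F := IsAlgClosed.instInfinite
  let e : Fin s ≃ (L →ₐ[E] F) := (Fintype.equivFinOfCardEq (hcard.trans hfr)).symm
  have hdisc := Algebra.discr_not_zero_of_basis E B
  have hdisc2 := Algebra.discr_eq_det_embeddingsMatrixReindex_pow_two E F B e
  let τ : Fin s → O →ₐ[K] F := fun j =>
    ((e j).restrictScalars K).comp (IsScalarTower.toAlgHom K O L)
  have hτ : ∀ j x, τ j x = e j (algebraMap O L x) := fun j x => rfl
  refine finrank_pow_le_of_embeddings h1 hy hs τ (algebraMap E F yE) (fun j => ?_)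
    (fun i j hij => ?_) b hb ?_
  · rw [hτ, ← hyE]; exact (e j).commutes yE
  · by_contra! hcon
    apply hij
    apply e.injective
    have hO : τ i = τ j := by
      have : ∀ x : O, τ i x = τ j x := by
        intro x
        have hx : x ∈ Algebra.adjoin K (V : Set O) := by rw [hV]; trivial
        induction hx using Algebra.adjoin_induction with
        | mem x hx => exact hcon x hx
        | algebraMap r => rw [AlgHom.commutes, AlgHom.commutes]
        | add x y _ _ hx hy => rw [map_add, map_add, hx, hy]
        | mul x y _ _ hx hy => rw [map_mul, map_mul, hx, hy]
      exact AlgHom.ext this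
    ext x
    obtain ⟨a, c, _, rfl⟩ := IsFractionRing.div_surjective (A := O) x
    rw [map_div₀, map_div₀, ← hτ, ← hτ, ← hτ, ← hτ, hO]
  · intro hdet
    apply hdisc
    apply (algebraMap E F).injective
    rw [map_zero, hdisc2]
    have : (Algebra.embeddingsMatrixReindex E F B e) = (Matrix.of fun j i => τ j (b i)).transpose := by
      ext i j
      simp [Algebra.embeddingsMatrixReindex, hτ, hB]
    rw [this, Matrix.det_transpose, hdet]
    ring

end FieldPart

section Curve

variable {K O : Type*} [Field K] [CommRing O] [IsDomain O] [Algebra K O]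
  [CharZero K] [IsAlgClosed K] [Algebra.FiniteType K O]

/-- If the Hilbert function of a curve eventually grows by `s`, then its growth from degree `s - 1` to
degree `s` is at most `s`. -/
theorem finrank_pow_le {V : Submodule K O} [Module.Finite K V] (h1 : (1 : O) ∈ V)
    (hV : Algebra.adjoin K (V : Set O) = ⊤) {y : O} (hy : y ∈ V) {s q : ℕ} (hs : 1 ≤ s)
    (ha : ∀ p, q ≤ p → Module.finrank K (V ^ (p + 1) : Submodule K O)
      = Module.finrank K (V ^ p : Submodule K O) + s)
    (hg : ∀ p, q ≤ p → V ^ (p + 1) = V ^ p ⊔ mulS y (V ^ p)) :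
    Module.finrank K (V ^ s : Submodule K O) ≤ Module.finrank K (V ^ (s - 1) : Submodule K O) + s := by
  have hy0 : y ≠ 0 := by
    rintro rfl
    have h := hg q le_rfl
    have h0 : mulS 0 (V ^ q) ≤ V ^ q := fun x hx => by
      obtain ⟨v, _, rfl⟩ := mem_mulS.1 hx
      rw [zero_mul]; exact zero_mem _
    have h2 := ha q le_rfl
    rw [h, sup_eq_left.2 h0] at h2
    omega
  obtain ⟨b, hb, hfree⟩ := exists_free_basis h1 hy hy0 ha hg
  let L := FractionRing O
  let E := IntermediateField.adjoin K {algebraMap O L y}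
  let yE : E := IntermediateField.AdjoinSimple.gen K (algebraMap O L y)
  have hyE : algebraMap E L yE = algebraMap O L y :=
    IntermediateField.AdjoinSimple.algebraMap_gen K _
  refine finrank_pow_le_of_field (E := E) (L := L) (F := AlgebraicClosure L) h1 hV hy yE hyE
    (fun e => ?_) hs b hb hfree (IsScalarTower.toAlgHom E L (AlgebraicClosure L))
  obtain ⟨P, Q, h⟩ := IntermediateField.mem_adjoin_simple_iff K (e : L) |>.1 e.2
  have hev : ∀ R : Polynomial K, algebraMap E L (Polynomial.aeval yE R)
      = Polynomial.aeval (algebraMap O L y) R := fun R => by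
    rw [← Polynomial.aeval_algebraMap_apply, hyE]
  by_cases hQ : Polynomial.aeval (algebraMap O L y) Q = 0
  · refine ⟨0, 1, by simp, ?_⟩
    have : e = 0 := Subtype.ext (by rw [h, hQ, div_zero]; rfl)
    rw [this]; simp
  · refine ⟨P, Q, fun h0 => hQ (by rw [← hev, h0, map_zero]), ?_⟩
    apply (algebraMap E L).injective
    rw [map_mul, hev, hev]
    change (e : L) * _ = _
    rw [h, div_mul_cancel₀ _ hQ]

end Curve

end SurfReg

end Part5d

/-! ### Saturation of a curve -/

section Part6a

namespace SurfReg

section Numeric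

/-- A convex function of eventual slope `s` has slope at most `s` everywhere. -/
theorem le_of_convex {b : ℕ → ℕ} {s q : ℕ} (hc : ∀ k, 2 * b (k + 1) ≤ b k + b (k + 2))
    (hq : ∀ k, q ≤ k → b (k + 1) = b k + s) (k : ℕ) : b (k + 1) ≤ b k + s := by
  have key : ∀ j, ∀ k, q ≤ k + j → b (k + 1) ≤ b k + s := by
    intro j
    induction j with
    | zero => intro k hk; exact (hq k hk).le
    | succ j ih =>
      intro k hk
      have h1 := ih (k + 1) (by omega)
      have h2 := hc k
      rw [show k + 1 + 1 = k + 2 from rfl] at h1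
      omega
  exact key q k (by omega)

theorem two_mul_sum_sub (G g : ℕ) (c : ℕ → ℕ) (h : ∀ i, i < g → c i + i ≤ G) :
    2 * ∑ i ∈ Finset.range g, c i + g * (g - 1) ≤ 2 * (g * G) := by
  induction g with
  | zero => simp
  | succ g ih =>
    have h1 := ih fun i hi => h i (by omega)
    have h2 := h g (by omega)
    rw [Finset.sum_range_succ]
    have h3 : (g + 1) * (g + 1 - 1) = g * (g - 1) + 2 * g := by
      rcases g with _ | g
      · simp
      · simp only [Nat.add_sub_cancel]; ring
    rw [h3]
    nlinarith

/-- Comparison of the Hilbert function `a` with the saturated Hilbert function `b`. The defect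
`b - a` vanishes in degree `0` and beyond `q`, increases by at most
`s - min s ((j + 1) * ρ + 1)` at the step from `j`, hence never exceeds `G`, and strictly decreases
between `m` and `q`; so its sum is at most `(q - 1) * G` minus a triangular number. -/
theorem sum_bound {a b : ℕ → ℕ} {s ρ m q : ℕ} (hm1 : 1 ≤ m) (hmq : m ≤ q)
    (h0 : b 0 = a 0) (hb : ∀ k, b (k + 1) ≤ b k + s) (hab : ∀ k, a k ≤ b k)
    (heq : ∀ k, q ≤ k → b k = a k) (ha : ∀ p, a p + min s ((p + 1) * ρ + 1) ≤ a (p + 1))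
    (ha' : ∀ p, m ≤ p → p < q → a p + s + 1 ≤ a (p + 1)) {G : ℕ}
    (hG : G = ∑ j ∈ Finset.range m, (s - min s ((j + 1) * ρ + 1))) :
    q - m ≤ G ∧ ∀ M, 2 * ∑ k ∈ Finset.range M, b (k + 1) + (q - m) * (q - m - 1) ≤
      2 * ∑ k ∈ Finset.range M, a (k + 1) + 2 * ((q - 1) * G) := by
  have hlow' : ∀ k, b k ≤ a k + ∑ j ∈ Finset.range k, (s - min s ((j + 1) * ρ + 1)) := by
    intro k
    induction k with
    | zero => simp [h0]
    | succ k ih =>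
      rw [Finset.sum_range_succ]
      have h1 := hb k
      have h2 := ha k
      have h3 : min s ((k + 1) * ρ + 1) ≤ s := min_le_left _ _
      omega
  have hlow : ∀ k, k ≤ m → b k ≤ a k + G := fun k hk => by
    refine (hlow' k).trans (Nat.add_le_add_left ?_ _)
    rw [hG]
    exact Finset.sum_le_sum_of_subset (Finset.range_mono hk)
  have hhigh : ∀ i, m + i ≤ q → b (m + i) + i ≤ a (m + i) + G := by
    intro i
    induction i with
    | zero => intro _; exact hlow m le_rfl
    | succ i ih =>
      intro hi
      have h1 := ih (by omega)
      have h2 := hb (m + i)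
      have h3 := ha' (m + i) (by omega) (by omega)
      change b (m + i + 1) + (i + 1) ≤ a (m + i + 1) + G
      omega
  have hgG : q - m ≤ G := by
    have h1 := hhigh (q - m) (by omega)
    have h2 := hab (m + (q - m))
    omega
  refine ⟨hgG, fun M => ?_⟩
  obtain ⟨m, rfl⟩ : ∃ m', m = m' + 1 := ⟨m - 1, by omega⟩
  obtain ⟨g, rfl⟩ : ∃ g, q = m + 1 + g := ⟨q - (m + 1), by omega⟩
  have hsum : ∑ k ∈ Finset.range M, b (k + 1) =
      ∑ k ∈ Finset.range M, a (k + 1) + ∑ k ∈ Finset.range M, (b (k + 1) - a (k + 1)) := by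
    rw [← Finset.sum_add_distrib]
    refine Finset.sum_congr rfl fun k _ => ?_
    have := hab (k + 1)
    omega
  have hM : ∑ k ∈ Finset.range M, (b (k + 1) - a (k + 1)) ≤
      ∑ k ∈ Finset.range (m + g), (b (k + 1) - a (k + 1)) := by
    rcases le_total M (m + g) with h | h
    · exact Finset.sum_le_sum_of_subset (Finset.range_mono h)
    · rw [← Finset.sum_range_add_sum_Ico _ h]
      have : ∑ k ∈ Finset.Ico (m + g) M, (b (k + 1) - a (k + 1)) = 0 := by
        refine Finset.sum_eq_zero fun k hk => ?_
        have := heq (k + 1) (by have := (Finset.mem_Ico.1 hk).1; omega)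
        omega
      omega
  rw [Finset.sum_range_add] at hM
  have h1 : ∑ k ∈ Finset.range m, (b (k + 1) - a (k + 1)) ≤ m * G := by
    have := Finset.sum_le_card_nsmul (Finset.range m) (fun k => b (k + 1) - a (k + 1)) G
      (fun k hk => by
        have := hlow (k + 1) (by have := Finset.mem_range.1 hk; omega)
        omega)
    simpa using this
  have h2 := two_mul_sum_sub G g (fun i => b (m + i + 1) - a (m + i + 1)) (fun i hi => by
    have := hhigh i (by omega)
    have h5 := hab (m + i + 1)
    rw [show m + 1 + i = m + i + 1 by ring] at this
    omega)
  have e1 : m + 1 + g - (m + 1) = g := by omega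
  have e2 : m + 1 + g - 1 = m + g := by omega
  rw [hsum, e1, e2, add_mul]
  omega

end Numeric

section Curve

variable {K O : Type*} [Field K] [CommRing O] [IsDomain O] [Algebra K O]

theorem exists_mem_pow {V : Submodule K O} (h1 : (1 : O) ∈ V)
    (hV : Algebra.adjoin K (V : Set O) = ⊤) (x : O) : ∃ N, x ∈ V ^ N := by
  have hx : x ∈ Algebra.adjoin K (V : Set O) := by rw [hV]; trivial
  induction hx using Algebra.adjoin_induction with
  | mem x hx => exact ⟨1, by rwa [pow_one]⟩
  | algebraMap r =>
    exact ⟨0, by rw [pow_zero, Submodule.mem_one]; exact ⟨r, rfl⟩⟩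
  | add x y _ _ hx hy =>
    obtain ⟨N, hN⟩ := hx
    obtain ⟨M, hM⟩ := hy
    exact ⟨max N M, add_mem (pow_mono' h1 (le_max_left _ _) hN)
      (pow_mono' h1 (le_max_right _ _) hM)⟩
  | mul x y _ _ hx hy =>
    obtain ⟨N, hN⟩ := hx
    obtain ⟨M, hM⟩ := hy
    exact ⟨N + M, pow_add_mem hN hM⟩

/-- Beyond degree `q` the powers of `V` are saturated. -/
theorem Sat_eq_pow {V : Submodule K O} [Module.Finite K V] (h1 : (1 : O) ∈ V)
    (hV : Algebra.adjoin K (V : Set O) = ⊤)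
    {y : O} (hy : y ∈ V) (hy0 : y ≠ 0) {s q : ℕ}
    (ha : ∀ p, q ≤ p → Module.finrank K (V ^ (p + 1) : Submodule K O)
      = Module.finrank K (V ^ p : Submodule K O) + s)
    (hg : ∀ p, q ≤ p → V ^ (p + 1) = V ^ p ⊔ mulS y (V ^ p)) {k : ℕ} (hk : q ≤ k) :
    Sat V k = V ^ k := by
  refine le_antisymm (fun e he => ?_) (pow_le_Sat V k)
  obtain ⟨n, hn⟩ := mem_Sat.1 he
  have key : ∀ n, y ^ n * e ∈ V ^ (k + n) → e ∈ V ^ k := by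
    intro n
    induction n with
    | zero => intro h; simpa using h
    | succ n ih =>
      intro h
      apply ih
      obtain ⟨N, hN⟩ := exists_mem_pow h1 hV (y ^ n * e)
      refine mem_pow_of_mul_mem h1 hy hy0 ha hg (by omega) hN ?_
      rw [← mul_assoc, ← pow_succ']; exact h
  apply key n
  rw [mul_comm, add_comm]
  exact hn _ (Submodule.pow_mem_pow V hy n)

/-- The form `y` is regular on the quotients of consecutive saturated pieces. -/
theorem mem_Sat_of_mul_mem {V : Submodule K O} [Module.Finite K V] (h1 : (1 : O) ∈ V)
    {y : O} (hy : y ∈ V) (hy0 : y ≠ 0) {s q : ℕ}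
    (ha : ∀ p, q ≤ p → Module.finrank K (V ^ (p + 1) : Submodule K O)
      = Module.finrank K (V ^ p : Submodule K O) + s)
    (hg : ∀ p, q ≤ p → V ^ (p + 1) = V ^ p ⊔ mulS y (V ^ p)) {k : ℕ} {e : O}
    (he : e ∈ Sat V (k + 1)) (hye : y * e ∈ Sat V (k + 1)) : e ∈ Sat V k := by
  obtain ⟨N, hN⟩ := he
  obtain ⟨M, hM⟩ := hye
  refine ⟨max q (max N M), fun n hn g hgn => ?_⟩
  refine mem_pow_of_mul_mem h1 hy hy0 ha hg (by omega : q ≤ n + k)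
    (hN n (by omega) g hgn) ?_
  rw [← mul_assoc]
  exact hM n (by omega) g hgn

variable [CharZero K] [IsAlgClosed K] [Algebra.FiniteType K O]

/-- Effective stabilisation for a curve of degree `s`: from some degree `q ≤ s - 1` on, the Hilbert
function grows by exactly `s` and the graded pieces are generated by `1` and `y`; the total defect of
the Hilbert function against its saturation is bounded in terms of the Castelnuovo number `G`. -/
theorem curve_main {ρ : ℕ} (v : Fin (ρ + 1) → O)
    (hw : LinearIndependent K (Fin.cons 1 v : Fin (ρ + 1 + 1) → O))
    {V : Submodule K O} (hV : Submodule.span K (Set.range (Fin.cons 1 v : Fin (ρ + 1 + 1) → O)) = V)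
    (hgen : Algebra.adjoin K (V : Set O) = ⊤)
    {s : ℕ} (hs : ∃ N, ∀ p, N ≤ p →
      Module.finrank K (V ^ (p + 1) : Submodule K O) = Module.finrank K (V ^ p : Submodule K O) + s)
    {m : ℕ} (hm1 : 1 ≤ m) (hm : s ≤ m * ρ + 1) (hms : m + 1 ≤ s) {G : ℕ}
    (hG : G = ∑ j ∈ Finset.range m, (s - min s ((j + 1) * ρ + 1))) :
    ∃ q, m ≤ q ∧ q + 1 ≤ s ∧ q - m ≤ G ∧ ∃ y ∈ V, y ≠ 0 ∧
      (∀ p, q ≤ p → Module.finrank K (V ^ (p + 1) : Submodule K O)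
        = Module.finrank K (V ^ p : Submodule K O) + s) ∧
      (∀ p, q ≤ p → V ^ (p + 1) = V ^ p ⊔ mulS y (V ^ p)) ∧
      (∀ k, Module.Finite K (Sat V k)) ∧
      ∀ M, 2 * ∑ k ∈ Finset.range M, Module.finrank K (Sat V (k + 1)) + (q - m) * (q - m - 1) ≤
        2 * ∑ k ∈ Finset.range M, Module.finrank K (V ^ (k + 1) : Submodule K O)
          + 2 * ((q - 1) * G) := by
  classical
  have h1 : (1 : O) ∈ V := by
    rw [← hV]; exact Submodule.subset_span ⟨0, rfl⟩
  have hfin : Module.Finite K V := by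
    rw [← hV]; exact Module.Finite.span_of_finite K (Set.finite_range _)
  obtain ⟨hlow, hstab⟩ := curve_facts v hw hV hs
  have hlow' : ∀ p, m ≤ p → Module.finrank K (V ^ p : Submodule K O) + s ≤
      Module.finrank K (V ^ (p + 1) : Submodule K O) := fun p hp => by
    have h := hlow p
    rwa [min_eq_left] at h
    have : m * ρ ≤ (p + 1) * ρ := Nat.mul_le_mul_right _ (by omega)
    omega
  have hex : ∃ p, m ≤ p ∧ Module.finrank K (V ^ (p + 1) : Submodule K O)
      = Module.finrank K (V ^ p : Submodule K O) + s := by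
    obtain ⟨N, hN⟩ := hs
    exact ⟨max m N, le_max_left _ _, hN _ (le_max_right _ _)⟩
  let q := Nat.find hex
  obtain ⟨hmq, hq⟩ := Nat.find_spec hex
  have hmin : ∀ p, m ≤ p → p < q → Module.finrank K (V ^ p : Submodule K O) + s + 1 ≤
      Module.finrank K (V ^ (p + 1) : Submodule K O) := fun p hp hpq => by
    have h1 := Nat.find_min hex hpq
    have h2 := hlow' p hp
    have h3 : ¬ Module.finrank K (V ^ (p + 1) : Submodule K O)
      = Module.finrank K (V ^ p : Submodule K O) + s := fun h => h1 ⟨hp, h⟩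
    omega
  have ha : ∀ p, q ≤ p → Module.finrank K (V ^ (p + 1) : Submodule K O)
      = Module.finrank K (V ^ p : Submodule K O) + s := by
    intro p hp
    induction p, hp using Nat.le_induction with
    | base => exact hq
    | succ p hp ih => exact (hstab m hm p (hmq.trans hp) ih).1
  obtain ⟨y, hy, hyg⟩ := (hstab m hm q hmq hq).2
  have hg := gen_mono hyg
  have hy0 : y ≠ 0 := by
    rintro rfl
    have h := hg q le_rfl
    have h0 : mulS 0 (V ^ q) ≤ V ^ q := fun x hx => by
      obtain ⟨v, _, rfl⟩ := mem_mulS.1 hx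
      rw [zero_mul]; exact zero_mem _
    have h2 := ha q le_rfl
    rw [h, sup_eq_left.2 h0] at h2
    omega
  -- `finrank_pow_le` contradicts the minimality of `q` in degree `s - 1`.
  have hqs : q + 1 ≤ s := by
    by_contra hcon
    have h2 := hmin (s - 1) (by omega) (by omega)
    have h3 := finrank_pow_le h1 hgen hy (by omega) ha hg
    rw [show s - 1 + 1 = s by omega] at h2
    omega
  have hSat : ∀ k, q ≤ k → Sat V k = V ^ k := fun k hk => Sat_eq_pow h1 hgen hy hy0 ha hg hk
  have hSfin : ∀ k, Module.Finite K (Sat V k) := fun k => by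
    have h2 : Sat V k ≤ V ^ (max q k) := by
      rw [← hSat _ (le_max_left q k)]; exact Sat_mono h1 (le_max_right _ _)
    exact Submodule.finiteDimensional_of_le h2
  -- The saturated Hilbert function is convex, because `y` is regular on the saturation.
  have hconv : ∀ k, 2 * Module.finrank K (Sat V (k + 1)) ≤
      Module.finrank K (Sat V k) + Module.finrank K (Sat V (k + 2)) := by
    intro k
    have hmulSat : ∀ k, ∀ e ∈ Sat V k, y * e ∈ Sat V (k + 1) := by
      rintro k e ⟨N, hN⟩
      refine ⟨N, fun n hn g hgn => ?_⟩
      have := pow_add_mem (m := 1) (by rwa [pow_one]) (hN n hn g hgn) (a := y)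
      rw [mul_assoc]
      convert this using 2
      ring
    have h3 := finrank_sup_mulS hy0 (W := Sat V (k + 1)) (W' := Sat V k) (fun e he =>
      ⟨fun h => mem_Sat_of_mul_mem h1 hy hy0 ha hg he h, fun h => hmulSat k e h⟩)
      (Sat_mono h1 (Nat.le_succ k))
    have h4 : Sat V (k + 1) ⊔ mulS y (Sat V (k + 1)) ≤ Sat V (k + 2) := by
      refine sup_le (Sat_mono h1 (Nat.le_succ _)) fun x hx => ?_
      obtain ⟨e, he, rfl⟩ := mem_mulS.1 hx
      exact hmulSat (k + 1) e he
    have h5 := Submodule.finrank_mono h4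
    omega
  have hSq : ∀ k, q ≤ k → Module.finrank K (Sat V (k + 1)) = Module.finrank K (Sat V k) + s :=
    fun k hk => by rw [hSat k hk, hSat (k + 1) (by omega), ha k hk]
  obtain ⟨hgG, hsum⟩ := sum_bound (a := fun k => Module.finrank K (V ^ k : Submodule K O))
    (b := fun k => Module.finrank K (Sat V k)) (s := s) (ρ := ρ) hm1 hmq
    (by rw [Sat_zero h1, pow_zero])
    (le_of_convex (b := fun k => Module.finrank K (Sat V k)) hconv hSq)
    (fun k => Submodule.finrank_mono (pow_le_Sat V k))
    (fun k hk => by rw [hSat k hk]) hlow hmin hG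
  exact ⟨q, hmq, hqs, hgG, y, hy, hy0, ha, hg, hSfin, hsum⟩

end Curve

end SurfReg

end Part6a

/-! ### From a curve section to the surface -/

section Part6b

open scoped TensorProduct

namespace SurfReg

section Surface

variable {K A C : Type*} [Field K] [CharZero K] [IsAlgClosed K] [CommRing A] [IsDomain A]
  [Algebra K A] [CommRing C] [IsDomain C] [Algebra K C] [Algebra.FiniteType K C]

theorem exists_frame {U : Submodule K C} [Module.Finite K U] (h1 : (1 : C) ∈ U) {n : ℕ}
    (hn : Module.finrank K U = n + 1) :
    ∃ v : Fin n → C, LinearIndependent K (Fin.cons 1 v : Fin (n + 1) → C) ∧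
      Submodule.span K (Set.range (Fin.cons 1 v : Fin (n + 1) → C)) = U := by
  obtain ⟨χ, _⟩ := exists_point (K := K) (A := C) one_ne_zero
  let W := U ⊓ LinearMap.ker χ.toLinearMap
  have hfin : Module.Finite K W := Submodule.finiteDimensional_of_le inf_le_left
  have hW : Module.finrank K W = n := by
    have h := finrank_map_add_inf_ker χ.toLinearMap U
    have htop : U.map χ.toLinearMap = ⊤ := by
      rw [eq_top_iff]
      intro z _
      exact ⟨z • 1, Submodule.smul_mem _ _ h1, by simp⟩
    rw [htop, finrank_top, Module.finrank_self, hn] at h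
    change Module.finrank K (U ⊓ LinearMap.ker χ.toLinearMap : Submodule K C) = n
    omega
  let b : Module.Basis (Fin n) K W := Module.finBasisOfFinrankEq K W hW
  have hspan : Submodule.span K (Set.range fun i => (b i : C)) = W := by
    have : (Set.range fun i => (b i : C)) = W.subtype '' Set.range b := by
      rw [← Set.range_comp]; rfl
    rw [this, ← Submodule.map_span, b.span_eq, Submodule.map_top, Submodule.range_subtype]
  refine ⟨fun i => b i, ?_, ?_⟩
  · rw [linearIndependent_finCons]
    refine ⟨b.linearIndependent.map' W.subtype (Submodule.ker_subtype W), ?_⟩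
    rw [hspan]
    intro h
    have := h.2
    simp at this
  · rw [Fin.range_cons, Submodule.span_insert, hspan]
    apply le_antisymm
    · refine sup_le ?_ inf_le_left
      rw [Submodule.span_le]
      rintro _ rfl
      exact h1
    · intro x hx
      have : x = χ x • (1 : C) + (x - χ x • 1) := by ring
      rw [this]
      refine add_mem (Submodule.mem_sup_left (Submodule.smul_mem _ _
        (Submodule.subset_span rfl))) (Submodule.mem_sup_right
        ⟨sub_mem hx (Submodule.smul_mem _ _ h1), ?_⟩)
      simp

/-- The saturation of a surface is controlled by that of its hyperplane section. -/
theorem finrank_Sat_le {V : Submodule K A} [Module.Finite K V] {ξ : A} {μ : A →ₐ[K] C}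
    (h : IsSection V ξ μ)
    (hfin : ∀ k, Module.Finite K (Sat (V.map μ.toLinearMap) k)) (M : ℕ) :
    Module.Finite K (Sat V M) ∧ Module.finrank K (Sat V M) ≤
      1 + ∑ k ∈ Finset.range M, Module.finrank K (Sat (V.map μ.toLinearMap) (k + 1)) := by
  have hmap : ∀ k, (Sat V k).map μ.toLinearMap ≤ Sat (V.map μ.toLinearMap) k := by
    rintro k _ ⟨e, ⟨N, hN⟩, rfl⟩
    refine ⟨N, fun n hn g hg => ?_⟩
    rw [← Submodule.map_pow] at hg ⊢
    obtain ⟨g, hg, rfl⟩ := hg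
    exact ⟨e * g, hN n hn g hg, by simp⟩
  induction M with
  | zero =>
    have h1 := Sat_zero (F := K) h.one_mem
    rw [h1]
    have hfin1 : Module.Finite K (1 : Submodule K A) := by
      rw [Submodule.one_eq_span]; exact Module.Finite.span_of_finite K (Set.finite_singleton _)
    refine ⟨hfin1, ?_⟩
    rw [Submodule.one_eq_span, finrank_span_singleton one_ne_zero]; simp
  | succ M ih =>
    obtain ⟨hM, hle⟩ := ih
    have hk : Sat V (M + 1) ⊓ LinearMap.ker μ.toLinearMap ≤ mulS ξ (Sat V M) := fun f hf =>
      h.mem_mulS_Sat hf.1 hf.2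
    have hkfin : Module.Finite K (Sat V (M + 1) ⊓ LinearMap.ker μ.toLinearMap : Submodule K A) :=
      Submodule.finiteDimensional_of_le hk
    have := hfin (M + 1)
    have hmfin : Module.Finite K ((Sat V (M + 1)).map μ.toLinearMap) :=
      Submodule.finiteDimensional_of_le (hmap (M + 1))
    have hS : Module.Finite K (Sat V (M + 1)) := by
      rw [Module.Finite.iff_fg] at *
      exact Submodule.fg_of_fg_map_of_fg_inf_ker μ.toLinearMap hmfin hkfin
    refine ⟨hS, ?_⟩
    rw [← finrank_map_add_inf_ker μ.toLinearMap, Finset.sum_range_succ]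
    have h1 := Submodule.finrank_mono (hmap (M + 1))
    have h2 := Submodule.finrank_mono hk
    rw [finrank_mulS h.ne_zero] at h2
    omega

/-- Once the curve section is stable and the kernel of restriction is `ξ V ^ j` in degree `j + 1`, the
same holds in the next degree, and `V ^ (j + 1)` is generated from `V ^ j` by `ξ`, `η` and `1`. -/
theorem section_step {V : Submodule K A} [Module.Finite K V] {ξ : A} {μ : A →ₐ[K] C}
    (h : IsSection V ξ μ) {η : A} (hη : η ∈ V) (hη0 : μ η ≠ 0) {s q : ℕ}
    (ha : ∀ p, q ≤ p → Module.finrank K ((V.map μ.toLinearMap) ^ (p + 1) : Submodule K C)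
      = Module.finrank K ((V.map μ.toLinearMap) ^ p : Submodule K C) + s)
    (hg : ∀ p, q ≤ p → (V.map μ.toLinearMap) ^ (p + 1) = (V.map μ.toLinearMap) ^ p ⊔
      mulS (μ η) ((V.map μ.toLinearMap) ^ p))
    {j : ℕ} (hj : q ≤ j) (hT : ∀ f ∈ V ^ (j + 1), μ f = 0 → f ∈ mulS ξ (V ^ j)) :
    V ^ (j + 1) ≤ mulS ξ (V ^ j) ⊔ (V ^ j ⊔ mulS η (V ^ j)) ∧
    ∀ f ∈ V ^ (j + 1 + 1), μ f = 0 → f ∈ mulS ξ (V ^ (j + 1)) := by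
  have hlift : ∀ p, ∀ c ∈ (V.map μ.toLinearMap) ^ p, ∃ f ∈ V ^ p, μ f = c := fun p c hc => by
    rw [← Submodule.map_pow] at hc
    obtain ⟨f, hf, rfl⟩ := hc
    exact ⟨f, hf, rfl⟩
  have hmem : ∀ p, ∀ f ∈ V ^ p, μ f ∈ (V.map μ.toLinearMap) ^ p := fun p f hf => by
    rw [← Submodule.map_pow]; exact ⟨f, hf, rfl⟩
  have hdec : V ^ (j + 1) ≤ mulS ξ (V ^ j) ⊔ (V ^ j ⊔ mulS η (V ^ j)) := by
    intro f hf
    have h1 := hmem _ f hf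
    rw [hg j hj] at h1
    obtain ⟨a, ha, c, hc, hac⟩ := Submodule.mem_sup.1 h1
    obtain ⟨c, hc', rfl⟩ := mem_mulS.1 hc
    obtain ⟨a, haV, rfl⟩ := hlift j a ha
    obtain ⟨c, hcV, rfl⟩ := hlift j c hc'
    have h2 : f - (a + η * c) ∈ mulS ξ (V ^ j) := by
      refine hT _ (sub_mem hf (add_mem (pow_mono' h.one_mem (Nat.le_succ j) haV) ?_)) ?_
      · rw [pow_succ']; exact Submodule.mul_mem_mul hη hcV
      · rw [map_sub, map_add, map_mul, hac, sub_self]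
    have : f = (f - (a + η * c)) + (a + η * c) := by ring
    rw [this]
    exact add_mem (Submodule.mem_sup_left h2) (Submodule.mem_sup_right
      (add_mem (Submodule.mem_sup_left haV) (Submodule.mem_sup_right (mul_mem_mulS hcV))))
  refine ⟨hdec, fun f hf hf0 => ?_⟩
  have hf1 : f ∈ mulS ξ (V ^ (j + 1)) ⊔ (V ^ (j + 1) ⊔ mulS η (V ^ (j + 1))) := by
    have h1 : V ^ (j + 1 + 1) ≤ (mulS ξ (V ^ j) ⊔ (V ^ j ⊔ mulS η (V ^ j))) * V := by
      rw [pow_succ]; exact mul_le_mul_left hdec V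
    have h2 := h1 hf
    rwa [Submodule.sup_mul, Submodule.sup_mul, mulS_mul, mulS_mul, ← pow_succ] at h2
  obtain ⟨i, hi, w, hw, rfl⟩ := Submodule.mem_sup.1 hf1
  obtain ⟨a, haV, c, hc, rfl⟩ := Submodule.mem_sup.1 hw
  obtain ⟨b, hbV, rfl⟩ := mem_mulS.1 hc
  have hi0 : μ i = 0 := by
    obtain ⟨i, _, rfl⟩ := mem_mulS.1 hi
    rw [map_mul, h.map_zero, zero_mul]
  have hab : μ a + μ η * μ b = 0 := by
    rw [map_add, hi0, zero_add, map_add, map_mul] at hf0; exact hf0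
  have h1C : (1 : C) ∈ V.map μ.toLinearMap := ⟨1, h.one_mem, by simp⟩
  have hb1 : μ b ∈ (V.map μ.toLinearMap) ^ j := by
    refine mem_pow_of_mul_mem h1C ⟨η, hη, rfl⟩ hη0 ha hg hj (hmem _ b hbV) ?_
    change μ η * μ b ∈ _
    rw [eq_neg_of_add_eq_zero_right hab]
    exact neg_mem (hmem _ a haV)
  obtain ⟨b', hb', hbb⟩ := hlift j _ hb1
  have hbj : b - b' ∈ mulS ξ (V ^ j) :=
    hT _ (sub_mem hbV (pow_mono' h.one_mem (Nat.le_succ j) hb')) (by rw [map_sub, hbb, sub_self])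
  have haj : a + η * b' ∈ mulS ξ (V ^ j) := by
    refine hT _ (add_mem haV ?_) ?_
    · rw [pow_succ']; exact Submodule.mul_mem_mul hη hb'
    · rw [map_add, map_mul, hbb, hab]
  have : i + (a + η * b) = i + ((a + η * b') + (b - b') * η) := by ring
  rw [this]
  refine add_mem hi (add_mem (mulS_mono (pow_mono' h.one_mem (Nat.le_succ j)) haj) ?_)
  rw [pow_succ, ← mulS_mul]
  exact Submodule.mul_mem_mul hbj hη

/-- Effective stabilisation for a surface with an integral hyperplane section. Each degree
between `q` and `N` in which restriction to the section has kernel larger than `ξ V ^ p` adds at least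
one dimension to `V ^ N`, whose dimension is at most the sum of the saturated Hilbert function of the
section; `curve_main` limits the difference. -/
theorem surface_aux {V : Submodule K A} [Module.Finite K V] {ξ : A} {μ : A →ₐ[K] C}
    (h : IsSection V ξ μ) (hμ : Function.Surjective μ)
    (hgen : Algebra.adjoin K (V : Set A) = ⊤) {ρ s : ℕ}
    (hdim : Module.finrank K V = ρ + 3)
    (hh : ∃ N, ∀ p, N ≤ p → Module.finrank K (V ^ (p + 2) : Submodule K A) +
      Module.finrank K (V ^ p : Submodule K A) =
      2 * Module.finrank K (V ^ (p + 1) : Submodule K A) + s)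
    {m : ℕ} (hm1 : 1 ≤ m) (hm : s ≤ m * ρ + 1) (hms : m + 1 ≤ s) {G : ℕ}
    (hG : G = ∑ j ∈ Finset.range m, (s - min s ((j + 1) * ρ + 1))) :
    ∃ q N, m ≤ q ∧ q + 1 ≤ s ∧ q - m ≤ G ∧ q ≤ N ∧
      2 * N + (q - m) * (q - m - 1) ≤ 2 * q + 2 * ((q - 1) * G) ∧
      (∀ p, N ≤ p → Module.finrank K (V ^ (p + 2) : Submodule K A) +
        Module.finrank K (V ^ p : Submodule K A) =
        2 * Module.finrank K (V ^ (p + 1) : Submodule K A) + s) ∧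
      ∃ η ∈ V, V ^ (N + 1) ≤ mulS ξ (V ^ N) ⊔ (V ^ N ⊔ mulS η (V ^ N)) ∧
        Module.finrank K (V ^ (N + 1) : Submodule K A) ≤
          Module.finrank K (mulS ξ (V ^ N) ⊔ mulS η (V ^ N) : Submodule K A) + s := by
  classical
  let U : Submodule K C := V.map μ.toLinearMap
  have hUfin : Module.Finite K U := Module.Finite.map _ _
  have hU : ∀ p, (V ^ p).map μ.toLinearMap = U ^ p := fun p => Submodule.map_pow _ _ _
  have h1U : (1 : C) ∈ U := ⟨1, h.one_mem, by simp⟩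
  have hτ : ∀ p, Module.finrank K (U ^ (p + 1) : Submodule K C) +
      Module.finrank K (V ^ p : Submodule K A) ≤ Module.finrank K (V ^ (p + 1) : Submodule K A) :=
    fun p => by rw [← hU]; exact h.finrank_map_add_le p
  have hτ0 : ∀ p, Module.finrank K (U ^ (p + 1) : Submodule K C) +
      Module.finrank K (V ^ p : Submodule K A) = Module.finrank K (V ^ (p + 1) : Submodule K A) ↔
      ∀ f ∈ V ^ (p + 1), μ f = 0 → f ∈ mulS ξ (V ^ p) :=
    fun p => by rw [← hU]; exact h.finrank_map_add_eq_iff p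
  have hV0 : Module.finrank K (V ^ 0 : Submodule K A) = 1 := by
    rw [pow_zero, Submodule.one_eq_span, finrank_span_singleton one_ne_zero]
  have hUdim : Module.finrank K U = ρ + 1 + 1 := by
    have h1 := (hτ0 0).2 (h.ker_one (Sat_zero h.one_mem))
    rw [hV0, zero_add, pow_one, pow_one, hdim] at h1
    omega
  obtain ⟨v, hw, hVv⟩ := exists_frame h1U hUdim
  have hgenU : Algebra.adjoin K (U : Set C) = ⊤ := by
    have : (U : Set C) = μ '' (V : Set A) := rfl
    rw [this, ← AlgHom.map_adjoin, hgen, Algebra.map_top, AlgHom.range_eq_top]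
    exact hμ
  obtain ⟨k₀, hk₀⟩ := h.eventually
  have hs : ∃ N, ∀ p, N ≤ p → Module.finrank K (U ^ (p + 1) : Submodule K C) =
      Module.finrank K (U ^ p : Submodule K C) + s := by
    obtain ⟨N, hN⟩ := hh
    refine ⟨max N k₀ + 1, fun p hp => ?_⟩
    obtain ⟨p, rfl⟩ : ∃ p', p = p' + 1 := ⟨p - 1, by omega⟩
    have h1 := (hτ0 p).2 (hk₀ p (by omega))
    have h2 := (hτ0 (p + 1)).2 (hk₀ (p + 1) (by omega))
    have h3 := hN p (by omega)
    rw [show p + 1 + 1 = p + 2 from rfl] at h2 ⊢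
    omega
  obtain ⟨q, hmq, hqs, hgG, y, hy, hy0, ha, hg, hSfin, hsum⟩ :=
    curve_main v hw hVv hgenU hs hm1 hm hms hG
  obtain ⟨η, hη, rfl⟩ := hy
  have hex : ∃ j, q ≤ j ∧ ∀ f ∈ V ^ (j + 1), μ f = 0 → f ∈ mulS ξ (V ^ j) :=
    ⟨max q k₀, le_max_left _ _, hk₀ _ (le_max_right _ _)⟩
  let N := Nat.find hex
  obtain ⟨hqN, hTN⟩ := Nat.find_spec hex
  have hmin : ∀ p, q ≤ p → p < N → Module.finrank K (U ^ (p + 1) : Submodule K C) +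
      Module.finrank K (V ^ p : Submodule K A) + 1 ≤
      Module.finrank K (V ^ (p + 1) : Submodule K A) := fun p hp hpN => by
    have h1 := hτ p
    have h2 : ¬ _ := fun hc => Nat.find_min hex hpN ⟨hp, (hτ0 p).1 hc⟩
    omega
  have hT : ∀ p, N ≤ p → ∀ f ∈ V ^ (p + 1), μ f = 0 → f ∈ mulS ξ (V ^ p) := by
    intro p hp
    induction p, hp using Nat.le_induction with
    | base => exact hTN
    | succ p hp ih => exact (section_step h hη hy0 ha hg (hqN.trans hp) ih).2
  -- By minimality of `N`, every degree from `q` to `N - 1` contributes an extra dimension.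
  have hcount : ∀ M, M ≤ N → 1 + ∑ k ∈ Finset.range M, Module.finrank K (U ^ (k + 1) : Submodule K C)
      + (M - q) ≤ Module.finrank K (V ^ M : Submodule K A) := by
    intro M
    induction M with
    | zero => intro _; simp [hV0]
    | succ M ih =>
      intro hM
      have h1 := ih (by omega)
      have h2 := hτ M
      rw [Finset.sum_range_succ]
      by_cases hq : q ≤ M
      · have h3 := hmin M hq (by omega)
        omega
      · omega
  refine ⟨q, N, hmq, hqs, hgG, hqN, ?_, ?_, η, hη, (section_step h hη hy0 ha hg hqN hTN).1, ?_⟩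
  · have h1 := hcount N le_rfl
    obtain ⟨hf, h2⟩ := finrank_Sat_le h hSfin N
    have h3 := Submodule.finrank_mono (pow_le_Sat V N)
    have h4 := hsum N
    change Module.finrank K (Sat V N) ≤
      1 + ∑ k ∈ Finset.range N, Module.finrank K (Sat U (k + 1)) at h2
    omega
  · intro p hp
    have h1 := (hτ0 p).2 (hT p hp)
    have h2 := (hτ0 (p + 1)).2 (hT (p + 1) (by omega))
    have h3 := ha (p + 1) (by omega)
    rw [show p + 1 + 1 = p + 2 from rfl] at h2 h3
    omega
  · have h1 := (hτ0 N).2 hTN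
    have h3 := ha N hqN
    have hfin : Module.Finite K (mulS ξ (V ^ N) ⊔ mulS η (V ^ N) : Submodule K A) :=
      inferInstance
    have h4 := finrank_map_add_inf_ker μ.toLinearMap (mulS ξ (V ^ N) ⊔ mulS η (V ^ N))
    have h5 : mulS (μ η) (U ^ N) ≤ (mulS ξ (V ^ N) ⊔ mulS η (V ^ N)).map μ.toLinearMap := by
      intro x hx
      obtain ⟨c, hc, rfl⟩ := mem_mulS.1 hx
      rw [← hU] at hc
      obtain ⟨f, hf, rfl⟩ := hc
      exact ⟨η * f, Submodule.mem_sup_right (mul_mem_mulS hf), by simp⟩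
    have h6 : mulS ξ (V ^ N) ≤ (mulS ξ (V ^ N) ⊔ mulS η (V ^ N)) ⊓ LinearMap.ker μ.toLinearMap :=
      le_inf le_sup_left fun x hx => (h.mulS_le_ker N hx).2
    have hfin2 : Module.Finite K ((mulS ξ (V ^ N) ⊔ mulS η (V ^ N)) ⊓
        LinearMap.ker μ.toLinearMap : Submodule K A) :=
      Submodule.finiteDimensional_of_le inf_le_left
    have h7 := Submodule.finrank_mono h5
    have h8 := Submodule.finrank_mono h6
    rw [finrank_mulS h.ne_zero] at h8
    have h9 : Module.finrank K (mulS (μ η) (U ^ N)) = _ := finrank_mulS hy0 _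
    omega

end Surface

end SurfReg

end Part6b

/-! ### The generic pencil of a surface -/

section Part6c

open scoped TensorProduct

universe u

namespace SurfReg

section Surface

/-- The section of a surface is a curve: its Hilbert function is unbounded. -/
theorem unbounded_of_section {F A Λ : Type*} [Field F] [CommRing A] [IsDomain A] [Algebra F A]
    [CommRing Λ] [Algebra F Λ] {V : Submodule F A} [Module.Finite F V] {ξ : A} {μ : A →ₐ[F] Λ}
    (h : IsSection V ξ μ) {s : ℕ} (hs : 1 ≤ s)
    (hh : ∃ N, ∀ p, N ≤ p → Module.finrank F (V ^ (p + 2) : Submodule F A) +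
      Module.finrank F (V ^ p : Submodule F A) =
      2 * Module.finrank F (V ^ (p + 1) : Submodule F A) + s) (B : ℕ) :
    ∃ p, B < Module.finrank F ((V ^ p).map μ.toLinearMap) := by
  obtain ⟨k₀, hk₀⟩ := h.eventually
  obtain ⟨N, hN⟩ := hh
  have key : ∀ i, i ≤ Module.finrank F ((V ^ (max N k₀ + i + 1)).map μ.toLinearMap) := by
    intro i
    induction i with
    | zero => exact Nat.zero_le _
    | succ i ih =>
      have h1 := (h.finrank_map_add_eq_iff (max N k₀ + i)).2 (hk₀ _ (by omega))
      have h2 := (h.finrank_map_add_eq_iff (max N k₀ + i + 1)).2 (hk₀ _ (by omega))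
      have h3 := hN (max N k₀ + i) (by omega)
      rw [show max N k₀ + i + 1 + 1 = max N k₀ + i + 2 from rfl] at h2
      rw [show max N k₀ + (i + 1) + 1 = max N k₀ + i + 2 by ring]
      omega
  exact ⟨_, key (B + 1)⟩

variable {k O : Type u} [Field k] [IsAlgClosed k] [CharZero k] [CommRing O] [IsDomain O]
  [Algebra k O] [Algebra.FiniteType k O]

theorem second_difference_baseChange {κ : Type*} [Field κ] [Algebra k κ] {V : Submodule k O} {s : ℕ}
    (hh : ∃ N, ∀ p, N ≤ p → Module.finrank k (V ^ (p + 2) : Submodule k O) +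
      Module.finrank k (V ^ p : Submodule k O) =
      2 * Module.finrank k (V ^ (p + 1) : Submodule k O) + s) :
    ∃ N, ∀ p, N ≤ p → Module.finrank κ ((V.baseChange κ) ^ (p + 2) : Submodule κ (κ ⊗[k] O)) +
      Module.finrank κ ((V.baseChange κ) ^ p : Submodule κ (κ ⊗[k] O)) =
      2 * Module.finrank κ ((V.baseChange κ) ^ (p + 1) : Submodule κ (κ ⊗[k] O)) + s := by
  have hfr : ∀ p, Module.finrank κ ((V.baseChange κ) ^ p : Submodule κ (κ ⊗[k] O)) =
      Module.finrank k (V ^ p : Submodule k O) := fun p => by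
    rw [← baseChange_pow, finrank_baseChange]
  simpa only [hfr] using hh

theorem nonempty_lift (κ Ω : Type*) [Field κ] [Field Ω] [Algebra κ Ω] [IsAlgClosed Ω] :
    Nonempty (AlgebraicClosure κ →ₐ[κ] Ω) := ⟨IsAlgClosed.lift⟩

theorem exists_gxi {n : ℕ} {F : Type*} [Field F] [Algebra k F] {V : Submodule k O}
    {w : Fin (n + 1) → O} (hV : Submodule.span k (Set.range w) = V) {x : F ⊗[k] O}
    (hx : x ∈ V.baseChange F) : ∃ t : Fin (n + 1) → F, x = gxi t w := by
  rw [← hV, Submodule.baseChange_span, ← Set.range_comp, Submodule.mem_span_range_iff_exists_fun] at hx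
  obtain ⟨c, rfl⟩ := hx
  refine ⟨c, Finset.sum_congr rfl fun j _ => ?_⟩
  simp [TensorProduct.smul_tmul']

/-- `surface_aux` over an extension `K` of `k`, with the conclusion expressed over `k` where it does not
involve the section. -/
theorem surface_ext {K Ω : Type*} [Field K] [Algebra k K] [IsAlgClosed K] [Field Ω] [Algebra K Ω]
    {n : ℕ} {w : Fin (n + 1) → O} {V : Submodule k O} [Module.Finite k V]
    (hV : Submodule.span k (Set.range w) = V)
    (hgen : Algebra.adjoin k (V : Set O) = ⊤)
    {t₀ : Fin (n + 1) → K} {μ : K ⊗[k] O →ₐ[K] Ω}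
    (h : IsSection (V.baseChange K) (gxi t₀ w) μ)
    {ρ s : ℕ} (hdim : Module.finrank k V = ρ + 3)
    (hh : ∃ N, ∀ p, N ≤ p → Module.finrank k (V ^ (p + 2) : Submodule k O) +
      Module.finrank k (V ^ p : Submodule k O) =
      2 * Module.finrank k (V ^ (p + 1) : Submodule k O) + s)
    {m : ℕ} (hm1 : 1 ≤ m) (hm : s ≤ m * ρ + 1) (hms : m + 1 ≤ s) {G : ℕ}
    (hG : G = ∑ j ∈ Finset.range m, (s - min s ((j + 1) * ρ + 1))) :
    ∃ q N, m ≤ q ∧ q + 1 ≤ s ∧ q - m ≤ G ∧ q ≤ N ∧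
      2 * N + (q - m) * (q - m - 1) ≤ 2 * q + 2 * ((q - 1) * G) ∧
      (∀ p, N ≤ p → Module.finrank k (V ^ (p + 2) : Submodule k O) +
        Module.finrank k (V ^ p : Submodule k O) =
        2 * Module.finrank k (V ^ (p + 1) : Submodule k O) + s) ∧
      ∃ t₁ : Fin (n + 1) → K,
        (V ^ (N + 1)).baseChange K ≤ mulS (gxi t₀ w) ((V ^ N).baseChange K) ⊔
          ((V ^ N).baseChange K ⊔ mulS (gxi t₁ w) ((V ^ N).baseChange K)) ∧
        Module.finrank k (V ^ (N + 1) : Submodule k O) ≤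
          Module.finrank K (mulS (gxi t₀ w) ((V ^ N).baseChange K) ⊔
            mulS (gxi t₁ w) ((V ^ N).baseChange K) : Submodule K (K ⊗[k] O)) + s := by
  have hdom : IsDomain (K ⊗[k] O) := isDomain_tensor
  have hcz : CharZero K := charZero_of_injective_algebraMap (algebraMap k K).injective
  have hfr : ∀ p, Module.finrank k (V ^ p : Submodule k O) =
      Module.finrank K ((V.baseChange K) ^ p : Submodule K (K ⊗[k] O)) := fun p => by
    rw [← baseChange_pow, finrank_baseChange]
  have hft : Algebra.FiniteType K μ.range :=
    Algebra.FiniteType.of_surjective μ.rangeRestrict μ.rangeRestrict_surjective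
  have h0 : ∀ f, μ.rangeRestrict f = 0 ↔ μ f = 0 := fun f => by
    rw [← Subtype.coe_inj]; rfl
  have hsec : IsSection (V.baseChange K) (gxi t₀ w) μ.rangeRestrict :=
    ⟨h.one_mem, h.mem, h.ne_zero, (h0 _).2 h.map_zero, fun M f hf hf0 => h.sat M f hf ((h0 f).1 hf0)⟩
  have hgenK : Algebra.adjoin K (V.baseChange K : Set (K ⊗[k] O)) = ⊤ := by
    rw [eq_top_iff]
    rintro x -
    induction x with
    | zero => exact zero_mem _
    | add x y hx hy => exact add_mem hx hy
    | tmul a x =>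
      have hx : x ∈ Algebra.adjoin k (V : Set O) := by rw [hgen]; trivial
      have h1 : (1 : K) ⊗ₜ[k] x ∈ Algebra.adjoin K (V.baseChange K : Set (K ⊗[k] O)) := by
        induction hx using Algebra.adjoin_induction with
        | mem x hx => exact Algebra.subset_adjoin (Submodule.tmul_mem_baseChange_of_mem _ hx)
        | algebraMap r =>
          have : (1 : K) ⊗ₜ[k] algebraMap k O r = algebraMap K (K ⊗[k] O) (algebraMap k K r) := by
            rw [Algebra.TensorProduct.algebraMap_apply, Algebra.algebraMap_eq_smul_one r,
              Algebra.algebraMap_eq_smul_one r, TensorProduct.tmul_smul, TensorProduct.smul_tmul']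
            rfl
          rw [this]
          exact Subalgebra.algebraMap_mem _ _
        | add x y _ _ hx hy => rw [TensorProduct.tmul_add]; exact add_mem hx hy
        | mul x y _ _ hx hy =>
          have : (1 : K) ⊗ₜ[k] (x * y) = (1 ⊗ₜ x) * (1 ⊗ₜ y) := by simp
          rw [this]; exact mul_mem hx hy
      have : a ⊗ₜ[k] x = a • ((1 : K) ⊗ₜ[k] x) := by simp [TensorProduct.smul_tmul']
      rw [this]
      exact Subalgebra.smul_mem _ h1 a
  simp only [hfr] at hh ⊢
  obtain ⟨q, N, h1, h2, h3, h4, h5, h6, η, hη, h7, h8⟩ := surface_aux hsec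
    μ.rangeRestrict_surjective hgenK (by rw [finrank_baseChange, hdim]) hh hm1 hm hms hG
  obtain ⟨t₁, rfl⟩ := exists_gxi hV hη
  refine ⟨q, N, h1, h2, h3, h4, h5, h6, t₁, ?_, ?_⟩
  · rw [baseChange_pow, baseChange_pow]; exact h7
  · rw [baseChange_pow]; exact h8

/-- Effective stabilisation for a surface. The generic hyperplane section is integral over an algebraic
closure of `kap ι v`, so `surface_ext` applies there; the resulting pencil of linear forms has
coefficients in that field. -/
theorem surface_facts {ρ : ℕ} (v : Fin (ρ + 2) → O)
    (hw : LinearIndependent k (Fin.cons 1 v : Fin (ρ + 2 + 1) → O))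
    {V : Submodule k O} (hV : Submodule.span k (Set.range (Fin.cons 1 v : Fin (ρ + 2 + 1) → O)) = V)
    (hgen : Algebra.adjoin k (V : Set O) = ⊤) {s : ℕ}
    (hh : ∃ N, ∀ p, N ≤ p → Module.finrank k (V ^ (p + 2) : Submodule k O) +
      Module.finrank k (V ^ p : Submodule k O) =
      2 * Module.finrank k (V ^ (p + 1) : Submodule k O) + s)
    {m : ℕ} (hm1 : 1 ≤ m) (hm : s ≤ m * ρ + 1) (hms : m + 1 ≤ s) {G : ℕ}
    (hG : G = ∑ j ∈ Finset.range m, (s - min s ((j + 1) * ρ + 1))) :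
    ∃ q N, m ≤ q ∧ q + 1 ≤ s ∧ q - m ≤ G ∧ q ≤ N ∧
      2 * N + (q - m) * (q - m - 1) ≤ 2 * q + 2 * ((q - 1) * G) ∧
      (∀ p, N ≤ p → Module.finrank k (V ^ (p + 2) : Submodule k O) +
        Module.finrank k (V ^ p : Submodule k O) =
        2 * Module.finrank k (V ^ (p + 1) : Submodule k O) + s) ∧
      ∃ (K : Type u) (_ : Field K) (_ : Algebra k K) (t₀ t₁ : Fin (ρ + 2 + 1) → K),
        (V ^ (N + 1)).baseChange K ≤ mulS (gxi t₀ (Fin.cons 1 v)) ((V ^ N).baseChange K) ⊔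
          ((V ^ N).baseChange K ⊔ mulS (gxi t₁ (Fin.cons 1 v)) ((V ^ N).baseChange K)) ∧
        Module.finrank k (V ^ (N + 1) : Submodule k O) ≤
          Module.finrank K (mulS (gxi t₀ (Fin.cons 1 v)) ((V ^ N).baseChange K) ⊔
            mulS (gxi t₁ (Fin.cons 1 v)) ((V ^ N).baseChange K) : Submodule K (K ⊗[k] O)) + s := by
  obtain ⟨Ω, _, _, _, ι, hι⟩ := exists_iota k O (ρ + 2)
  have hfin : Module.Finite k V := by
    rw [← hV]; exact Module.Finite.span_of_finite k (Set.finite_range _)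
  have hdim : Module.finrank k V = ρ + 3 := by
    rw [← hV, finrank_span_eq_card hw]; simp
  have hcl : ∀ x ∈ gLam ι v, IsAlgebraic (kap ι v) x → x ∈ kap ι v := by
    refine algClosedIn_of_unbounded ι hι v hV ?_
    have hdom : IsDomain (kap ι v ⊗[k] O) := isDomain_tensor
    refine unbounded_of_section (s := s) (isSection_kap ι hι (Nat.succ_pos _) v hw hV) (by omega)
      (second_difference_baseChange hh)
  obtain ⟨e⟩ := nonempty_lift (kap ι v) Ω
  let alg : Algebra (AlgebraicClosure (kap ι v)) Ω := e.toRingHom.toAlgebra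
  have tow : IsScalarTower (kap ι v) (AlgebraicClosure (kap ι v)) Ω :=
    IsScalarTower.of_algebraMap_eq' e.comp_algebraMap.symm
  have tow2 : IsScalarTower k (AlgebraicClosure (kap ι v)) Ω :=
    IsScalarTower.of_algebraMap_eq' (by
      rw [IsScalarTower.algebraMap_eq k (kap ι v) (AlgebraicClosure (kap ι v)), ← RingHom.comp_assoc,
        ← IsScalarTower.algebraMap_eq, ← IsScalarTower.algebraMap_eq])
  have hsec := isSection_ext ι hι (Nat.succ_pos _) v hw hV hcl (K := AlgebraicClosure (kap ι v))
  obtain ⟨q, N, h1, h2, h3, h4, h5, h6, t₁, h7, h8⟩ :=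
    surface_ext hV hgen hsec hdim hh hm1 hm hms hG
  exact ⟨q, N, h1, h2, h3, h4, h5, h6, _, _, _, _, t₁, h7, h8⟩

end Surface

end SurfReg

end Part6c

/-! ### Pencils of linear forms -/

section Part7a

open scoped TensorProduct

namespace SurfReg

section Pencil

variable {F A : Type*} [Field F] [CommRing A] [Algebra F A]

/-- The degree `p + 1` part `l₀ V ^ p + l₁ V ^ p` of the ideal generated by two linear forms. -/
def pen (V : Submodule F A) (l₀ l₁ : A) (p : ℕ) : Submodule F A :=
  mulS l₀ (V ^ p) ⊔ mulS l₁ (V ^ p)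

theorem mulS_le_pow_succ {V : Submodule F A} {l : A} (hl : l ∈ V) (p : ℕ) :
    mulS l (V ^ p) ≤ V ^ (p + 1) := by
  intro x hx
  obtain ⟨v, hv, rfl⟩ := mem_mulS.1 hx
  rw [pow_succ']
  exact Submodule.mul_mem_mul hl hv

theorem pen_le {V : Submodule F A} {l₀ l₁ : A} (h₀ : l₀ ∈ V) (h₁ : l₁ ∈ V) (p : ℕ) :
    pen V l₀ l₁ p ≤ V ^ (p + 1) :=
  sup_le (mulS_le_pow_succ h₀ p) (mulS_le_pow_succ h₁ p)

theorem pen_mul (V : Submodule F A) (l₀ l₁ : A) (p : ℕ) :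
    pen V l₀ l₁ p * V = pen V l₀ l₁ (p + 1) := by
  rw [pen, Submodule.sup_mul, mulS_mul, mulS_mul, ← pow_succ]; rfl

theorem pen_mono {V : Submodule F A} (h1 : (1 : A) ∈ V) (l₀ l₁ : A) (p : ℕ) :
    pen V l₀ l₁ p ≤ pen V l₀ l₁ (p + 1) :=
  sup_le_sup (mulS_mono (pow_mono' h1 (Nat.le_succ p))) (mulS_mono (pow_mono' h1 (Nat.le_succ p)))

instance finite_pen (V : Submodule F A) [Module.Finite F V] (l₀ l₁ : A) (p : ℕ) :
    Module.Finite F (pen V l₀ l₁ p) := by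
  unfold pen; infer_instance

/-- The covering condition propagates to higher degrees. -/
theorem pencil_cover {V : Submodule F A} {l₀ l₁ : A} {N : ℕ}
    (hcov : V ^ (N + 1) ≤ pen V l₀ l₁ N ⊔ V ^ N) {p : ℕ} (hp : N ≤ p) :
    V ^ (p + 1) ≤ pen V l₀ l₁ p ⊔ V ^ p := by
  induction p, hp using Nat.le_induction with
  | base => exact hcov
  | succ p _ ih =>
    rw [pow_succ]
    refine (mul_le_mul' ih (le_refl V)).trans ?_
    rw [Submodule.sup_mul, pen_mul, ← pow_succ]

theorem finrank_pen_cover {V : Submodule F A} [Module.Finite F V] (h1 : (1 : A) ∈ V) {l₀ l₁ : A}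
    (h₀ : l₀ ∈ V) (h₁ : l₁ ∈ V) {N : ℕ}
    (hcov : V ^ (N + 1) ≤ pen V l₀ l₁ N ⊔ V ^ N) {p : ℕ} (hp : N ≤ p) :
    Module.finrank F (V ^ (p + 1) : Submodule F A) +
      Module.finrank F (pen V l₀ l₁ p ⊓ V ^ p : Submodule F A) =
      Module.finrank F (pen V l₀ l₁ p) + Module.finrank F (V ^ p : Submodule F A) := by
  have he : pen V l₀ l₁ p ⊔ V ^ p = V ^ (p + 1) :=
    le_antisymm (sup_le (pen_le h₀ h₁ p) (pow_mono' h1 (Nat.le_succ p))) (pencil_cover hcov hp)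
  have := Submodule.finrank_sup_add_finrank_inf_eq (pen V l₀ l₁ p) (V ^ p)
  rwa [he] at this

/-- The codimension of `pen V l₀ l₁ p` in `V ^ (p + 1)` stays at most `s` beyond degree `N`. -/
theorem finrank_pen_codim {V : Submodule F A} [Module.Finite F V] (h1 : (1 : A) ∈ V) {l₀ l₁ : A}
    (h₀ : l₀ ∈ V) (h₁ : l₁ ∈ V) {N s : ℕ}
    (hcov : V ^ (N + 1) ≤ pen V l₀ l₁ N ⊔ V ^ N)
    (hrank : Module.finrank F (V ^ (N + 1) : Submodule F A) ≤
      Module.finrank F (pen V l₀ l₁ N) + s) {p : ℕ} (hp : N ≤ p) :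
    Module.finrank F (V ^ (p + 1) : Submodule F A) ≤ Module.finrank F (pen V l₀ l₁ p) + s := by
  induction p, hp using Nat.le_induction with
  | base => exact hrank
  | succ p hp ih =>
    have h2 := finrank_pen_cover h1 h₀ h₁ hcov (p := p + 1) (by omega)
    have h3 : Module.finrank F (pen V l₀ l₁ p) ≤
        Module.finrank F (pen V l₀ l₁ (p + 1) ⊓ V ^ (p + 1) : Submodule F A) :=
      Submodule.finrank_mono (le_inf (pen_mono h1 l₀ l₁ p) (pen_le h₀ h₁ p))
    omega

/-- The Koszul relation `l₀ l₁ = l₁ l₀` gives the trivial part of the intersection of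
`l₀ V ^ (p + 1)` and `l₁ V ^ (p + 1)`. -/
theorem mulS_mulS_le {V : Submodule F A} {l₀ l₁ : A} (h₀ : l₀ ∈ V) (h₁ : l₁ ∈ V) (p : ℕ) :
    mulS (l₀ * l₁) (V ^ p) ≤ mulS l₀ (V ^ (p + 1)) ⊓ mulS l₁ (V ^ (p + 1)) := by
  intro x hx
  obtain ⟨v, hv, rfl⟩ := mem_mulS.1 hx
  constructor
  · rw [mul_assoc]; exact mul_mem_mulS (mulS_le_pow_succ h₁ p (mul_mem_mulS hv))
  · rw [mul_comm l₀, mul_assoc]; exact mul_mem_mulS (mulS_le_pow_succ h₀ p (mul_mem_mulS hv))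

variable [IsDomain A]

/-- Beyond degree `N` the constant `1` and the form `l₁` act injectively on the successive quotients
by the pencil, because all dimensions are forced by the second difference of the Hilbert function. -/
theorem pencil_regular {V : Submodule F A} [Module.Finite F V] (h1 : (1 : A) ∈ V) {l₀ l₁ : A}
    (h₀ : l₀ ∈ V) (h₁ : l₁ ∈ V) (hz₀ : l₀ ≠ 0) (hz₁ : l₁ ≠ 0) {N s : ℕ}
    (hcov : V ^ (N + 1) ≤ pen V l₀ l₁ N ⊔ V ^ N)
    (hrank : Module.finrank F (V ^ (N + 1) : Submodule F A) ≤
      Module.finrank F (pen V l₀ l₁ N) + s)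
    (hh : ∀ p, N ≤ p → Module.finrank F (V ^ (p + 2) : Submodule F A) +
      Module.finrank F (V ^ p : Submodule F A) =
      2 * Module.finrank F (V ^ (p + 1) : Submodule F A) + s) {p : ℕ} (hp : N ≤ p) :
    (∀ f ∈ V ^ (p + 1), f ∈ pen V l₀ l₁ (p + 1) → f ∈ pen V l₀ l₁ p) ∧
    (∀ a ∈ V ^ (p + 1), l₁ * a ∈ mulS l₀ (V ^ (p + 1)) → a ∈ mulS l₀ (V ^ p)) := by
  have e1 := Submodule.finrank_sup_add_finrank_inf_eq (mulS l₀ (V ^ (p + 1))) (mulS l₁ (V ^ (p + 1)))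
  rw [finrank_mulS hz₀, finrank_mulS hz₁] at e1
  change Module.finrank F (pen V l₀ l₁ (p + 1)) + _ = _ at e1
  have e2 : Module.finrank F (mulS (l₀ * l₁) (V ^ p)) ≤
      Module.finrank F (mulS l₀ (V ^ (p + 1)) ⊓ mulS l₁ (V ^ (p + 1)) : Submodule F A) :=
    Submodule.finrank_mono (mulS_mulS_le h₀ h₁ p)
  have e3 := finrank_mulS (F := F) (mul_ne_zero hz₀ hz₁) (V ^ p)
  have e4 := finrank_pen_codim h1 h₀ h₁ hcov hrank (p := p + 1) (by omega)
  have e5 := hh p hp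
  have e6 := finrank_pen_codim h1 h₀ h₁ hcov hrank hp
  have e7 := finrank_pen_cover h1 h₀ h₁ hcov (p := p + 1) (by omega)
  have e8 : Module.finrank F (pen V l₀ l₁ p) ≤
      Module.finrank F (pen V l₀ l₁ (p + 1) ⊓ V ^ (p + 1) : Submodule F A) :=
    Submodule.finrank_mono (le_inf (pen_mono h1 l₀ l₁ p) (pen_le h₀ h₁ p))
  rw [show p + 1 + 1 = p + 2 from rfl] at e4 e7
  constructor
  · have := Submodule.eq_of_le_of_finrank_le
      (le_inf (pen_mono h1 l₀ l₁ p) (pen_le h₀ h₁ p)) (by omega)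
    intro f hf hf'
    rw [this]
    exact ⟨hf', hf⟩
  · have := Submodule.eq_of_le_of_finrank_le (mulS_mulS_le h₀ h₁ p) (by omega)
    intro a ha hl
    have h2 : l₁ * a ∈ mulS (l₀ * l₁) (V ^ p) := by
      rw [this]; exact ⟨hl, mul_mem_mulS ha⟩
    obtain ⟨b, hb, hab⟩ := mem_mulS.1 h2
    have : l₁ * (l₀ * b) = l₁ * a := by rw [← hab]; ring
    rw [← mul_left_cancel₀ hz₁ this]
    exact mul_mem_mulS hb

end Pencil

section Generic

variable {k O K : Type*} [Field k] [Field K] [Algebra k K] [CommRing O] [Algebra k O]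

/-- A generic pencil over an extension field specialises to the pencils over the ground field
parametrised by a nonempty open set. -/
theorem exists_pencil {n : ℕ} {w : Fin (n + 1) → O} {V : Submodule k O} [Module.Finite k V]
    (hV : Submodule.span k (Set.range w) = V) (h1 : (1 : O) ∈ V) {N s : ℕ} {t₀ t₁ : Fin (n + 1) → K}
    (hcov : (V ^ (N + 1)).baseChange K ≤ mulS (gxi t₀ w) ((V ^ N).baseChange K) ⊔
      ((V ^ N).baseChange K ⊔ mulS (gxi t₁ w) ((V ^ N).baseChange K)))
    (hrank : Module.finrank k (V ^ (N + 1) : Submodule k O) ≤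
      Module.finrank K (mulS (gxi t₀ w) ((V ^ N).baseChange K) ⊔
        mulS (gxi t₁ w) ((V ^ N).baseChange K) : Submodule K (K ⊗[k] O)) + s) :
    ∃ Q : MvPolynomial (Fin 2 × Fin (n + 1)) k, Q ≠ 0 ∧ ∀ c : Fin 2 → Fin (n + 1) → k,
      MvPolynomial.eval (fun p => c p.1 p.2) Q ≠ 0 → c 0 0 ≠ 0 ∧ c 1 0 ≠ 0 ∧
      V ^ (N + 1) ≤ pen V (∑ j, c 0 j • w j) (∑ j, c 1 j • w j) N ⊔ V ^ N ∧
      Module.finrank k (V ^ (N + 1) : Submodule k O) ≤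
        Module.finrank k (pen V (∑ j, c 0 j • w j) (∑ j, c 1 j • w j) N) + s := by
  classical
  let a : Fin 2 × Fin (n + 1) → (Fin 2 × (V ^ N : Submodule k O)) → O :=
    fun p e => if p.1 = e.1 then w p.2 * (e.2 : O) else 0
  let t : Fin 2 × Fin (n + 1) → K := fun p => if p.1 = 0 then t₀ p.2 else t₁ p.2
  have hin : ∀ c : Fin 2 → Fin (n + 1) → k, ∀ i, ∑ j, c i j • w j ∈ V := fun c i =>
    Submodule.sum_mem _ fun j _ => Submodule.smul_mem _ _ (hV ▸ Submodule.subset_span ⟨j, rfl⟩)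
  have hsum0 : ∀ e : (V ^ N : Submodule k O), ∑ p, t p ⊗ₜ[k] a p (0, e) =
      ∑ j, t₀ j ⊗ₜ[k] (w j * (e : O)) := fun e => by
    simp [Fintype.sum_prod_type, Fin.sum_univ_two, a, t]
  have hsum1 : ∀ e : (V ^ N : Submodule k O), ∑ p, t p ⊗ₜ[k] a p (1, e) =
      ∑ j, t₁ j ⊗ₜ[k] (w j * (e : O)) := fun e => by
    simp [Fintype.sum_prod_type, Fin.sum_univ_two, a, t]
  have hs0 : ∀ (c : Fin 2 → Fin (n + 1) → k) (i : Fin 2) (e : (V ^ N : Submodule k O)),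
      ∑ p : Fin 2 × Fin (n + 1), c p.1 p.2 • a p (i, e) = (∑ j, c i j • w j) * (e : O) := by
    intro c i e
    fin_cases i <;> simp [Fintype.sum_prod_type, Fin.sum_univ_two, a, Finset.sum_mul]
  have hspan : Submodule.span K (Set.range fun e : Fin 2 × (V ^ N : Submodule k O) =>
      (1 : K) ⊗ₜ[k] (0 : O) + ∑ p, t p ⊗ₜ[k] a p e) =
      mulS (gxi t₀ w) ((V ^ N).baseChange K) ⊔ mulS (gxi t₁ w) ((V ^ N).baseChange K) := by
    rw [← span_gxi, ← span_gxi, ← Submodule.span_union]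
    congr 1
    ext x
    constructor
    · rintro ⟨⟨i, e⟩, rfl⟩
      fin_cases i
      · left; refine ⟨e, ?_⟩; simpa using (hsum0 e).symm
      · right; refine ⟨e, ?_⟩; simpa using (hsum1 e).symm
    · rintro (⟨e, rfl⟩ | ⟨e, rfl⟩)
      · exact ⟨(0, e), by simpa using hsum0 e⟩
      · exact ⟨(1, e), by simpa using hsum1 e⟩
  obtain ⟨Q₁, hQ₁, h₁⟩ := exists_poly_rank (F := K) (fun _ => (0 : O)) a t
    (Module.finrank k (V ^ (N + 1) : Submodule k O) - s) (by rw [hspan]; omega)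
  let b₀ : (Fin 2 × (V ^ N : Submodule k O)) ⊕ (V ^ N : Submodule k O) → O :=
    Sum.elim (fun _ => 0) fun e => (e : O)
  let b : Fin 2 × Fin (n + 1) → (Fin 2 × (V ^ N : Submodule k O)) ⊕ (V ^ N : Submodule k O) → O :=
    fun p => Sum.elim (a p) fun _ => 0
  have hle : Submodule.span K (Set.range fun e => (1 : K) ⊗ₜ[k] b₀ e + ∑ p, t p ⊗ₜ[k] b p e) =
      (V ^ (N + 1)).baseChange K := by
    have h2 : Submodule.span K (Set.range fun e => (1 : K) ⊗ₜ[k] b₀ e + ∑ p, t p ⊗ₜ[k] b p e) =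
        mulS (gxi t₀ w) ((V ^ N).baseChange K) ⊔
      ((V ^ N).baseChange K ⊔ mulS (gxi t₁ w) ((V ^ N).baseChange K)) := by
      rw [sup_left_comm, ← hspan, ← span_one_tmul (V ^ N), ← Submodule.span_union, Set.union_comm]
      congr 1
      ext x
      constructor
      · rintro ⟨e | e, rfl⟩
        · left; exact ⟨e, by simp [b₀, b]⟩
        · right; exact ⟨e, by simp [b₀, b]⟩
      · rintro (⟨e, rfl⟩ | ⟨e, rfl⟩)
        · exact ⟨Sum.inl e, by simp [b₀, b]⟩
        · exact ⟨Sum.inr e, by simp [b₀, b]⟩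
    rw [h2]
    have hg : ∀ t' : Fin (n + 1) → K, mulS (gxi t' w) ((V ^ N).baseChange K) ≤
        (V ^ (N + 1)).baseChange K := fun t' => by
      rw [baseChange_pow, baseChange_pow]
      exact mulS_le_pow_succ (sum_mem fun j _ =>
        Submodule.tmul_mem_baseChange_of_mem _ (hV ▸ Submodule.subset_span ⟨j, rfl⟩)) N
    refine le_antisymm (sup_le (hg _) (sup_le ?_ (hg _))) hcov
    exact Submodule.baseChange_mono _ (pow_mono' h1 (Nat.le_succ N))
  obtain ⟨Q₂, hQ₂, h₂⟩ := exists_poly_rank (F := K) b₀ b t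
    (Module.finrank k (V ^ (N + 1) : Submodule k O)) (by rw [hle, finrank_baseChange])
  refine ⟨Q₁ * Q₂ * (MvPolynomial.X (0, 0) * MvPolynomial.X (1, 0)),
    mul_ne_zero (mul_ne_zero hQ₁ hQ₂) (mul_ne_zero (MvPolynomial.X_ne_zero _)
      (MvPolynomial.X_ne_zero _)), fun c hc => ?_⟩
  simp only [map_mul, mul_ne_zero_iff, MvPolynomial.eval_X] at hc
  obtain ⟨⟨hc1, hc2⟩, hc3, hc4⟩ := hc
  refine ⟨hc3, hc4, ?_, ?_⟩
  · have hp := pen_le (hin c 0) (hin c 1) N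
    have h3 := h₂ (fun p => c p.1 p.2) hc2
      (pen V (∑ j, c 0 j • w j) (∑ j, c 1 j • w j) N ⊔ V ^ N) inferInstance ?_
    · exact (Submodule.eq_of_le_of_finrank_le
        (sup_le hp (pow_mono' h1 (Nat.le_succ N))) h3).ge
    · rintro (⟨i, e⟩ | e)
      · refine Submodule.mem_sup_left ?_
        simp only [b₀, b, Sum.elim_inl, zero_add, hs0]
        fin_cases i
        · exact Submodule.mem_sup_left (mul_mem_mulS e.2)
        · exact Submodule.mem_sup_right (mul_mem_mulS e.2)
      · refine Submodule.mem_sup_right ?_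
        simp [b₀, b]
  · have h3 := h₁ (fun p => c p.1 p.2) hc1
      (pen V (∑ j, c 0 j • w j) (∑ j, c 1 j • w j) N) inferInstance ?_
    · omega
    · rintro ⟨i, e⟩
      simp only [zero_add, hs0]
      fin_cases i
      · exact Submodule.mem_sup_left (mul_mem_mulS e.2)
      · exact Submodule.mem_sup_right (mul_mem_mulS e.2)

end Generic

end SurfReg

end Part7a

/-! ### Graded homomorphisms and extension of sections -/

section Part7b

open MvPolynomial

namespace SurfReg

section Graded

variable {n : ℕ}

theorem finite_homogeneous (d : ℕ) : Module.Finite ℂ (homogeneousSubmodule (Fin n) ℂ d) := by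
  rw [← homogeneousSubmodule_one_pow, homogeneousSubmodule_one_eq_span_X]
  have : Module.Finite ℂ (Submodule.span ℂ (Set.range (X : Fin n → MvPolynomial (Fin n) ℂ))) :=
    Module.Finite.span_of_finite _ (Set.finite_range _)
  infer_instance

theorem mem_sup_span {I : Ideal (MPoly n)} {ℓ f : MPoly n} :
    f ∈ I ⊔ Ideal.span {ℓ} ↔ ∃ b, f - b * ℓ ∈ I := by
  rw [Submodule.mem_sup]
  constructor
  · rintro ⟨y, hy, z, hz, rfl⟩
    obtain ⟨b, rfl⟩ := Ideal.mem_span_singleton'.1 hz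
    exact ⟨b, by simpa using hy⟩
  · rintro ⟨b, hb⟩
    exact ⟨_, hb, _, Ideal.mem_span_singleton'.2 ⟨b, rfl⟩, by ring⟩

theorem homogeneousComponent_self {f : MPoly n} {d : ℕ} (hf : f.IsHomogeneous d) :
    homogeneousComponent d f = f := by
  rw [homogeneousComponent_of_mem ((mem_homogeneousSubmodule _ _).2 hf), if_pos rfl]

theorem exists_homogeneous_of_mem_sup {I : Ideal (MPoly n)} (hI : IsHomogIdeal I) {ℓ f : MPoly n}
    (hℓ : ℓ.IsHomogeneous 1) {d : ℕ} (hf : f.IsHomogeneous (d + 1))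
    (h : f ∈ I ⊔ Ideal.span {ℓ}) : ∃ b : MPoly n, b.IsHomogeneous d ∧ f - b * ℓ ∈ I := by
  obtain ⟨b, hb⟩ := mem_sup_span.1 h
  refine ⟨homogeneousComponent d b, homogeneousComponent_isHomogeneous _ _, ?_⟩
  have := hI _ hb (d + 1)
  rwa [map_sub, homogeneousComponent_self hf, homogeneousComponent_mul_right hℓ] at this

theorem isHomogIdeal_sup {I : Ideal (MPoly n)} (hI : IsHomogIdeal I) {ℓ : MPoly n}
    (hℓ : ℓ.IsHomogeneous 1) : IsHomogIdeal (I ⊔ Ideal.span {ℓ}) := by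
  intro f hf d
  obtain ⟨b, hb⟩ := mem_sup_span.1 hf
  have h := hI _ hb d
  rw [map_sub] at h
  cases d with
  | zero =>
    refine mem_sup_span.2 ⟨0, ?_⟩
    have h0 : homogeneousComponent 0 (b * ℓ) = 0 := by
      rw [homogeneousComponent_zero, ← constantCoeff_eq, map_mul,
        constantCoeff_eq, hℓ.coeff_eq_zero (by simp), mul_zero, C_0]
    rw [h0] at h
    simpa using h
  | succ d =>
    rw [homogeneousComponent_mul_right hℓ] at h
    exact mem_sup_span.2 ⟨_, h⟩

theorem isHomogIdeal_sat {I : Ideal (MPoly n)} (hI : IsHomogIdeal I) :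
    IsHomogIdeal (satIdeal I) := by
  rintro f ⟨p, hp⟩ d
  refine ⟨p, fun j => ?_⟩
  have h := hI _ (hp j) (d + p)
  rwa [mul_comm, homogeneousComponent_mul_right (isHomogeneous_X_pow j p), mul_comm] at h

/-- Membership in a homogeneous ideal can be checked on homogeneous components. -/
theorem mem_of_homogeneousComponent {I : Ideal (MPoly n)} {f : MPoly n}
    (h : ∀ d, homogeneousComponent d f ∈ I) : f ∈ I := by
  rw [← sum_homogeneousComponent f]
  exact sum_mem fun d _ => h d

theorem le_satIdeal (I : Ideal (MPoly n)) : I ≤ satIdeal I := fun f hf =>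
  ⟨0, fun _ => by simpa using hf⟩

/-- Extension of sections: if `ℓ` is regular modulo `J` and `R / (J + ℓ)` has no torsion in degrees
above `T`, every degree `T` homomorphism from a power of the irrelevant ideal into `R / J` is
multiplication by a form of degree `T`. -/
theorem gradedHom_eq_smul {J : Ideal (MPoly n)} (hJ : IsHomogIdeal J) {ℓ : MPoly n}
    (hℓ : ℓ.IsHomogeneous 1) (hm : ℓ ∈ mId n) (hreg : ∀ f, ℓ * f ∈ J → f ∈ J) {T : ℕ}
    (htor : ∀ d, T ≤ d → ∀ f : MPoly n, f.IsHomogeneous (d + 1) →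
      f ∈ satIdeal (J ⊔ Ideal.span {ℓ}) → f ∈ J ⊔ Ideal.span {ℓ}) {p : ℕ}
    {φ : (mId n ^ p : Ideal (MPoly n)) →ₗ[MPoly n] (MPoly n ⧸ J)}
    (hφ : φ ∈ gradedHomSub J p T) :
    ∃ h : MPoly n, h.IsHomogeneous T ∧ ∀ f, φ f = Ideal.Quotient.mk J (h * f) := by
  have hregp : ∀ i f, ℓ ^ i * f ∈ J → f ∈ J := by
    intro i
    induction i with
    | zero => intro f hf; simpa using hf
    | succ i ih => intro f hf; exact ih f (hreg _ (by rwa [← mul_assoc, ← pow_succ']))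
  have hℓp : ℓ ^ p ∈ mId n ^ p := Ideal.pow_mem_pow hm p
  have hcomm : ∀ f : (mId n ^ p : Ideal (MPoly n)), ℓ ^ p • φ f = (f : MPoly n) • φ ⟨ℓ ^ p, hℓp⟩ := by
    intro f
    rw [← map_smul, ← map_smul]
    congr 1
    ext1
    simp [mul_comm]
  obtain ⟨g, hg, hgφ⟩ : ∃ g : MPoly n, g.IsHomogeneous (p + T) ∧
      Ideal.Quotient.mk J g = φ ⟨ℓ ^ p, hℓp⟩ := by
    have h := hφ p (ℓ ^ p) hℓp ((mem_homogeneousSubmodule _ _).2 (by simpa using hℓ.pow p))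
    rw [degQZ, if_pos (by positivity), show ((p : ℤ) + T).toNat = p + T by omega] at h
    obtain ⟨g, hg, hg'⟩ := h
    exact ⟨g, hg, hg'⟩
  have hu : ∀ j : Fin n, ∃ u, X j ^ p * g - u * ℓ ^ p ∈ J := by
    intro j
    have hX : (X j : MPoly n) ^ p ∈ mId n ^ p := Ideal.pow_mem_pow (Ideal.subset_span (Set.mem_range_self j)) p
    obtain ⟨u, hu⟩ := Ideal.Quotient.mk_surjective (φ ⟨X j ^ p, hX⟩)
    refine ⟨u, ?_⟩
    have h := hcomm ⟨X j ^ p, hX⟩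
    rw [← hu, ← hgφ] at h
    change Ideal.Quotient.mk J (ℓ ^ p * u) = Ideal.Quotient.mk J (X j ^ p * g) at h
    rw [mul_comm u]
    exact Ideal.Quotient.eq.1 h.symm
  -- The factors `ℓ` are divided out one at a time.
  have hstep : ∀ i, i ≤ p → ∃ h : MPoly n, h.IsHomogeneous (T + (p - i)) ∧ g - ℓ ^ i * h ∈ J := by
    intro i
    induction i with
    | zero => intro _; exact ⟨g, by rwa [Nat.sub_zero, add_comm], by simp⟩
    | succ i ih =>
      intro hi
      obtain ⟨h, hh, hgh⟩ := ih (by omega)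
      rw [show T + (p - i) = T + (p - (i + 1)) + 1 by omega] at hh
      have hs : h ∈ satIdeal (J ⊔ Ideal.span {ℓ}) := by
        refine ⟨p, fun j => ?_⟩
        obtain ⟨u, hu⟩ := hu j
        refine mem_sup_span.2 ⟨u * ℓ ^ (p - (i + 1)), hregp i _ ?_⟩
        have e : ℓ ^ p = ℓ ^ i * (ℓ ^ (p - (i + 1)) * ℓ) := by
          rw [← pow_succ, ← pow_add]; congr 1; omega
        have : ℓ ^ i * (X j ^ p * h - u * ℓ ^ (p - (i + 1)) * ℓ) =
            (X j ^ p * g - u * ℓ ^ p) - X j ^ p * (g - ℓ ^ i * h) := by rw [e]; ring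
        rw [this]
        exact sub_mem hu (J.mul_mem_left _ hgh)
      obtain ⟨b, hb, hb'⟩ := exists_homogeneous_of_mem_sup hJ hℓ hh (htor _ (by omega) h hh hs)
      refine ⟨b, hb, ?_⟩
      have : g - ℓ ^ (i + 1) * b = (g - ℓ ^ i * h) + ℓ ^ i * (h - b * ℓ) := by ring
      rw [this]
      exact add_mem hgh (J.mul_mem_left _ hb')
  obtain ⟨h, hh, hgh⟩ := hstep p le_rfl
  rw [Nat.sub_self, add_zero] at hh
  refine ⟨h, hh, fun f => ?_⟩
  obtain ⟨u, hu⟩ := Ideal.Quotient.mk_surjective (φ f)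
  have h3 := hcomm f
  rw [← hu, ← hgφ] at h3
  change Ideal.Quotient.mk J (ℓ ^ p * u) = Ideal.Quotient.mk J (f * g) at h3
  rw [← hu]
  refine Ideal.Quotient.eq.2 (hregp p _ ?_)
  have : ℓ ^ p * (u - h * f) = (ℓ ^ p * u - f * g) + f * (g - ℓ ^ p * h) := by ring
  rw [this]
  exact add_mem (Ideal.Quotient.eq.1 h3) (J.mul_mem_left _ hgh)

/-- If `ℓ` is regular on the quotient by `J` and the quotient by `J + (ℓ)` has no finite-length part in
degrees greater than `T`, then `h¹` vanishes in degree `T`: by `gradedHom_eq_smul` every class is a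
multiplication by a form of degree `T`. -/
theorem h1INat_eq_zero {J : Ideal (MPoly n)} (hJ : IsHomogIdeal J) {ℓ : MPoly n}
    (hℓ : ℓ.IsHomogeneous 1) (hm : ℓ ∈ mId n) (hreg : ∀ f, ℓ * f ∈ J → f ∈ J) {T : ℕ}
    (htor : ∀ d, T ≤ d → ∀ f : MPoly n, f.IsHomogeneous (d + 1) →
      f ∈ satIdeal (J ⊔ Ideal.span {ℓ}) → f ∈ J ⊔ Ideal.span {ℓ}) :
    h1INat J T = 0 := by
  rw [h1INat, Nat.sub_eq_zero_iff_le, h0Nat]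
  refine ciSup_le' fun p => ?_
  let ψ : (mId n ^ p : Ideal (MPoly n)) →ₗ[MPoly n] (MPoly n ⧸ J) :=
    J.mkQ.comp (Submodule.subtype _)
  let Φ : MPoly n →ₗ[ℂ] ((mId n ^ p : Ideal (MPoly n)) →ₗ[MPoly n] (MPoly n ⧸ J)) :=
    (LinearMap.toSpanSingleton (MPoly n) _ ψ).restrictScalars ℂ
  have hfin := finite_homogeneous (n := n) T
  have hle : gradedHomSub J p T ≤ (homogeneousSubmodule (Fin n) ℂ T).map Φ := by
    intro φ hφ
    obtain ⟨h, hh, hφh⟩ := gradedHom_eq_smul hJ hℓ hm hreg htor hφ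
    refine ⟨h, hh, ?_⟩
    ext f
    rw [hφh f]
    rfl
  have h1 := finrank_map_add_inf_ker Φ (homogeneousSubmodule (Fin n) ℂ T)
  have h2 := finrank_map_add_inf_ker (Ideal.Quotient.mkₐ ℂ J).toLinearMap
    (homogeneousSubmodule (Fin n) ℂ T)
  have hker : homogeneousSubmodule (Fin n) ℂ T ⊓ LinearMap.ker (Ideal.Quotient.mkₐ ℂ J).toLinearMap ≤
      homogeneousSubmodule (Fin n) ℂ T ⊓ LinearMap.ker Φ := by
    rintro f ⟨hf, hf'⟩
    refine ⟨hf, ?_⟩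
    have hf'' : f ∈ J := Ideal.Quotient.eq_zero_iff_mem.1 hf'
    refine LinearMap.ext fun x => ?_
    change Ideal.Quotient.mk J (f * x) = 0
    exact Ideal.Quotient.eq_zero_iff_mem.2 (J.mul_mem_right _ hf'')
  have h3 : Module.finrank ℂ (homogeneousSubmodule (Fin n) ℂ T ⊓
      LinearMap.ker (Ideal.Quotient.mkₐ ℂ J).toLinearMap : Submodule ℂ (MPoly n)) ≤
      Module.finrank ℂ (homogeneousSubmodule (Fin n) ℂ T ⊓ LinearMap.ker Φ :
        Submodule ℂ (MPoly n)) := Submodule.finrank_mono hker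
  have h4 := Submodule.finrank_mono hle
  have h5 : hilbNat J T = Module.finrank ℂ ((homogeneousSubmodule (Fin n) ℂ T).map
      (Ideal.Quotient.mkₐ ℂ J).toLinearMap) := by
    rw [hilbNat, degQZ, if_pos (by positivity), Int.toNat_natCast]; rfl
  rw [h5]
  omega

end Graded

end SurfReg

end Part7b

/-! ### The affine chart -/

section Part7c

open MvPolynomial

namespace SurfReg

section Dehomogenize

variable {n : ℕ}

theorem aeval_mul_homogeneous {S : Type*} [CommRing S] [Algebra ℂ S] (c : S) (y : Fin n → S)
    {f : MPoly n} {d : ℕ} (hf : f.IsHomogeneous d) :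
    aeval (fun j => c * y j) f = c ^ d * aeval y f := by
  rw [aeval_def, aeval_def, eval₂_eq', eval₂_eq', Finset.mul_sum]
  refine Finset.sum_congr rfl fun m hm => ?_
  have h := hf (mem_support_iff.1 hm)
  replace h : m.degree = d := (DFunLike.congr_fun (Finsupp.degree_eq_weight_one (R := ℕ)) m).trans h
  simp only [mul_pow, Finset.prod_mul_distrib, Finset.prod_pow_eq_pow_sum]
  have : ∑ i, m i = d := by
    rw [← h, Finsupp.degree_eq_sum]
  rw [this]
  ring

/-- The affine coordinate ring of the chart `X₀ ≠ 0`. -/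
theorem exists_chart {I : Ideal (MPoly (n + 1))} (hp : I.IsPrime) (h0 : (X 0 : MPoly (n + 1)) ∉ I) :
    ∃ (O : Type) (_ : CommRing O) (_ : IsDomain O) (_ : Algebra ℂ O) (_ : Algebra.FiniteType ℂ O)
      (v : Fin n → O), Algebra.adjoin ℂ (Set.range (Fin.cons 1 v : Fin (n + 1) → O)) = ⊤ ∧
      ∀ (d : ℕ) (f : MPoly (n + 1)), f.IsHomogeneous d →
        (aeval (Fin.cons 1 v : Fin (n + 1) → O) f = 0 ↔ f ∈ I) := by
  have hdom : IsDomain (MPoly (n + 1) ⧸ I) := Ideal.Quotient.isDomain I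
  let K := FractionRing (MPoly (n + 1) ⧸ I)
  let x : Fin (n + 1) → K := fun j => algebraMap (MPoly (n + 1) ⧸ I) K (Ideal.Quotient.mk I (X j))
  have hx0 : x 0 ≠ 0 := by
    intro h
    have := (FaithfulSMul.algebraMap_injective (MPoly (n + 1) ⧸ I) K) (h.trans (map_zero _).symm)
    exact h0 (Ideal.Quotient.eq_zero_iff_mem.1 this)
  let φ : MPoly (n + 1) →ₐ[ℂ] K := aeval fun j => x j / x 0
  have hft : Algebra.FiniteType ℂ φ.range :=
    Algebra.FiniteType.of_surjective φ.rangeRestrict φ.rangeRestrict_surjective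
  let w : Fin (n + 1) → φ.range := fun j => φ.rangeRestrict (X j)
  have hw0 : w 0 = 1 := by
    apply Subtype.ext
    change φ (X 0) = 1
    simp [φ, hx0]
  have hw : (Fin.cons 1 (fun j : Fin n => w j.succ) : Fin (n + 1) → φ.range) = w := by
    rw [← hw0]; exact Fin.cons_self_tail w
  have haev : ∀ f, aeval w f = φ.rangeRestrict f := fun f => by
    have : aeval w = φ.rangeRestrict := by ext j; simp [w]
    rw [this]
  refine ⟨φ.range, inferInstance, inferInstance, inferInstance, hft, fun j => w j.succ, ?_, ?_⟩
  · rw [hw, Algebra.adjoin_range_eq_range_aeval]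
    rw [eq_top_iff]
    rintro y -
    obtain ⟨f, rfl⟩ := φ.rangeRestrict_surjective y
    exact ⟨f, haev f⟩
  · intro d f hf
    rw [hw, haev]
    have h1 : aeval x f = algebraMap (MPoly (n + 1) ⧸ I) K (Ideal.Quotient.mk I f) := by
      have : (aeval x : MPoly (n + 1) →ₐ[ℂ] K) =
          (IsScalarTower.toAlgHom ℂ (MPoly (n + 1) ⧸ I) K).comp (Ideal.Quotient.mkₐ ℂ I) := by
        ext j; simp [x]
      rw [this]; rfl
    have h2 : aeval x f = x 0 ^ d * φ f := by
      rw [← aeval_mul_homogeneous (x 0) _ hf]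
      congr 2
      ext j
      exact (mul_div_cancel₀ _ hx0).symm
    have h3 : φ.rangeRestrict f = 0 ↔ φ f = 0 := by rw [← Subtype.coe_inj]; rfl
    rw [h3]
    have h4 : φ f = 0 ↔ aeval x f = 0 := by
      rw [h2, mul_eq_zero]; simp [hx0]
    rw [h4, h1, map_eq_zero_iff _ (FaithfulSMul.algebraMap_injective _ _),
      Ideal.Quotient.eq_zero_iff_mem]

/-- The powers of the space `V` of affine linear functions compute the Hilbert function. -/
theorem finrank_pow_eq_hilbNat {I : Ideal (MPoly n)} {O : Type*} [CommRing O] [Algebra ℂ O]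
    {w : Fin n → O} (hw : ∀ (d : ℕ) (f : MPoly n), f.IsHomogeneous d →
      (aeval w f = 0 ↔ f ∈ I)) {V : Submodule ℂ O} (hV : Submodule.span ℂ (Set.range w) = V) (d : ℕ) :
    Module.finrank ℂ (V ^ d : Submodule ℂ O) = hilbNat I d := by
  have hfin := finite_homogeneous (n := n) d
  have h1 := finrank_map_add_inf_ker (aeval w).toLinearMap (homogeneousSubmodule (Fin n) ℂ d)
  have h2 := finrank_map_add_inf_ker (Ideal.Quotient.mkₐ ℂ I).toLinearMap
    (homogeneousSubmodule (Fin n) ℂ d)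
  rw [map_homogeneousSubmodule w hV] at h1
  have h3 : homogeneousSubmodule (Fin n) ℂ d ⊓ LinearMap.ker (aeval w).toLinearMap =
      homogeneousSubmodule (Fin n) ℂ d ⊓ LinearMap.ker (Ideal.Quotient.mkₐ ℂ I).toLinearMap := by
    ext f
    simp only [Submodule.mem_inf, LinearMap.mem_ker, mem_homogeneousSubmodule]
    refine and_congr_right fun hf => ?_
    rw [show (Ideal.Quotient.mkₐ ℂ I).toLinearMap f = Ideal.Quotient.mk I f from rfl,
      Ideal.Quotient.eq_zero_iff_mem, ← hw d f hf]
    rfl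
  rw [h3] at h1
  rw [hilbNat, degQZ, if_pos (by positivity), Int.toNat_natCast, degQ]
  exact Nat.add_right_cancel (h1.trans h2.symm)

theorem linearIndependent_of_nondeg {I : Ideal (MPoly n)} (hI : Nondeg I) {O : Type*} [CommRing O]
    [Algebra ℂ O] {w : Fin n → O} (hw : ∀ (d : ℕ) (f : MPoly n), f.IsHomogeneous d →
      (aeval w f = 0 ↔ f ∈ I)) : LinearIndependent ℂ w := by
  rw [Fintype.linearIndependent_iff]
  intro g hg i
  have hh : (∑ j, C (g j) * X j : MPoly n).IsHomogeneous 1 :=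
    IsHomogeneous.sum _ _ _ fun j _ => by
      simpa using (isHomogeneous_C (Fin n) (g j)).mul (isHomogeneous_X ℂ j)
  have h1 := hI _ ((mem_homogeneousSubmodule _ _).2 hh) ((hw 1 _ hh).1 (by
    simpa [Algebra.smul_def] using hg))
  have h2 := congrArg (coeff (Finsupp.single i 1)) h1
  simpa [coeff_sum, coeff_C_mul, coeff_X', Finsupp.single_left_inj] using h2

end Dehomogenize

end SurfReg

end Part7c

/-! ### Vanishing of `h¹` -/

section Part7d

open MvPolynomial

namespace SurfReg

section Vanishing

variable {n : ℕ}

theorem exists_pow_mul_mem {I : Ideal (MPoly n)} {f ℓ : MPoly n} (hℓ : ℓ ∈ mId n)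
    (hf : f ∈ satIdeal I) : ∃ M, ℓ ^ M * f ∈ I := by
  obtain ⟨p, hp⟩ := hf
  let C : Ideal (MPoly n) := Submodule.comap (LinearMap.mulRight (MPoly n) f) I
  have hle : mId n ≤ C.radical := by
    rw [mId, Ideal.span_le]
    rintro _ ⟨j, rfl⟩
    exact ⟨p, hp j⟩
  exact hle hℓ

variable {I : Ideal (MPoly n)} {O : Type*} [CommRing O] [Algebra ℂ O] {w : Fin n → O}
  {V : Submodule ℂ O}

theorem aeval_mem_pow (hV : Submodule.span ℂ (Set.range w) = V) {d : ℕ} {f : MPoly n}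
    (hf : f.IsHomogeneous d) : aeval w f ∈ V ^ d := by
  rw [← map_homogeneousSubmodule w hV]
  exact ⟨f, hf, rfl⟩

theorem exists_aeval_eq (hV : Submodule.span ℂ (Set.range w) = V) {d : ℕ} {a : O}
    (ha : a ∈ V ^ d) : ∃ f : MPoly n, f.IsHomogeneous d ∧ aeval w f = a := by
  rw [← map_homogeneousSubmodule w hV] at ha
  obtain ⟨f, hf, h⟩ := ha
  exact ⟨f, hf, h⟩

theorem aeval_mem_mulS_iff (hI : IsHomogIdeal I) (hw : ∀ (d : ℕ) (f : MPoly n), f.IsHomogeneous d →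
      (aeval w f = 0 ↔ f ∈ I)) (hV : Submodule.span ℂ (Set.range w) = V) {ℓ : MPoly n}
    (hℓ : ℓ.IsHomogeneous 1) {d : ℕ} {f : MPoly n} (hf : f.IsHomogeneous (d + 1)) :
    aeval w f ∈ mulS (aeval w ℓ) (V ^ d) ↔ f ∈ I ⊔ Ideal.span {ℓ} := by
  constructor
  · intro h
    obtain ⟨a, ha, hfa⟩ := mem_mulS.1 h
    obtain ⟨b, hb, rfl⟩ := exists_aeval_eq hV ha
    refine mem_sup_span.2 ⟨b, (hw (d + 1) _ (hf.sub (hb.mul hℓ))).1 ?_⟩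
    rw [map_sub, map_mul, ← hfa, mul_comm, sub_self]
  · intro h
    obtain ⟨b, hb, hfb⟩ := exists_homogeneous_of_mem_sup hI hℓ hf h
    have := (hw (d + 1) _ (hf.sub (hb.mul hℓ))).2 hfb
    rw [map_sub, map_mul, sub_eq_zero, mul_comm] at this
    rw [this]
    exact mul_mem_mulS (aeval_mem_pow hV hb)

theorem aeval_mem_pen_iff (hI : IsHomogIdeal I) (hw : ∀ (d : ℕ) (f : MPoly n), f.IsHomogeneous d →
      (aeval w f = 0 ↔ f ∈ I)) (hV : Submodule.span ℂ (Set.range w) = V) {ℓ₀ ℓ₁ : MPoly n}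
    (hℓ₀ : ℓ₀.IsHomogeneous 1) (hℓ₁ : ℓ₁.IsHomogeneous 1) {d : ℕ} {f : MPoly n}
    (hf : f.IsHomogeneous (d + 1)) :
    aeval w f ∈ pen V (aeval w ℓ₀) (aeval w ℓ₁) d ↔
      f ∈ I ⊔ Ideal.span {ℓ₀} ⊔ Ideal.span {ℓ₁} := by
  constructor
  · intro h
    obtain ⟨x, hx, y, hy, hxy⟩ := Submodule.mem_sup.1 h
    obtain ⟨a, ha, rfl⟩ := mem_mulS.1 hy
    obtain ⟨b, hb, rfl⟩ := exists_aeval_eq hV ha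
    refine mem_sup_span.2 ⟨b, (aeval_mem_mulS_iff hI hw hV hℓ₀ (hf.sub (hb.mul hℓ₁))).1 ?_⟩
    rw [map_sub, map_mul, ← hxy, mul_comm, add_sub_cancel_right]
    exact hx
  · intro h
    obtain ⟨b, hb, hfb⟩ := exists_homogeneous_of_mem_sup (isHomogIdeal_sup hI hℓ₀) hℓ₁ hf h
    have := (aeval_mem_mulS_iff hI hw hV hℓ₀ (hf.sub (hb.mul hℓ₁))).2 hfb
    refine Submodule.mem_sup.2 ⟨_, this, _, mul_mem_mulS (aeval_mem_pow hV hb), ?_⟩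
    rw [map_sub, map_mul, mul_comm, sub_add_cancel]

/-- If a form is regular in all large degrees modulo `I`, it is regular modulo the saturation. -/
theorem regular_sat (hI : IsHomogIdeal I) {ℓ : MPoly n} (hℓ : ℓ.IsHomogeneous 1) {N : ℕ}
    (h : ∀ d, N ≤ d → ∀ f : MPoly n, f.IsHomogeneous (d + 1) → ℓ * f ∈ I → f ∈ I) (f : MPoly n)
    (hf : ℓ * f ∈ satIdeal I) : f ∈ satIdeal I := by
  refine mem_of_homogeneousComponent fun d => ?_
  have h1 := isHomogIdeal_sat hI _ hf (d + 1)
  rw [mul_comm, homogeneousComponent_mul_right hℓ] at h1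
  obtain ⟨p, hp⟩ := h1
  refine ⟨p + N + 1, fun j => h (d + p + N) (by omega) _ ?_ ?_⟩
  · have := (isHomogeneous_X_pow (R := ℂ) j (p + N + 1)).mul
      (homogeneousComponent_isHomogeneous d f)
    rwa [show p + N + 1 + d = d + p + N + 1 by ring] at this
  · have : ℓ * (X j ^ (p + N + 1) * homogeneousComponent d f) =
        X j ^ (N + 1) * (X j ^ p * (homogeneousComponent d f * ℓ)) := by ring
    rw [this]
    exact I.mul_mem_left _ (hp j)

/-- If a form is regular in all large degrees modulo `I`, the ideal is saturated in these degrees. -/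
theorem mem_of_mem_sat {ℓ : MPoly n} (hℓ : ℓ.IsHomogeneous 1) (hm : ℓ ∈ mId n) {N : ℕ}
    (h : ∀ d, N ≤ d → ∀ f : MPoly n, f.IsHomogeneous (d + 1) → ℓ * f ∈ I → f ∈ I) {d : ℕ}
    (hd : N ≤ d) {f : MPoly n} (hf : f.IsHomogeneous (d + 1)) (hs : f ∈ satIdeal I) : f ∈ I := by
  obtain ⟨M, hM⟩ := exists_pow_mul_mem hm hs
  induction M with
  | zero => simpa using hM
  | succ M ih =>
    refine ih (h (d + M) (by omega) _ ?_ ?_)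
    · have := (hℓ.pow M).mul hf
      rwa [show 1 * M + (d + 1) = d + M + 1 by ring] at this
    · rwa [← mul_assoc, ← pow_succ']

end Vanishing

section Regularity

variable {n : ℕ} {I : Ideal (MPoly (n + 1))} {O : Type*} [CommRing O] [IsDomain O] [Algebra ℂ O]
  {w : Fin (n + 1) → O} {V : Submodule ℂ O}

/-- Beyond degree `N` the dimension count makes the pencil and `X₀` a regular sequence
(`pencil_regular`), so the criterion `h1INat_eq_zero` applies to the surface and to its successive
sections. -/
theorem h1INat_vanish (hI : IsHomogIdeal I) (hw0 : w 0 = 1)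
    (hw : ∀ (d : ℕ) (f : MPoly (n + 1)), f.IsHomogeneous d → (aeval w f = 0 ↔ f ∈ I))
    (hV : Submodule.span ℂ (Set.range w) = V) [Module.Finite ℂ V] {ℓ₀ ℓ₁ : MPoly (n + 1)}
    (hpr : I.IsPrime)
    (hℓ₀ : ℓ₀.IsHomogeneous 1) (hℓ₁ : ℓ₁.IsHomogeneous 1) (hm₀ : ℓ₀ ∈ mId (n + 1))
    (hm₁ : ℓ₁ ∈ mId (n + 1)) (hz₀ : aeval w ℓ₀ ≠ 0) (hz₁ : aeval w ℓ₁ ≠ 0) {N s : ℕ}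
    (hcov : V ^ (N + 1) ≤ pen V (aeval w ℓ₀) (aeval w ℓ₁) N ⊔ V ^ N)
    (hrank : Module.finrank ℂ (V ^ (N + 1) : Submodule ℂ O) ≤
      Module.finrank ℂ (pen V (aeval w ℓ₀) (aeval w ℓ₁) N) + s)
    (hh : ∀ p, N ≤ p → Module.finrank ℂ (V ^ (p + 2) : Submodule ℂ O) +
      Module.finrank ℂ (V ^ p : Submodule ℂ O) =
      2 * Module.finrank ℂ (V ^ (p + 1) : Submodule ℂ O) + s) {T : ℕ} (hT : N ≤ T) :
    h1INat I T = 0 ∧ h1INat (sect I ℓ₀) T = 0 ∧ h1INat (sect (sect I ℓ₀) ℓ₁) T = 0 := by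
  have h1V : (1 : O) ∈ V := by rw [← hw0, ← hV]; exact Submodule.subset_span ⟨0, rfl⟩
  have hl : ∀ ℓ : MPoly (n + 1), ℓ.IsHomogeneous 1 → aeval w ℓ ∈ V := fun ℓ h => by
    have := aeval_mem_pow hV h
    rwa [pow_one] at this
  have hreg := fun p (hp : N ≤ p) =>
    pencil_regular h1V (hl _ hℓ₀) (hl _ hℓ₁) hz₀ hz₁ hcov hrank hh hp
  have hX0 : (X 0 : MPoly (n + 1)).IsHomogeneous 1 := isHomogeneous_X ℂ 0
  have hmX : (X 0 : MPoly (n + 1)) ∈ mId (n + 1) := Ideal.subset_span (Set.mem_range_self 0)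
  have hI₁ := isHomogIdeal_sup hI hℓ₀
  have regA : ∀ d, N ≤ d → ∀ f : MPoly (n + 1), f.IsHomogeneous (d + 1) →
      ℓ₁ * f ∈ I ⊔ Ideal.span {ℓ₀} → f ∈ I ⊔ Ideal.span {ℓ₀} := by
    intro d hd f hf h
    rw [← aeval_mem_mulS_iff hI hw hV hℓ₀ hf]
    refine (hreg d hd).2 _ (aeval_mem_pow hV hf) ?_
    rw [← map_mul]
    refine (aeval_mem_mulS_iff hI hw hV hℓ₀ ?_).2 h
    rw [add_comm (d + 1)]
    exact hℓ₁.mul hf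
  have regB : ∀ d, N ≤ d → ∀ f : MPoly (n + 1), f.IsHomogeneous (d + 1) →
      X 0 * f ∈ I ⊔ Ideal.span {ℓ₀} ⊔ Ideal.span {ℓ₁} →
      f ∈ I ⊔ Ideal.span {ℓ₀} ⊔ Ideal.span {ℓ₁} := by
    intro d hd f hf h
    rw [← aeval_mem_pen_iff hI hw hV hℓ₀ hℓ₁ hf]
    refine (hreg d hd).1 _ (aeval_mem_pow hV hf) ?_
    have h2 := (aeval_mem_pen_iff hI hw hV hℓ₀ hℓ₁ (d := d + 1) (f := X 0 * f) (by
      rw [add_comm (d + 1)]; exact hX0.mul hf)).2 h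
    rwa [map_mul, aeval_X, hw0, one_mul] at h2
  have cov : ∀ d, N ≤ d → ∀ f : MPoly (n + 1), f.IsHomogeneous (d + 1) →
      f ∈ I ⊔ Ideal.span {ℓ₀} ⊔ Ideal.span {ℓ₁} ⊔ Ideal.span {X 0} := by
    intro d hd f hf
    obtain ⟨x, hx, y, hy, hxy⟩ := Submodule.mem_sup.1 (pencil_cover hcov hd (aeval_mem_pow hV hf))
    obtain ⟨b, hb, rfl⟩ := exists_aeval_eq hV hy
    refine mem_sup_span.2 ⟨b, (aeval_mem_pen_iff hI hw hV hℓ₀ hℓ₁ (hf.sub (hb.mul hX0))).1 ?_⟩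
    rw [map_sub, map_mul, aeval_X, hw0, mul_one, ← hxy, add_sub_cancel_right]
    exact hx
  have satD : ∀ d, N ≤ d → ∀ f : MPoly (n + 1), f.IsHomogeneous (d + 1) →
      f ∈ sect I ℓ₀ → f ∈ I ⊔ Ideal.span {ℓ₀} := fun d hd f hf h =>
    mem_of_mem_sat hℓ₁ hm₁ regA hd hf h
  have hS₁ : IsHomogIdeal (sect I ℓ₀) := isHomogIdeal_sat hI₁
  have hle : I ⊔ Ideal.span {ℓ₀} ⊔ Ideal.span {ℓ₁} ≤ sect I ℓ₀ ⊔ Ideal.span {ℓ₁} :=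
    sup_le_sup_right (le_satIdeal _) _
  have memF : ∀ d, N ≤ d → ∀ f : MPoly (n + 1), f.IsHomogeneous (d + 1) →
      f ∈ sect I ℓ₀ ⊔ Ideal.span {ℓ₁} → f ∈ I ⊔ Ideal.span {ℓ₀} ⊔ Ideal.span {ℓ₁} := by
    intro d hd f hf h
    obtain ⟨b, hb, hfb⟩ := exists_homogeneous_of_mem_sup hS₁ hℓ₁ hf h
    exact mem_sup_span.2 ⟨b, satD d hd _ (hf.sub (hb.mul hℓ₁)) hfb⟩
  have regB' : ∀ d, N ≤ d → ∀ f : MPoly (n + 1), f.IsHomogeneous (d + 1) →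
      X 0 * f ∈ sect I ℓ₀ ⊔ Ideal.span {ℓ₁} → f ∈ sect I ℓ₀ ⊔ Ideal.span {ℓ₁} := by
    intro d hd f hf h
    refine hle (regB d hd f hf (memF (d + 1) (by omega) _ ?_ h))
    rw [add_comm (d + 1)]
    exact hX0.mul hf
  have hS₂' := isHomogIdeal_sup hS₁ hℓ₁
  have hS₂ : IsHomogIdeal (sect (sect I ℓ₀) ℓ₁) := isHomogIdeal_sat hS₂'
  refine ⟨h1INat_eq_zero hI hℓ₀ hm₀ ?_ fun d hd f hf h => satD d (hT.trans hd) f hf h,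
    h1INat_eq_zero hS₁ hℓ₁ hm₁ (regular_sat hI₁ hℓ₁ regA) fun d hd f hf h =>
      mem_of_mem_sat hX0 hmX regB' (hT.trans hd) hf h,
    h1INat_eq_zero hS₂ hX0 hmX (regular_sat hS₂' hX0 regB') fun d hd f hf _ =>
      sup_le_sup_right (hle.trans (le_satIdeal _)) _ (cov d (hT.trans hd) f hf)⟩
  intro f hf
  refine (hpr.mem_or_mem hf).resolve_left fun h => hz₀ ((hw 1 _ hℓ₀).2 h)

end Regularity

end SurfReg

end Part7d

/-! ### The numerical inequality -/

section Part7e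

namespace SurfReg

section Numerics

/-- A partial Castelnuovo sum in closed form. -/
theorem two_mul_genus (ρ m₀ ε : ℕ) {a : ℕ} (ha : a ≤ m₀) :
    2 * ((∑ j ∈ Finset.range a, (m₀ * ρ + ε + 1 - min (m₀ * ρ + ε + 1) ((j + 1) * ρ + 1)) : ℕ) : ℤ) =
      2 * a * (m₀ * ρ + ε) - ρ * a * (a + 1) := by
  induction a with
  | zero => simp
  | succ a ih =>
    rw [Finset.sum_range_succ, Nat.cast_add, mul_add, ih (by omega)]
    have h : (a + 1) * ρ ≤ m₀ * ρ := Nat.mul_le_mul_right _ ha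
    rw [min_eq_right (by omega), Nat.cast_sub (by omega)]
    push_cast
    ring

/-- The Castelnuovo bound for the genus, where `s - 1 = m₀ * ρ + ε`. -/
theorem genus_formula {ρ m₀ ε m G : ℕ} (hε : ε < ρ) (hm : (ε = 0 ∧ m = m₀) ∨ (1 ≤ ε ∧ m = m₀ + 1))
    (hG : G = ∑ j ∈ Finset.range m,
      (m₀ * ρ + ε + 1 - min (m₀ * ρ + ε + 1) ((j + 1) * ρ + 1))) :
    2 * (G : ℤ) = ρ * m₀ * (m₀ - 1) + 2 * m₀ * ε := by
  have h := two_mul_genus ρ m₀ ε (le_refl m₀)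
  have hG' : G = ∑ j ∈ Finset.range m₀,
      (m₀ * ρ + ε + 1 - min (m₀ * ρ + ε + 1) ((j + 1) * ρ + 1)) := by
    rcases hm with ⟨-, rfl⟩ | ⟨-, rfl⟩
    · exact hG
    · rw [hG, Finset.sum_range_succ, min_eq_left (by rw [add_mul]; omega), Nat.sub_self, add_zero]
  rw [hG', h]
  ring

/-- The numerical inequality for `m₀ = 1` and `ε > 0`. -/
theorem numeric_one {ρ ε g N : ℤ} (hρ : 1 ≤ ρ) (hε : 1 ≤ ε) (hgG : g ≤ ε)
    (hN : 2 * N + g * (g - 1) ≤ 2 * (2 + g) + 2 * ((2 + g - 1) * ε)) :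
    2 * ρ * N ≤ (ε + 1) * ((ρ + ε + 1) ^ 2 + 2 * ρ) := by
  have h1 : 2 * N ≤ (ε + 1) * (ε + 4) := by nlinarith [mul_nonneg (sub_nonneg.2 hgG) (sub_nonneg.2 hgG)]
  have h2 : 2 * ρ * N ≤ ρ * ((ε + 1) * (ε + 4)) := by nlinarith
  have h3 : ρ * (ε + 4) ≤ (ρ + ε + 1) ^ 2 + 2 * ρ := by nlinarith [mul_nonneg (by omega : 0 ≤ ρ) (by omega : 0 ≤ ε)]
  nlinarith

/-- The numerical inequality for `m₀ = 2`. -/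
theorem numeric_two {ρ ε m g N G : ℤ} (hρ : 1 ≤ ρ) (hε : 0 ≤ ε) (hερ : ε < ρ)
    (hm : (ε = 0 ∧ m = 2) ∨ (1 ≤ ε ∧ m = 3)) (hG : G = ρ + 2 * ε) (hgG : g ≤ G)
    (hN : 2 * N + g * (g - 1) ≤ 2 * (m + g) + 2 * ((m + g - 1) * G)) :
    2 * ρ * N ≤ (ρ + ε + 1) * ((2 * ρ + ε + 1) ^ 2 + 2 * ρ) := by
  have h1 : 2 * N ≤ G * G + (2 * m + 1) * G + 2 * m := by
    nlinarith [mul_nonneg (sub_nonneg.2 hgG) (sub_nonneg.2 hgG)]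
  have h2 : 2 * ρ * N ≤ ρ * (G * G + (2 * m + 1) * G + 2 * m) := by nlinarith
  rcases hm with ⟨rfl, rfl⟩ | ⟨h3, rfl⟩
  · refine h2.trans ?_
    subst hG
    nlinarith [mul_nonneg (by omega : 0 ≤ ρ) (by omega : 0 ≤ ρ), sq_nonneg (ρ - 1),
      mul_nonneg (sq_nonneg ρ) (by omega : 0 ≤ ρ - 1)]
  · refine h2.trans ?_
    subst hG
    obtain ⟨x, rfl⟩ : ∃ x, ε = x + 1 := ⟨ε - 1, by ring⟩
    obtain ⟨y, rfl⟩ : ∃ y, ρ = x + 2 + y := ⟨ρ - x - 2, by ring⟩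
    have hx : 0 ≤ x := by omega
    have hy : 0 ≤ y := by omega
    have : 0 ≤ (x + 2 + y + (x + 1) + 1) * ((2 * (x + 2 + y) + (x + 1) + 1) ^ 2 + 2 * (x + 2 + y)) -
      (x + 2 + y) * ((x + 2 + y + 2 * (x + 1)) * (x + 2 + y + 2 * (x + 1)) +
        (2 * 3 + 1) * (x + 2 + y + 2 * (x + 1)) + 2 * 3) := by
      ring_nf
      positivity
    linarith

set_option maxHeartbeats 1000000 in
/-- The numerical inequality for `m₀ ≥ 3`, where `m + g ≤ s - 1` is used in place of `g ≤ G`. -/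
theorem numeric_three {ρ m₀ ε m g N G S : ℤ} (hm₀ : 3 ≤ m₀) (hρ : 1 ≤ ρ) (hε : 0 ≤ ε) (hερ : ε < ρ)
    (hm : (ε = 0 ∧ m = m₀) ∨ (1 ≤ ε ∧ m = m₀ + 1)) (hS : S = m₀ * ρ + ε)
    (hG : 2 * G = ρ * m₀ * (m₀ - 1) + 2 * m₀ * ε) (hgS : m + g ≤ S)
    (hN : 2 * N + g * (g - 1) ≤ 2 * (m + g) + 2 * ((m + g - 1) * G)) :
    2 * ρ * N ≤ (S + 1 - ρ) * ((S + 1) ^ 2 + 2 * ρ) := by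
  have hSG : S ≤ G := by nlinarith [mul_nonneg (by positivity : (0:ℤ) ≤ ρ * m₀) (by omega : 0 ≤ m₀ - 3), mul_nonneg hε (by omega : 0 ≤ m₀ - 3)]
  have hS3 : 3 * ρ ≤ S := by nlinarith
  have h1 : 2 * N ≤ 2 * S + 2 * ((S - 1) * G) - (S - m) * (S - m - 1) := by
    have hm' : 0 ≤ m := by omega
    have : 0 ≤ (S - m - g) * (3 + 2 * G - (S - m + g)) :=
      mul_nonneg (by omega) (by omega)
    nlinarith
  have h2 : ρ * (2 * G) = S * (S - ρ) + ε * (ρ - ε) := by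
    rw [hG, hS]; ring
  have h3 : 2 * ρ * N ≤ 2 * ρ * S + (S - 1) * (S * (S - ρ) + ε * (ρ - ε)) -
      ρ * ((S - m) * (S - m - 1)) := by
    rw [← h2]
    nlinarith
  refine h3.trans ?_
  have h4 : 0 ≤ S - 3 * ρ := by omega
  have hmS : m ≤ S := by rcases hm with ⟨_, rfl⟩ | ⟨_, rfl⟩ <;> nlinarith
  have h5 : 4 * (ε * (ρ - ε)) ≤ ρ ^ 2 := by nlinarith [sq_nonneg (ρ - 2 * ε)]
  -- `(S-1)ε(ρ-ε)` is the only negative term of third order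
  have key : (S - 1) * (ε * (ρ - ε)) ≤ (S - ρ) * (3 * S) + ρ * ((S - m) * (S - m - 1)) := by
    have h6 : 4 * ((S - 1) * (ε * (ρ - ε))) ≤ S * ρ ^ 2 := by nlinarith [sq_nonneg ρ]
    have h7 : 0 ≤ (S - m) * (S - m - 1) := by
      rcases eq_or_lt_of_le hmS with h | h
      · rw [h]; simp
      · exact mul_nonneg (by omega) (by omega)
    by_cases hc : ρ ≤ 24
    · have : S * ρ ^ 2 ≤ 24 * (S * ρ) := by
        nlinarith [mul_nonneg (mul_nonneg (by omega : 0 ≤ S) (by omega : 0 ≤ ρ)) (sub_nonneg.2 hc)]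
      have h8 : 2 * ρ * S ≤ (S - ρ) * S := mul_le_mul_of_nonneg_right (by omega) (by omega)
      nlinarith [mul_nonneg (by omega : 0 ≤ ρ) h7]
    · push Not at hc
      have h9 : 24 * (m - 1) ≤ S := by
        have : m - 1 ≤ m₀ := by rcases hm with ⟨_, rfl⟩ | ⟨_, rfl⟩ <;> omega
        nlinarith
      have h10 : S ≤ 2 * (S - m - 1) := by omega
      have h11 : S * S ≤ 4 * ((S - m) * (S - m - 1)) := by
        have := mul_le_mul h10 h10 (by omega) (by omega)
        nlinarith
      have h12 : S * ρ ^ 2 ≤ ρ * (S * S) := by nlinarith [mul_nonneg (mul_nonneg (by omega : 0 ≤ S) (by omega : 0 ≤ ρ)) (by omega : 0 ≤ S - ρ)]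
      have h13 : 0 ≤ (S - ρ) * (3 * S) := mul_nonneg (by omega) (by omega)
      have h14 := mul_le_mul_of_nonneg_left h11 (by omega : 0 ≤ ρ)
      linarith
  nlinarith [mul_nonneg (by omega : 0 ≤ S - ρ) (by omega : 0 ≤ ρ), mul_nonneg h4 (by omega : 0 ≤ S)]

/-- The bound `N ≤ (s - ρ) * (s² / (2 ρ) + 1)` for `s = m₀ * ρ + ε + 1`. -/
theorem numeric {ρ m₀ ε m g N G : ℤ} (hm₀ : 1 ≤ m₀) (hρ : 1 ≤ ρ) (hε : 0 ≤ ε) (hερ : ε < ρ)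
    (hm : (ε = 0 ∧ m = m₀) ∨ (1 ≤ ε ∧ m = m₀ + 1))
    (hG : 2 * G = ρ * m₀ * (m₀ - 1) + 2 * m₀ * ε) (hg : 0 ≤ g) (hgG : g ≤ G)
    (hgS : m + g ≤ m₀ * ρ + ε)
    (hN : 2 * N + g * (g - 1) ≤ 2 * (m + g) + 2 * ((m + g - 1) * G)) :
    2 * ρ * N ≤ (m₀ * ρ + ε + 1 - ρ) * ((m₀ * ρ + ε + 1) ^ 2 + 2 * ρ) := by
  rcases (by omega : m₀ = 1 ∨ m₀ = 2 ∨ 3 ≤ m₀) with rfl | rfl | h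
  · have hG' : G = ε := by linarith
    subst hG'
    rcases hm with ⟨h0, rfl⟩ | ⟨h1, rfl⟩
    · subst h0
      have hg0 : g = 0 := by omega
      subst hg0
      have : N ≤ 1 := by linarith
      nlinarith [sq_nonneg (1 * ρ + 0 + 1)]
    · have := numeric_one hρ h1 hgG hN
      convert this using 1 <;> ring
  · have := numeric_two hρ hε hερ hm (by linarith) hgG hN
    convert this using 1 <;> ring
  · exact numeric_three h hρ hε hερ hm rfl hG hgS hN

end Numerics

end SurfReg

end Part7e

/-! ### The regularity bound -/

section Part8

namespace SurfReg

section Final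

/-- The second difference of the Hilbert function of a surface is eventually its degree. -/
theorem second_difference_of_surfInv {n : ℕ} {I : Ideal (MPoly n)} {s : ℕ} {π pa : ℤ}
    (h : SurfInv I s π pa) :
    ∃ N : ℕ, ∀ p : ℕ, N ≤ p → hilbNat I ((p + 2 : ℕ) : ℤ) + hilbNat I (p : ℤ) =
      2 * hilbNat I ((p + 1 : ℕ) : ℤ) + s := by
  obtain ⟨N, hN⟩ := h
  refine ⟨N.toNat, fun p hp => ?_⟩
  have h0 := hN p (by omega)
  have h1 := hN ((p + 1 : ℕ) : ℤ) (by omega)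
  have h2 := hN ((p + 2 : ℕ) : ℤ) (by omega)
  have htri : ∀ t : ℤ, 2 * (t * (t + 1) / 2) = t * (t + 1) := fun t =>
    Int.mul_ediv_cancel' (Int.even_mul_succ_self t).two_dvd
  have e0 := htri p
  have e1 := htri ((p + 1 : ℕ) : ℤ)
  have e2 := htri ((p + 2 : ℕ) : ℤ)
  unfold hilbZ at h0 h1 h2
  have key : (((p + 2 : ℕ) : ℤ) * (((p + 2 : ℕ) : ℤ) + 1) / 2) + ((p : ℤ) * ((p : ℤ) + 1) / 2) =
      2 * (((p + 1 : ℕ) : ℤ) * (((p + 1 : ℕ) : ℤ) + 1) / 2) + 1 := by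
    have e3 : ((p + 2 : ℕ) : ℤ) * (((p + 2 : ℕ) : ℤ) + 1) + (p : ℤ) * ((p : ℤ) + 1) =
        2 * (((p + 1 : ℕ) : ℤ) * (((p + 1 : ℕ) : ℤ) + 1)) + 2 := by
      push_cast
      ring
    linarith
  rw [← Nat.cast_inj (R := ℤ)]
  push_cast at h0 h1 h2 key ⊢
  rw [h0, h1, h2]
  linear_combination (s : ℤ) * key

/-- The numerical parameters: `s - 1 = m₀ ρ + ε`, and `m` is `(s - 1) / ρ` rounded up. -/
theorem exists_params {ρ s : ℕ} (hρ : 1 ≤ ρ) (hs : ρ + 1 ≤ s) :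
    ∃ m₀ ε m, s = m₀ * ρ + ε + 1 ∧ ε < ρ ∧ 1 ≤ m₀ ∧
      ((ε = 0 ∧ m = m₀) ∨ (1 ≤ ε ∧ m = m₀ + 1)) ∧ 1 ≤ m ∧ s ≤ m * ρ + 1 ∧ m + 1 ≤ s := by
  have h1 := Nat.div_add_mod (s - 1) ρ
  have h2 := Nat.mod_lt (s - 1) hρ
  have h3 : 1 ≤ (s - 1) / ρ := (Nat.le_div_iff_mul_le hρ).2 (by omega)
  generalize (s - 1) / ρ = m₀ at *
  generalize (s - 1) % ρ = ε at *
  rw [mul_comm] at h1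
  have h4 : m₀ ≤ m₀ * ρ := Nat.le_mul_of_pos_right _ hρ
  rcases Nat.eq_zero_or_pos ε with h | h
  · exact ⟨m₀, ε, m₀, by omega, h2, h3, Or.inl ⟨h, rfl⟩, h3, by omega, by omega⟩
  · exact ⟨m₀, ε, m₀ + 1, by omega, h2, h3, Or.inr ⟨h, rfl⟩, by omega, by rw [add_mul]; omega,
      by omega⟩

/-- The regularity bound with `ρ = r - 2`, cleared of denominators. -/
theorem main (ρ s : ℕ) (π pa : ℤ) (hρ : 1 ≤ ρ) (hs : ρ + 1 ≤ s) (I : Ideal (MPoly (ρ + 2 + 1)))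
    (hsurf : IsSurface I) (hnd : Nondeg I) (hsinv : SurfInv I s π pa) :
    ∃ N : ℕ, IsRegBound I ((N : ℤ) + 1) ∧
      2 * (ρ : ℤ) * N ≤ ((s : ℤ) - ρ) * ((s : ℤ) ^ 2 + 2 * ρ) := by
  obtain ⟨hI, hpr, -⟩ := hsurf
  have hX0 : (MvPolynomial.X 0 : MPoly (ρ + 2 + 1)) ∉ I := fun h =>
    MvPolynomial.X_ne_zero (R := ℂ) (0 : Fin (ρ + 2 + 1))
      (hnd _ ((MvPolynomial.mem_homogeneousSubmodule _ _).2 (MvPolynomial.isHomogeneous_X ℂ 0)) h)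
  obtain ⟨O, _, _, _, _, v, hadj, hw⟩ := exists_chart hpr hX0
  have hli := linearIndependent_of_nondeg hnd hw
  obtain ⟨V, hV⟩ : ∃ V, Submodule.span ℂ (Set.range (Fin.cons 1 v : Fin (ρ + 2 + 1) → O)) = V :=
    ⟨_, rfl⟩
  have hVfin : Module.Finite ℂ V := hV ▸ Module.Finite.span_of_finite _ (Set.finite_range _)
  have hgen : Algebra.adjoin ℂ (V : Set O) = ⊤ := by
    rw [eq_top_iff, ← hadj, ← hV]
    exact Algebra.adjoin_mono Submodule.subset_span
  have h1V : (1 : O) ∈ V := by rw [← hV]; exact Submodule.subset_span ⟨0, rfl⟩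
  obtain ⟨N₀, hN₀⟩ := second_difference_of_surfInv hsinv
  have hh : ∃ N, ∀ p, N ≤ p → Module.finrank ℂ (V ^ (p + 2) : Submodule ℂ O) +
      Module.finrank ℂ (V ^ p : Submodule ℂ O) =
      2 * Module.finrank ℂ (V ^ (p + 1) : Submodule ℂ O) + s :=
    ⟨N₀, fun p hp => by
      rw [finrank_pow_eq_hilbNat hw hV, finrank_pow_eq_hilbNat hw hV, finrank_pow_eq_hilbNat hw hV]
      exact hN₀ p hp⟩
  obtain ⟨m₀, ε, m, hse, hερ, hm₀, hm, hm1, hms, hms'⟩ := exists_params hρ hs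
  obtain ⟨q, N, hmq, hqs, hqG, hqN, hbound, hdiff, K, _, _, t₀, t₁, hcov, hrank⟩ :=
    surface_facts v hli hV hgen hh hm1 hms hms' rfl
  refine ⟨N, ?_, ?_⟩
  · obtain ⟨Q, hQ, hgood⟩ := exists_pencil hV h1V hcov hrank
    refine ⟨Q, hQ, fun c hc t' ht' => ?_⟩
    obtain ⟨hc0, hc1, hcov', hrank'⟩ := hgood c hc
    have hℓ : ∀ i, (∑ j, MvPolynomial.C (c i j) * MvPolynomial.X j :
        MPoly (ρ + 2 + 1)).IsHomogeneous 1 := fun i =>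
      MvPolynomial.IsHomogeneous.sum _ _ _ fun j _ => by
        simpa using (MvPolynomial.isHomogeneous_C _ (c i j)).mul (MvPolynomial.isHomogeneous_X ℂ j)
    have hmm : ∀ i, (∑ j, MvPolynomial.C (c i j) * MvPolynomial.X j : MPoly (ρ + 2 + 1)) ∈
        mId (ρ + 2 + 1) := fun i =>
      sum_mem fun j _ => Ideal.mul_mem_left _ _ (Ideal.subset_span (Set.mem_range_self j))
    have hae : ∀ i, MvPolynomial.aeval (Fin.cons 1 v : Fin (ρ + 2 + 1) → O)
        (∑ j, MvPolynomial.C (c i j) * MvPolynomial.X j : MPoly (ρ + 2 + 1)) =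
        ∑ j, c i j • (Fin.cons 1 v : Fin (ρ + 2 + 1) → O) j := fun i => by
      simp [Algebra.smul_def]
    have hz : ∀ i, c i 0 ≠ 0 → MvPolynomial.aeval (Fin.cons 1 v : Fin (ρ + 2 + 1) → O)
        (∑ j, MvPolynomial.C (c i j) * MvPolynomial.X j : MPoly (ρ + 2 + 1)) ≠ 0 := fun i hi h => by
      rw [hae] at h
      exact hi (Fintype.linearIndependent_iff.1 hli _ h 0)
    rw [← hae, ← hae] at hcov' hrank'
    obtain ⟨T, hT⟩ : ∃ T : ℕ, t' - 1 = T := ⟨(t' - 1).toNat, by omega⟩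
    rw [hT]
    exact h1INat_vanish hI rfl hw hV hpr (hℓ 0) (hℓ 1) (hmm 0) (hmm 1) (hz 0 hc0) (hz 1 hc1)
      hcov' hrank' hdiff (by omega)
  · rw [hse] at hqs hqG hbound
    have hG := genus_formula hερ hm rfl
    generalize (∑ j ∈ Finset.range m,
      (m₀ * ρ + ε + 1 - min (m₀ * ρ + ε + 1) ((j + 1) * ρ + 1))) = G at *
    obtain ⟨g, rfl⟩ := Nat.exists_eq_add_of_le hmq
    rw [Nat.add_sub_cancel_left] at hqG hbound
    have hgg : ((g * (g - 1) : ℕ) : ℤ) = (g : ℤ) * (g - 1) := by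
      cases g with
      | zero => simp
      | succ g => push_cast [Nat.add_sub_cancel]; ring
    have hq1 : ((m + g - 1 : ℕ) : ℤ) = m + g - 1 := by omega
    have hb : 2 * (N : ℤ) + (g : ℤ) * (g - 1) ≤ 2 * (m + g) + 2 * ((m + g - 1) * G) := by
      rw [← hgg, ← hq1]
      exact_mod_cast hbound
    have := numeric (ρ := ρ) (m₀ := m₀) (ε := ε) (m := m) (g := g) (N := N) (G := G)
      (by omega) (by omega) (by omega) (by omega) (by omega) hG (by omega) (by omega)
      (by exact_mod_cast (by omega : m + g ≤ m₀ * ρ + ε)) hb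
    rw [hse]
    push_cast
    linarith

end Final

end SurfReg

end Part8

/-- Lemma 3.7.  Let `S ⊆ ℙ^r` be an integral nondegenerate surface of
degree `s ≥ r-1 ≥ 2`.  Then the Castelnuovo–Mumford regularity of `S` satisfies
`reg(S) ≤ (s-r+2)(s²/(2(r-2)) + 1) + 1`. -/
theorem statement_16 (r : ℕ) (s π pa : ℤ) (hr : 3 ≤ r) (hs1 : (r : ℤ) - 1 ≤ s)
    (IS : Ideal (MPoly (r + 1)))
    (hsurf : IsSurface IS) (hnd : Nondeg IS) (hsinv : SurfInv IS s π pa) :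
    ∃ t : ℤ, IsRegBound IS t ∧
      (t : ℚ) ≤ ((s : ℚ) - (r : ℚ) + 2) * ((s : ℚ) ^ 2 / (2 * ((r : ℚ) - 2)) + 1) + 1 := by
  obtain ⟨ρ, rfl⟩ : ∃ ρ, r = ρ + 2 := ⟨r - 2, by omega⟩
  obtain ⟨s, rfl⟩ : ∃ s' : ℕ, s = s' := ⟨s.toNat, by omega⟩
  obtain ⟨N, hN, hb⟩ := SurfReg.main ρ s π pa (by omega) (by omega) IS hsurf hnd hsinv
  refine ⟨(N : ℤ) + 1, hN, ?_⟩
  have hρ : (0 : ℚ) < ρ := by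
    have : 0 < ρ := by omega
    exact_mod_cast this
  have hb' : 2 * (ρ : ℚ) * N ≤ ((s : ℚ) - ρ) * ((s : ℚ) ^ 2 + 2 * ρ) := by exact_mod_cast hb
  have h1 : ((s : ℚ) - ρ) * ((s : ℚ) ^ 2 / (2 * ρ) + 1) =
      ((s : ℚ) - ρ) * ((s : ℚ) ^ 2 + 2 * ρ) / (2 * ρ) := by
    field_simp
  have h2 : (N : ℚ) ≤ ((s : ℚ) - ρ) * ((s : ℚ) ^ 2 / (2 * ρ) + 1) := by
    rw [h1, le_div_iff₀ (by positivity)]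
    linarith
  push_cast
  rw [show (s : ℚ) - (ρ + 2) + 2 = s - ρ by ring, show (ρ : ℚ) + 2 - 2 = ρ by ring]
  linarith
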